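/- arXiv:2101.07108 — 4 statements merged into one kernel-verified Lean document; each statement's English description precedes it below -/
import Mathlib

section
/- Fix n, d_X, d_Y, d_Z ∈ ℕ, let r = min(d_X, d_Y), assume d_Z ≥ r, and set d = ⌊d_Z / r⌋. Let ρ_1, …, ρ_r ∈ (0, 1) and let R be the d_X × d_Y rectangular diagonal matrix with diagonal entries ρ_1, …, ρ_r. Let q be the centered Gaussian distribution of (X, Y, Z) on ℝ^{d_X} × ℝ^{d_Y} × ℝ^{d_Z} in which X, Y and Z each have identity covariance matrix, Cov(X, Z) = Cov(Y, Z) = 0 and Cov(X, Y) = R, and let Q = q^{⊗n}. Let 𝒫₀^Q be the set of n-fold products p^{⊗n} of jointly Gaussian distributions p of (X, Y, Z) on ℝ^{d_X} × ℝ^{d_Y} × ℝ^{d_Z} with nonsingular covariance matrix such that X ⊥⊥ Y | Z under p and the marginal of Z under p is N(0, I_{d_Z}). Let ψ be a measurable test on (ℝ^{d_X} × ℝ^{d_Y} × ℝ^{d_Z})^n with values in {0, 1} whose size over 𝒫₀^Q is at most α, and let β = Q(ψ = 1). Then β ≤ α + (1/2)·sqrt( −1 + Π_{i=1}^{r} [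 (1+ρ_i)^n · Σ_{k=0}^{d} C(d,k) / ( 2^d · (1 + (3 − 4k/d)ρ_i)^n ) ] ), where C(d,k) denotes the binomial coefficient. -/
/-!
The test cannot tell `q` from a mixture of null distributions better than the `χ²`-distance between
the mixture and `q ^ n` allows. Write `X = a (s + c u)` and `Y = a (s - c u)` with `s`, `u`, `Z`
independent standard Gaussian vectors; with `a² = (1 + ρ) / 2` and `c² = (1 - ρ) / (1 + ρ)` this has
the law `q`. Replacing `s` by `c s + B Z`, where `B Bᵀ = 1 - c²` is diagonal, leaves the law of `s`
unchanged, but now `X = a (B Z + c (s + u))` and `Y = a (B Z + c (s - u))` are independent given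
`Z`. Take the rows of `B` to be random sign vectors on disjoint blocks of `d` coordinates of `Z`,
and average over the signs: the second moment of the likelihood ratio is the average over pairs of
sign patterns of `(∏ (1 - τ_i)⁻¹) ^ n`, where `B B'ᵀ = diag τ`. As `τ_i` depends only on the number
`k` of agreeing signs in block `i`, this average is the product of the binomial sums in the bound.
-/

open MeasureTheory ProbabilityTheory Filter
open scoped ENNReal NNReal RealInnerProductSpace

noncomputable section

/-- A measure on a real normed space is (jointly) Gaussian if every continuous linear
functional pushes it forward to a (possibly degenerate) Gaussian distribution on `ℝ`. -/
def IsGaussianMeasure {E : Type*} [NormedAddCommGroup E] [NormedSpace ℝ E] [MeasurableSpace E]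
    (μ : Measure E) : Prop :=
  ∀ L : E →L[ℝ] ℝ, ∃ (m : ℝ) (v : ℝ≥0), μ.map L = gaussianReal m v

/-- The covariance form of a measure, evaluated at two continuous linear functionals. -/
def covForm {E : Type*} [NormedAddCommGroup E] [NormedSpace ℝ E] [MeasurableSpace E]
    (μ : Measure E) (L₁ L₂ : E →L[ℝ] ℝ) : ℝ :=
  ∫ x, (L₁ x - ∫ y, L₁ y ∂μ) * (L₂ x - ∫ y, L₂ y ∂μ) ∂μ

/-- The covariance operator of `μ` is injective: if `Cov(L₁, L₂) = 0` for every continuous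
linear functional `L₂`, then `L₁ = 0`.  On a Hilbert space this is precisely injectivity of
the covariance operator. -/
def HasInjectiveCovariance {E : Type*} [NormedAddCommGroup E] [NormedSpace ℝ E] [MeasurableSpace E]
    (μ : Measure E) : Prop :=
  ∀ L₁ : E →L[ℝ] ℝ, (∀ L₂ : E →L[ℝ] ℝ, covForm μ L₁ L₂ = 0) → L₁ = 0

/-- `X ⫫ Y | Z` under `μ`: for all bounded measurable real-valued `f, g`,
`E(f(X) g(Y) | Z) = E(f(X) | Z) ⬝ E(g(Y) | Z)` almost surely. -/
def CondIndepGiven {Ω α β γ : Type*} [MeasurableSpace Ω] [MeasurableSpace α] [MeasurableSpace β]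
    [MeasurableSpace γ] (μ : Measure Ω) (X : Ω → α) (Y : Ω → β) (Z : Ω → γ) : Prop :=
  ∀ (f : α → ℝ) (g : β → ℝ), Measurable f → Measurable g →
    (∃ C, ∀ a, |f a| ≤ C) → (∃ C, ∀ b, |g b| ≤ C) →
    μ[(fun ω => f (X ω) * g (Y ω))|MeasurableSpace.comap Z inferInstance] =ᵐ[μ]
      fun ω => ((μ[(fun ω' => f (X ω'))|MeasurableSpace.comap Z inferInstance]) ω) *
        ((μ[(fun ω' => g (Y ω'))|MeasurableSpace.comap Z inferInstance]) ω)

section ConditionalIndependence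

variable {Ω Ω' α β γ : Type*} [MeasurableSpace Ω] [MeasurableSpace Ω'] [MeasurableSpace α]
  [MeasurableSpace β] [MeasurableSpace γ]

lemma condExp_map_comp_ae_eq {μ : Measure Ω} [IsFiniteMeasure μ] {T : Ω → Ω'} (hT : Measurable T)
    {Z : Ω' → γ} (hZ : Measurable Z) {h : Ω' → ℝ} (hh : Integrable h (μ.map T)) :
    (fun ω => ((μ.map T)[h | MeasurableSpace.comap Z inferInstance]) (T ω)) =ᵐ[μ]
      μ[fun ω => h (T ω) | MeasurableSpace.comap (fun ω => Z (T ω)) inferInstance] := by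
  have hcomp : Integrable (fun ω => ((μ.map T)[h | .comap Z inferInstance]) (T ω)) μ :=
    (integrable_map_measure integrable_condExp.1 hT.aemeasurable).1 integrable_condExp
  refine ae_eq_condExp_of_forall_setIntegral_eq (hZ.comp hT).comap_le
    (hh.comp_measurable hT) (fun s _ _ => hcomp.integrableOn) ?_ ?_
  · rintro _ ⟨s, hs, rfl⟩ _
    have hset := setIntegral_condExp (μ := μ.map T) hZ.comap_le hh ⟨s, hs, rfl⟩
    rwa [setIntegral_map (hZ hs) integrable_condExp.1 hT.aemeasurable,
      setIntegral_map (hZ hs) hh.1 hT.aemeasurable] at hset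
  · refine (stronglyMeasurable_condExp.comp_measurable ?_).aestronglyMeasurable
    rintro _ ⟨s, hs, rfl⟩
    exact ⟨s, hs, rfl⟩

lemma condExp_prod_fst_ae_eq {μ : Measure α} [IsFiniteMeasure μ] {ν : Measure β}
    [IsProbabilityMeasure ν] {h : α × β → ℝ} (hh : Integrable h (μ.prod ν)) :
    (μ.prod ν)[h | MeasurableSpace.comap Prod.fst inferInstance] =ᵐ[μ.prod ν]
      fun p => ∫ y, h (p.1, y) ∂ν := by
  have hint : Integrable (fun p : α × β => ∫ y, h (p.1, y) ∂ν) (μ.prod ν) :=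
    hh.integral_prod_left.comp_fst ν
  refine (ae_eq_condExp_of_forall_setIntegral_eq measurable_fst.comap_le hh
    (fun s _ _ => hint.integrableOn) ?_ ?_).symm
  · rintro _ ⟨s, -, rfl⟩ _
    rw [← Set.prod_univ, setIntegral_prod _ hint.integrableOn,
      setIntegral_prod _ hh.integrableOn]
    simp
  · have hmeas := hh.integral_prod_left.aestronglyMeasurable
    exact ⟨fun p => hmeas.mk _ p.1,
      hmeas.stronglyMeasurable_mk.comp_measurable (comap_measurable Prod.fst),
      Measure.quasiMeasurePreserving_fst.ae_eq_comp hmeas.ae_eq_mk⟩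

lemma CondIndepGiven.map {μ : Measure Ω} [IsFiniteMeasure μ] {T : Ω → Ω'} (hT : Measurable T)
    {X : Ω' → α} {Y : Ω' → β} {Z : Ω' → γ} (hX : Measurable X) (hY : Measurable Y)
    (hZ : Measurable Z)
    (h : CondIndepGiven μ (fun ω => X (T ω)) (fun ω => Y (T ω)) (fun ω => Z (T ω))) :
    CondIndepGiven (μ.map T) X Y Z := by
  rintro f g hf hg ⟨C, hC⟩ ⟨D, hD⟩
  have hfX : Integrable (fun ω => f (X ω)) (μ.map T) :=
    .of_bound (hf.comp hX).aestronglyMeasurable C (ae_of_all _ fun _ => hC _)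
  have hgY : Integrable (fun ω => g (Y ω)) (μ.map T) :=
    .of_bound (hg.comp hY).aestronglyMeasurable D (ae_of_all _ fun _ => hD _)
  have hfg : Integrable (fun ω => f (X ω) * g (Y ω)) (μ.map T) :=
    hgY.bdd_mul (hf.comp hX).aestronglyMeasurable (ae_of_all _ fun _ => hC _)
  have hle := hZ.comap_le
  refine (ae_map_iff hT.aemeasurable (measurableSet_eq_fun
    (stronglyMeasurable_condExp.measurable.mono hle le_rfl)
    ((stronglyMeasurable_condExp.measurable.mono hle le_rfl).mul
      (stronglyMeasurable_condExp.measurable.mono hle le_rfl)))).2 ?_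
  filter_upwards [h f g hf hg ⟨C, hC⟩ ⟨D, hD⟩, condExp_map_comp_ae_eq hT hZ hfX,
    condExp_map_comp_ae_eq hT hZ hgY, condExp_map_comp_ae_eq hT hZ hfg] with ω h₀ h₁ h₂ h₃
  exact h₃.trans (h₀.trans (congrArg₂ (· * ·) h₁.symm h₂.symm))

lemma condIndepGiven_prod {δ ε : Type*} [MeasurableSpace δ] [MeasurableSpace ε]
    {μ : Measure γ} [IsFiniteMeasure μ] {ν : Measure δ} [IsProbabilityMeasure ν] {η : Measure ε}
    [IsProbabilityMeasure η] {F : γ × δ → α} (hF : Measurable F) {G : γ × ε → β}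
    (hG : Measurable G) :
    CondIndepGiven (μ.prod (ν.prod η)) (fun p => F (p.1, p.2.1)) (fun p => G (p.1, p.2.2))
      Prod.fst := by
  rintro f g hf hg ⟨C, hC⟩ ⟨D, hD⟩
  have hfF : Integrable (fun p => f (F (p.1, p.2.1))) (μ.prod (ν.prod η)) :=
    .of_bound (hf.comp (hF.comp (by fun_prop))).aestronglyMeasurable C (ae_of_all _ fun _ => hC _)
  have hgG : Integrable (fun p => g (G (p.1, p.2.2))) (μ.prod (ν.prod η)) :=
    .of_bound (hg.comp (hG.comp (by fun_prop))).aestronglyMeasurable D (ae_of_all _ fun _ => hD _)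
  filter_upwards [condExp_prod_fst_ae_eq hfF, condExp_prod_fst_ae_eq hgG,
    condExp_prod_fst_ae_eq (hgG.bdd_mul hfF.1 (ae_of_all _ fun _ => hC _))] with p h₁ h₂ h₃
  rw [h₁, h₂, h₃, integral_prod_mul (fun u => f (F (p.1, u))) (fun v => g (G (p.1, v)))]
  congr 1
  · exact (integral_fun_fst (fun u => f (F (p.1, u)))).trans (by simp) |>.symm
  · exact (integral_fun_snd (fun v => g (G (p.1, v)))).trans (by simp) |>.symm

end ConditionalIndependence

section Testing

variable {X : Type*} [MeasurableSpace X] {Q : Measure X} {A : Set X}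

lemma setIntegral_le_half_integral_abs {g : X → ℝ} (hg : Integrable g Q)
    (hg₀ : ∫ x, g x ∂Q = 0) (hA : MeasurableSet A) :
    ∫ x in A, g x ∂Q ≤ 1 / 2 * ∫ x, |g x| ∂Q := by
  have hsplit := integral_add_compl hA hg
  have hsplit_abs := integral_add_compl hA hg.abs
  have hle : ∫ x in A, g x ∂Q ≤ ∫ x in A, |g x| ∂Q :=
    (le_abs_self _).trans abs_integral_le_integral_abs
  have hle_compl : -∫ x in Aᶜ, g x ∂Q ≤ ∫ x in Aᶜ, |g x| ∂Q :=
    (neg_le_abs _).trans abs_integral_le_integral_abs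
  linarith

lemma integral_abs_le_sqrt_integral_sq [IsProbabilityMeasure Q] {g : X → ℝ} (hg : MemLp g 2 Q) :
    ∫ x, |g x| ∂Q ≤ √(∫ x, g x ^ 2 ∂Q) := by
  refine Real.le_sqrt_of_sq_le ?_
  have hvar := variance_nonneg |g| Q
  rw [variance_eq_sub hg.abs] at hvar
  simpa [Pi.abs_apply] using hvar

lemma measureReal_sub_setIntegral_le_sqrt [IsProbabilityMeasure Q] {f : X → ℝ} (hf : MemLp f 2 Q)
    (hf₁ : ∫ x, f x ∂Q = 1) (hA : MeasurableSet A) :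
    Q.real A - ∫ x in A, f x ∂Q ≤ 1 / 2 * √(-1 + ∫ x, f x ^ 2 ∂Q) := by
  have hint : Integrable f Q := hf.integrable one_le_two
  have hg : MemLp (fun x => 1 - f x) 2 Q := (memLp_const 1).sub hf
  have hg₀ : ∫ x, (1 - f x) ∂Q = 0 := by simp [integral_sub, hint, hf₁]
  have hsq : ∫ x, (1 - f x) ^ 2 ∂Q = -1 + ∫ x, f x ^ 2 ∂Q := by
    simp_rw [sub_sq, one_pow, mul_one]
    rw [integral_add (by fun_prop) hf.integrable_sq, integral_sub (by fun_prop) (by fun_prop),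
      integral_const_mul, hf₁]
    norm_num
  calc Q.real A - ∫ x in A, f x ∂Q = ∫ x in A, (1 - f x) ∂Q := by
        rw [integral_sub (integrable_const 1).integrableOn hint.integrableOn]; simp
    _ ≤ 1 / 2 * ∫ x, |1 - f x| ∂Q :=
        setIntegral_le_half_integral_abs (hg.integrable one_le_two) hg₀ hA
    _ ≤ 1 / 2 * √(-1 + ∫ x, f x ^ 2 ∂Q) := by
        rw [← hsq]
        gcongr
        exact integral_abs_le_sqrt_integral_sq hg

lemma measureReal_le_add_sqrt_of_forall_setIntegral_le [IsProbabilityMeasure Q] {J : Type*}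
    [Fintype J] [Nonempty J] {f : J → X → ℝ} (hf : ∀ a, MemLp (f a) 2 Q)
    (hf₁ : ∀ a, ∫ x, f a x ∂Q = 1) (hA : MeasurableSet A) {α : ℝ}
    (hα : ∀ a, ∫ x in A, f a x ∂Q ≤ α) :
    Q.real A ≤ α + 1 / 2 *
      √(-1 + (∑ a, ∑ b, ∫ x, f a x * f b x ∂Q) / (Fintype.card J : ℝ) ^ 2) := by
  set c : ℝ := (Fintype.card J : ℝ)
  have hc : 0 < c := Nat.cast_pos.2 Fintype.card_pos
  have hint (a : J) : Integrable (f a) Q := (hf a).integrable one_le_two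
  let g : X → ℝ := fun x => c⁻¹ * ∑ a, f a x
  have hg : MemLp g 2 Q := (memLp_finsetSum _ fun a _ => hf a).const_mul c⁻¹
  have hg₁ : ∫ x, g x ∂Q = 1 := by
    rw [integral_const_mul, integral_finsetSum _ fun a _ => hint a]
    simp [hf₁, c]
  have hgA : ∫ x in A, g x ∂Q ≤ α := by
    rw [integral_const_mul, integral_finsetSum _ fun a _ => (hint a).integrableOn,
      inv_mul_le_iff₀ hc]
    simpa [c] using Finset.sum_le_sum fun a (_ : a ∈ Finset.univ) => hα a
  have hsq : ∫ x, g x ^ 2 ∂Q = (∑ a, ∑ b, ∫ x, f a x * f b x ∂Q) / c ^ 2 := by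
    have hmul (a b : J) : Integrable (fun x => f a x * f b x) Q := (hf a).integrable_mul (hf b)
    simp_rw [g, mul_pow, sq (∑ a, f a _), Finset.sum_mul_sum]
    rw [integral_const_mul,
      integral_finsetSum _ fun a _ => integrable_finsetSum _ fun b _ => hmul a b]
    simp_rw [integral_finsetSum _ fun b _ => hmul _ b]
    rw [inv_pow, div_eq_inv_mul]
  have hbound := measureReal_sub_setIntegral_le_sqrt hg hg₁ hA
  rw [hsq] at hbound
  linarith

lemma measureReal_le_add_sqrt_of_forall_withDensity_le [IsProbabilityMeasure Q] {J : Type*}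
    [Fintype J] [Nonempty J] {f : J → X → ℝ≥0∞} (hf : ∀ a, Measurable (f a))
    (hf₁ : ∀ a, ∫⁻ x, f a x ∂Q = 1) {χ : J → J → ℝ} (hχ₀ : ∀ a b, 0 ≤ χ a b)
    (hχ : ∀ a b, ∫⁻ x, f a x * f b x ∂Q = ENNReal.ofReal (χ a b)) (hA : MeasurableSet A) {α : ℝ}
    (hα : ∀ a, (Q.withDensity (f a)).real A ≤ α) :
    Q.real A ≤ α + 1 / 2 * √(-1 + (∑ a, ∑ b, χ a b) / (Fintype.card J : ℝ) ^ 2) := by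
  have hfin (a : J) : ∀ᵐ x ∂Q, f a x < ∞ :=
    ae_lt_top (hf a) (by simp [hf₁])
  have hmul (a b : J) : ∫ x, (f a x).toReal * (f b x).toReal ∂Q = χ a b := by
    simp_rw [← ENNReal.toReal_mul]
    rw [integral_toReal (by fun_prop), hχ, ENNReal.toReal_ofReal (hχ₀ a b)]
    filter_upwards [hfin a, hfin b] with x ha hb using ENNReal.mul_lt_top ha hb
  have hL2 (a : J) : MemLp (fun x => (f a x).toReal) 2 Q := by
    rw [memLp_two_iff_integrable_sq (hf a).ennreal_toReal.aestronglyMeasurable]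
    simp_rw [sq, ← ENNReal.toReal_mul]
    exact integrable_toReal_of_lintegral_ne_top (by fun_prop) (by simp [hχ])
  simp_rw [← hmul]
  refine measureReal_le_add_sqrt_of_forall_setIntegral_le hL2 (fun a => ?_) hA fun a => ?_
  · rw [integral_toReal (hf a).aemeasurable (hfin a), hf₁, ENNReal.toReal_one]
  · rw [integral_toReal (hf a).aemeasurable (ae_restrict_of_ae (hfin a)), ← withDensity_apply _ hA]
    exact hα a

end Testing

section Product

lemma lintegral_pi_prod_eq_prod_lintegral {ι : Type*} [Fintype ι] {Ω : ι → Type*}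
    [∀ i, MeasurableSpace (Ω i)] (μ : ∀ i, Measure (Ω i)) [∀ i, IsProbabilityMeasure (μ i)]
    {f : ∀ i, Ω i → ℝ≥0∞} (hf : ∀ i, Measurable (f i)) :
    ∫⁻ x, ∏ i, f i (x i) ∂Measure.pi μ = ∏ i, ∫⁻ x, f i x ∂μ i := by
  calc ∫⁻ x, ∏ i, f i (x i) ∂Measure.pi μ = ∏ i, ∫⁻ x, f i (x i) ∂Measure.pi μ :=
        lintegral_prod_eq_prod_lintegral_of_indepFun Finset.univ (fun i (x : ∀ i, Ω i) => f i (x i))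
          (iIndepFun_pi fun i => (hf i).aemeasurable) fun i => (hf i).comp (measurable_pi_apply i)
    _ = ∏ i, ∫⁻ x, f i x ∂μ i :=
        Finset.prod_congr rfl fun i _ => (measurePreserving_eval μ i).lintegral_comp (hf i)

lemma pi_withDensity {ι : Type*} [Fintype ι] {Ω : ι → Type*} [∀ i, MeasurableSpace (Ω i)]
    (μ : ∀ i, Measure (Ω i)) [∀ i, IsProbabilityMeasure (μ i)] {f : ∀ i, Ω i → ℝ≥0∞}
    (hf : ∀ i, Measurable (f i)) [∀ i, SigmaFinite ((μ i).withDensity (f i))] :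
    Measure.pi (fun i => (μ i).withDensity (f i)) =
      (Measure.pi μ).withDensity fun x => ∏ i, f i (x i) := by
  refine Measure.pi_eq fun s hs => ?_
  have hbox (x : ∀ i, Ω i) : (Set.univ.pi s).indicator (fun x => ∏ i, f i (x i)) x =
      ∏ i, (s i).indicator (f i) (x i) := by
    classical
    simp only [Set.indicator_apply, Finset.prod_ite_zero, Set.mem_univ_pi, Finset.mem_univ,
      true_imp_iff]
  rw [withDensity_apply _ (.univ_pi hs), ← lintegral_indicator (.univ_pi hs)]
  simp_rw [hbox]
  rw [lintegral_pi_prod_eq_prod_lintegral μ fun i => (hf i).indicator (hs i)]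
  exact Finset.prod_congr rfl fun i _ => by
    rw [lintegral_indicator (hs i), withDensity_apply _ (hs i)]

lemma map_prodMk_prod_eq_withDensity {α β : Type*} [MeasurableSpace α] [MeasurableSpace β]
    {μ : Measure α} [SFinite μ] {ν : Measure β} [SFinite ν] {S : α × β → β} (hS : Measurable S)
    {f : α × β → ℝ≥0∞} (hf : Measurable f)
    (h : ∀ a, ν.map (fun b => S (a, b)) = ν.withDensity fun b => f (a, b)) :
    (μ.prod ν).map (fun p => (p.1, S p)) = (μ.prod ν).withDensity f := by
  ext s hs
  have hmeas : Measurable fun p : α × β => (p.1, S p) := measurable_fst.prodMk hS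
  rw [Measure.map_apply hmeas hs, Measure.prod_apply (hmeas hs), withDensity_apply _ hs,
    ← lintegral_indicator hs, lintegral_prod _ (hf.indicator hs).aemeasurable]
  refine lintegral_congr fun a => ?_
  have hsec : MeasurableSet (Prod.mk a ⁻¹' s) := measurable_prodMk_left hs
  have hSa : Measurable fun b => S (a, b) := hS.comp measurable_prodMk_left
  calc ν ((fun b => S (a, b)) ⁻¹' (Prod.mk a ⁻¹' s))
      = ∫⁻ b in Prod.mk a ⁻¹' s, f (a, b) ∂ν := by
        rw [← Measure.map_apply hSa hsec, h, withDensity_apply _ hsec]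
    _ = ∫⁻ b, s.indicator f (a, b) ∂ν := (lintegral_indicator hsec _).symm

lemma pi_map_real_le_add_sqrt {X Y ι J : Type*} [MeasurableSpace X] [MeasurableSpace Y]
    [Fintype ι] [Fintype J] [Nonempty J] {Q : Measure X} [IsProbabilityMeasure Q]
    {f : J → X → ℝ≥0∞} (hf : ∀ a, Measurable (f a)) (hf₁ : ∀ a, ∫⁻ x, f a x ∂Q = 1)
    {χ : J → J → ℝ} (hχ₀ : ∀ a b, 0 ≤ χ a b)
    (hχ : ∀ a b, ∫⁻ x, f a x * f b x ∂Q = ENNReal.ofReal (χ a b))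
    {T : X → Y} (hT : Measurable T) {A : Set (ι → Y)} (hA : MeasurableSet A) {α : ℝ}
    (hα : ∀ a, (Measure.pi fun _ : ι => (Q.withDensity (f a)).map T).real A ≤ α) :
    (Measure.pi fun _ : ι => Q.map T).real A ≤
      α + 1 / 2 * √(-1 + (∑ a, ∑ b, χ a b ^ Fintype.card ι) / (Fintype.card J : ℝ) ^ 2) := by
  have hprob (a : J) : IsProbabilityMeasure (Q.withDensity (f a)) :=
    ⟨by rw [withDensity_apply _ .univ, Measure.restrict_univ, hf₁]⟩
  have : IsProbabilityMeasure (Q.map T) := Measure.isProbabilityMeasure_map hT.aemeasurable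
  have (a : J) : IsProbabilityMeasure ((Q.withDensity (f a)).map T) :=
    Measure.isProbabilityMeasure_map hT.aemeasurable
  have hTι : Measurable fun (x : ι → X) i => T (x i) := by fun_prop
  have hA' : MeasurableSet ((fun (x : ι → X) i => T (x i)) ⁻¹' A) := hTι hA
  have hcomp (P : Measure X) [SigmaFinite (P.map T)] : (Measure.pi fun _ : ι => P.map T).real A =
      (Measure.pi fun _ : ι => P).real ((fun (x : ι → X) i => T (x i)) ⁻¹' A) := by
    rw [← Measure.pi_map_pi fun _ => hT.aemeasurable, map_measureReal_apply hTι hA]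
  rw [hcomp]
  refine measureReal_le_add_sqrt_of_forall_withDensity_le (f := fun a x => ∏ i, f a (x i))
    (fun a => by fun_prop) (fun a => ?_) (fun a b => pow_nonneg (hχ₀ a b) _) (fun a b => ?_) hA'
    fun a => ?_
  · rw [lintegral_pi_prod_eq_prod_lintegral _ fun _ => hf a]
    simp [hf₁]
  · simp_rw [← Finset.prod_mul_distrib]
    rw [lintegral_pi_prod_eq_prod_lintegral (f := fun _ x => f a x * f b x) _
      fun _ => (hf a).mul (hf b)]
    simp [hχ, ENNReal.ofReal_pow (hχ₀ a b)]
  · rw [← pi_withDensity _ fun _ => hf a, ← hcomp]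
    exact hα a

end Product

section Gaussian

variable {E F : Type*} [NormedAddCommGroup E] [NormedSpace ℝ E] [MeasurableSpace E]
  [NormedAddCommGroup F] [NormedSpace ℝ F] [MeasurableSpace F]

lemma isGaussianMeasure_iff_isGaussian [BorelSpace E] {μ : Measure E} :
    IsGaussianMeasure μ ↔ IsGaussian μ :=
  ⟨isGaussian_of_map_eq_gaussianReal, fun _ L => ⟨_, _, IsGaussian.map_eq_gaussianReal L⟩⟩

lemma hasInjectiveCovariance_of_isOpenPosMeasure [BorelSpace E] {μ : Measure E}
    [IsProbabilityMeasure μ] [μ.IsOpenPosMeasure] (hμ : MemLp id 2 μ) :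
    HasInjectiveCovariance μ := by
  intro L hL
  have hL2 : MemLp L 2 μ := L.comp_memLp' hμ
  have hvar : Var[L; μ] = 0 := by
    rw [variance_eq_integral L.continuous.aemeasurable]
    simpa only [covForm, sq] using hL L
  have hconst := (Continuous.ae_eq_iff_eq μ L.continuous continuous_const).1
    (ae_eq_integral_of_variance_eq_zero hL2 hvar)
  ext x
  simpa [congrFun hconst x] using (congrFun hconst 0).symm

instance isGaussian_pi {ι : Type*} [Fintype ι] {E : ι → Type*} [∀ i, NormedAddCommGroup (E i)]
    [∀ i, NormedSpace ℝ (E i)] [∀ i, MeasurableSpace (E i)] [∀ i, BorelSpace (E i)]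
    [∀ i, CompleteSpace (E i)] [∀ i, SecondCountableTopology (E i)] (μ : ∀ i, Measure (E i))
    [∀ i, IsGaussian (μ i)] : IsGaussian (Measure.pi μ) := by
  have hlaw (i : ι) : HasGaussianLaw (fun x : ∀ i, E i => x i) (Measure.pi μ) :=
    ⟨by rw [(measurePreserving_eval μ i).map_eq]; infer_instance⟩
  have hjoint := (iIndepFun.hasGaussianLaw hlaw (iIndepFun_pi fun _ => aemeasurable_id)).1
  simpa using hjoint

instance isOpenPosMeasure_gaussianReal : (gaussianReal 0 1).IsOpenPosMeasure :=
  (gaussianReal_absolutelyContinuous' 0 one_ne_zero).isOpenPosMeasure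

lemma isGaussian_ext_of_span_eq_top [BorelSpace E] [CompleteSpace E] [SecondCountableTopology E]
    {μ ν : Measure E} [IsGaussian μ] [IsGaussian ν] {ι : Type*} {φ : ι → StrongDual ℝ E}
    (hφ : Submodule.span ℝ (Set.range φ) = ⊤) (hmean : ∀ i, ∫ x, φ i x ∂μ = ∫ x, φ i x ∂ν)
    (hmul : ∀ i j, ∫ x, φ i x * φ j x ∂μ = ∫ x, φ i x * φ j x ∂ν) : μ = ν := by
  have hcov (i j : ι) :
      covarianceBilinDual μ (φ i) (φ j) = covarianceBilinDual ν (φ i) (φ j) := by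
    have hμ (i : ι) : MemLp (φ i) 2 μ := IsGaussian.memLp_dual μ (φ i) 2 (by simp)
    have hν (i : ι) : MemLp (φ i) 2 ν := IsGaussian.memLp_dual ν (φ i) 2 (by simp)
    rw [covarianceBilinDual_eq_covariance IsGaussian.memLp_two_id,
      covarianceBilinDual_eq_covariance IsGaussian.memLp_two_id,
      covariance_eq_sub (hμ i) (hμ j), covariance_eq_sub (hν i) (hν j), hmean, hmean]
    exact congrArg (· - _) (hmul i j)
  refine IsGaussian.ext_covarianceBilinDual ?_ (ContinuousLinearMap.coe_injective ?_)
  · have happly : (ContinuousLinearMap.apply ℝ ℝ μ[id]).toLinearMap =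
        (ContinuousLinearMap.apply ℝ ℝ ν[id]).toLinearMap :=
      LinearMap.ext_on_range hφ fun i => by
        simpa [IsGaussian.integral_dual] using hmean i
    exact SeparatingDual.eq_iff_forall_dual_eq (R := ℝ) |>.2 fun L => LinearMap.congr_fun happly L
  · exact LinearMap.ext_on_range hφ fun i => ContinuousLinearMap.coe_injective <|
      LinearMap.ext_on_range hφ fun j => hcov i j

lemma integral_id_prod_eq_zero [CompleteSpace E] [CompleteSpace F] {μ : Measure E} {ν : Measure F}
    [IsProbabilityMeasure μ] [IsProbabilityMeasure ν] (hμ : Integrable id μ) (hν : Integrable id ν)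
    (hμ₀ : ∫ x, x ∂μ = 0) (hν₀ : ∫ y, y ∂ν = 0) : ∫ p, p ∂(μ.prod ν) = 0 := by
  have hfst : Integrable Prod.fst (μ.prod ν) := hμ.comp_fst ν
  have hsnd : Integrable Prod.snd (μ.prod ν) := hν.comp_snd μ
  rw [show ∫ p, p ∂(μ.prod ν) = (∫ p, p.1 ∂(μ.prod ν), ∫ p, p.2 ∂(μ.prod ν)) from
    integral_pair hfst hsnd, integral_fun_fst fun x => x, integral_fun_snd fun y => y, hμ₀, hν₀]
  simp

lemma integral_dual_mul_dual_prod [CompleteSpace E] [CompleteSpace F] {μ : Measure E}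
    {ν : Measure F} [IsProbabilityMeasure μ] [IsProbabilityMeasure ν] (hμ : MemLp id 2 μ)
    (hν : MemLp id 2 ν) (hμ₀ : ∫ x, x ∂μ = 0) (hν₀ : ∫ y, y ∂ν = 0) (L L' : StrongDual ℝ (E × F)) :
    ∫ p, L p * L' p ∂(μ.prod ν) =
      ∫ x, L (x, 0) * L' (x, 0) ∂μ + ∫ y, L (0, y) * L' (0, y) ∂ν := by
  have hfst (L : StrongDual ℝ (E × F)) : MemLp (fun x => L (x, 0)) 2 μ :=
    (L.comp (.inl ℝ E F)).comp_memLp' hμ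
  have hsnd (L : StrongDual ℝ (E × F)) : MemLp (fun y => L (0, y)) 2 ν :=
    (L.comp (.inr ℝ E F)).comp_memLp' hν
  have hfst₀ (L : StrongDual ℝ (E × F)) : ∫ x, L (x, 0) ∂μ = 0 := by
    have hcomm := (L.comp (.inl ℝ E F)).integral_comp_comm (hμ.integrable one_le_two)
    simp only [id, hμ₀, map_zero] at hcomm
    exact hcomm
  have (L : StrongDual ℝ (E × F)) : ∫ y, L (0, y) ∂ν = 0 := by
    have hcomm := (L.comp (.inr ℝ E F)).integral_comp_comm (hν.integrable one_le_two)
    simp only [id, hν₀, map_zero] at hcomm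
    exact hcomm
  have hsplit (L : StrongDual ℝ (E × F)) (p : E × F) : L p = L (p.1, 0) + L (0, p.2) := by
    rw [← map_add]; simp
  have hint (L L' : StrongDual ℝ (E × F)) :
      Integrable (fun p : E × F => L (p.1, 0) * L' (0, p.2)) (μ.prod ν) :=
    ((hfst L).integrable one_le_two).mul_prod ((hsnd L').integrable one_le_two)
  calc ∫ p, L p * L' p ∂(μ.prod ν)
      = ∫ p : E × F, (L (p.1, 0) * L' (p.1, 0) + L (0, p.2) * L' (0, p.2)) +
          (L (p.1, 0) * L' (0, p.2) + L' (p.1, 0) * L (0, p.2)) ∂(μ.prod ν) := by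
        refine integral_congr_ae (ae_of_all _ fun p => ?_)
        simp only [hsplit L p, hsplit L' p]
        ring
    _ = ∫ x, L (x, 0) * L' (x, 0) ∂μ + ∫ y, L (0, y) * L' (0, y) ∂ν := by
        have hint₁ : Integrable (fun p : E × F => L (p.1, 0) * L' (p.1, 0)) (μ.prod ν) :=
          ((hfst L).integrable_mul (hfst L')).comp_fst ν
        have hint₂ : Integrable (fun p : E × F => L (0, p.2) * L' (0, p.2)) (μ.prod ν) :=
          ((hsnd L).integrable_mul (hsnd L')).comp_snd μ
        rw [integral_add (by fun_prop) (by fun_prop), integral_add hint₁ hint₂,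
          integral_add (hint L L') (hint L' L)]
        simp [integral_prod_mul (fun x => L (x, 0)) fun y => L' (0, y),
          integral_prod_mul (fun x => L' (x, 0)) fun y => L (0, y), hfst₀,
          integral_fun_fst fun x => L (x, 0) * L' (x, 0),
          integral_fun_snd fun y => L (0, y) * L' (0, y)]

end Gaussian

section StandardGaussian

/-- The standard Gaussian distribution `N(0, I)` on `ι → ℝ`. -/
abbrev stdGaussianPi (ι : Type*) [Fintype ι] : Measure (ι → ℝ) :=
  Measure.pi fun _ => gaussianReal 0 1

variable {ι : Type*} [Fintype ι]

lemma memLp_eval_stdGaussianPi (i : ι) : MemLp (fun x => x i) 2 (stdGaussianPi ι) :=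
  IsGaussian.memLp_dual _ (.proj i : (ι → ℝ) →L[ℝ] ℝ) 2 (by simp)

lemma integral_eval_stdGaussianPi (i : ι) : ∫ x, x i ∂stdGaussianPi ι = 0 := by
  have heval := measurePreserving_eval (fun _ : ι => gaussianReal 0 1) i
  rw [← integral_map (f := fun y : ℝ => y) heval.aemeasurable (by fun_prop), heval.map_eq]
  exact integral_id_gaussianReal

lemma integral_id_stdGaussianPi : ∫ x, x ∂stdGaussianPi ι = 0 := by
  ext i
  exact (IsGaussian.integral_dual (.proj i : (ι → ℝ) →L[ℝ] ℝ)).symm.trans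
    (integral_eval_stdGaussianPi i)

lemma integral_eval_mul_eval_stdGaussianPi [DecidableEq ι] (i j : ι) :
    ∫ x, x i * x j ∂stdGaussianPi ι = if i = j then 1 else 0 := by
  split_ifs with hij
  · subst hij
    have hvar := variance_of_integral_eq_zero (measurable_pi_apply i).aemeasurable
      (integral_eval_stdGaussianPi i)
    have heval := measurePreserving_eval (fun _ : ι => gaussianReal 0 1) i
    simp_rw [← sq]
    rw [← hvar, ← variance_id_map heval.aemeasurable, heval.map_eq, variance_id_gaussianReal]
    rfl
  · have hindep : (fun x : ι → ℝ => x i) ⟂ᵢ[stdGaussianPi ι] fun x => x j :=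
      (iIndepFun_pi (X := fun _ : ι => id) fun _ => aemeasurable_id).indepFun hij
    rw [hindep.integral_fun_mul_eq_mul_integral
      (measurable_pi_apply i).aestronglyMeasurable (measurable_pi_apply j).aestronglyMeasurable,
      integral_eval_stdGaussianPi, zero_mul]

lemma dual_pi_apply_eq_sum [DecidableEq ι] (L : StrongDual ℝ (ι → ℝ)) (x : ι → ℝ) :
    L x = ∑ i, x i * L (Pi.single i 1) := by
  conv_lhs => rw [← Finset.univ_sum_single x, map_sum]
  refine Finset.sum_congr rfl fun i _ => ?_
  rw [← smul_eq_mul, ← map_smul, ← Pi.single_smul, smul_eq_mul, mul_one]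

lemma integral_dual_mul_dual_stdGaussianPi [DecidableEq ι] (L L' : StrongDual ℝ (ι → ℝ)) :
    ∫ x, L x * L' x ∂stdGaussianPi ι = ∑ i, L (Pi.single i 1) * L' (Pi.single i 1) := by
  have hint (i j : ι) :
      Integrable (fun x => x i * L (Pi.single i 1) * (x j * L' (Pi.single j 1)))
        (stdGaussianPi ι) :=
    ((memLp_eval_stdGaussianPi i).mul_const _).integrable_mul
      ((memLp_eval_stdGaussianPi j).mul_const _)
  have hmul (x : ι → ℝ) : L x * L' x =
      ∑ i, ∑ j, x i * L (Pi.single i 1) * (x j * L' (Pi.single j 1)) := by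
    rw [dual_pi_apply_eq_sum L, dual_pi_apply_eq_sum L', Finset.sum_mul_sum]
  rw [integral_congr_ae (ae_of_all _ hmul),
    integral_finsetSum _ fun i _ => integrable_finsetSum _ fun j _ => hint i j]
  simp_rw [integral_finsetSum _ fun j _ => hint _ j, mul_mul_mul_comm, integral_mul_const,
    integral_eval_mul_eval_stdGaussianPi]
  simp

end StandardGaussian

section DualSpan

variable {E F : Type*} [NormedAddCommGroup E] [NormedSpace ℝ E] [NormedAddCommGroup F]
  [NormedSpace ℝ F] {ι ι' : Type*}

lemma span_range_proj_eq_top [Finite ι] :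
    Submodule.span ℝ (Set.range fun i : ι => (.proj i : StrongDual ℝ (ι → ℝ))) = ⊤ := by
  classical
  have := Fintype.ofFinite ι
  refine eq_top_iff.2 fun L _ => ?_
  have hL : L = ∑ i, L (Pi.single i 1) • (.proj i : StrongDual ℝ (ι → ℝ)) := by
    ext x
    simp [dual_pi_apply_eq_sum L x, mul_comm]
  rw [hL]
  exact Submodule.sum_smul_mem _ _ fun i _ => Submodule.subset_span ⟨i, rfl⟩

lemma dual_comp_mem_span_range {φ : ι → StrongDual ℝ E}
    (hφ : Submodule.span ℝ (Set.range φ) = ⊤) (T : F →L[ℝ] E) (L : StrongDual ℝ E) :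
    L.comp T ∈ Submodule.span ℝ (Set.range fun i => (φ i).comp T) := by
  have hL : L ∈ Submodule.span ℝ (Set.range φ) := hφ ▸ Submodule.mem_top
  have hmem := Submodule.mem_map_of_mem (f := (ContinuousLinearMap.precomp ℝ T).toLinearMap) hL
  rwa [Submodule.map_span, ← Set.range_comp] at hmem

lemma span_range_elim_comp_fst_snd_eq_top {φ : ι → StrongDual ℝ E} {ψ : ι' → StrongDual ℝ F}
    (hφ : Submodule.span ℝ (Set.range φ) = ⊤) (hψ : Submodule.span ℝ (Set.range ψ) = ⊤) :
    Submodule.span ℝ (Set.range (Sum.elim (fun i => (φ i).comp (.fst ℝ E F))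
      fun j => (ψ j).comp (.snd ℝ E F))) = ⊤ := by
  refine eq_top_iff.2 fun L _ => ?_
  have hL : L = (L.comp (.inl ℝ E F)).comp (.fst ℝ E F) +
      (L.comp (.inr ℝ E F)).comp (.snd ℝ E F) := by
    ext x <;> simp [← Prod.zero_eq_mk]
  rw [Set.Sum.elim_range, Submodule.span_union, hL]
  exact Submodule.add_mem_sup (dual_comp_mem_span_range hφ _ _) (dual_comp_mem_span_range hψ _ _)

end DualSpan

section Model

variable {γ K ι ι' F : Type*} [Fintype γ] [Fintype K] [NormedAddCommGroup F] [NormedSpace ℝ F]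
  [MeasurableSpace F] [BorelSpace F]

/-- The standard Gaussian distribution of `(z, (u, s))`: the conditioning variable `z` together with
two independent noise vectors, from which both the alternative and the null models are built. -/
abbrev latentMeasure (γ K : Type*) [Fintype γ] [Fintype K] :
    Measure ((γ → ℝ) × (K → ℝ) × (K → ℝ)) :=
  (stdGaussianPi γ).prod ((stdGaussianPi K).prod (stdGaussianPi K))

instance isOpenPosMeasure_latentMeasure : (latentMeasure γ K).IsOpenPosMeasure :=
  haveI : ((stdGaussianPi K).prod (stdGaussianPi K)).IsOpenPosMeasure :=
    Measure.prod.instIsOpenPosMeasure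
  Measure.prod.instIsOpenPosMeasure

lemma integral_id_latentMeasure : ∫ p, p ∂latentMeasure γ K = 0 :=
  integral_id_prod_eq_zero IsGaussian.integrable_id IsGaussian.integrable_id
    integral_id_stdGaussianPi <|
    integral_id_prod_eq_zero IsGaussian.integrable_id IsGaussian.integrable_id
      integral_id_stdGaussianPi integral_id_stdGaussianPi

lemma integral_dual_mul_dual_latentMeasure [DecidableEq γ] [DecidableEq K]
    (L L' : StrongDual ℝ ((γ → ℝ) × (K → ℝ) × (K → ℝ))) :
    ∫ p, L p * L' p ∂latentMeasure γ K =
      ∑ l, L (Pi.single l 1, 0) * L' (Pi.single l 1, 0) +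
        (∑ k, L (0, Pi.single k 1, 0) * L' (0, Pi.single k 1, 0) +
          ∑ k, L (0, 0, Pi.single k 1) * L' (0, 0, Pi.single k 1)) := by
  have hz := integral_dual_mul_dual_stdGaussianPi (L.comp (.inl ℝ (γ → ℝ) _))
    (L'.comp (.inl ℝ (γ → ℝ) _))
  have hu := integral_dual_mul_dual_stdGaussianPi
    ((L.comp (.inr ℝ _ _)).comp (.inl ℝ (K → ℝ) (K → ℝ)))
    ((L'.comp (.inr ℝ _ _)).comp (.inl ℝ (K → ℝ) (K → ℝ)))
  have hs := integral_dual_mul_dual_stdGaussianPi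
    ((L.comp (.inr ℝ _ _)).comp (.inr ℝ (K → ℝ) (K → ℝ)))
    ((L'.comp (.inr ℝ _ _)).comp (.inr ℝ (K → ℝ) (K → ℝ)))
  have hus := integral_dual_mul_dual_prod (μ := stdGaussianPi K) (ν := stdGaussianPi K)
    IsGaussian.memLp_two_id IsGaussian.memLp_two_id integral_id_stdGaussianPi
    integral_id_stdGaussianPi (L.comp (.inr ℝ (γ → ℝ) _)) (L'.comp (.inr ℝ (γ → ℝ) _))
  rw [integral_dual_mul_dual_prod IsGaussian.memLp_two_id IsGaussian.memLp_two_id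
    integral_id_stdGaussianPi (integral_id_prod_eq_zero IsGaussian.integrable_id
      IsGaussian.integrable_id integral_id_stdGaussianPi integral_id_stdGaussianPi)]
  simp only [ContinuousLinearMap.comp_apply, ContinuousLinearMap.inl_apply,
    ContinuousLinearMap.inr_apply] at hz hu hs hus
  rw [hz, hus, hu, hs]

lemma integral_dual_map_latentMeasure (T : (γ → ℝ) × (K → ℝ) × (K → ℝ) →L[ℝ] F)
    (L : StrongDual ℝ F) : ∫ x, L x ∂(latentMeasure γ K).map T = 0 := by
  rw [integral_map (by fun_prop) (by fun_prop)]
  have hcomp := IsGaussian.integral_dual (μ := latentMeasure γ K) (L.comp T)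
  rwa [integral_id_latentMeasure, map_zero] at hcomp

lemma integral_dual_mul_dual_map_latentMeasure [DecidableEq γ] [DecidableEq K]
    (T : (γ → ℝ) × (K → ℝ) × (K → ℝ) →L[ℝ] F) (L L' : StrongDual ℝ F) :
    ∫ x, L x * L' x ∂(latentMeasure γ K).map T =
      ∑ l, L (T (Pi.single l 1, 0)) * L' (T (Pi.single l 1, 0)) +
        (∑ k, L (T (0, Pi.single k 1, 0)) * L' (T (0, Pi.single k 1, 0)) +
          ∑ k, L (T (0, 0, Pi.single k 1)) * L' (T (0, 0, Pi.single k 1))) :=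
  (integral_map (by fun_prop) (by fun_prop)).trans <|
    integral_dual_mul_dual_latentMeasure (L.comp T) (L'.comp T)

/-- The linear map `(z, (u, s)) ↦ (x, y, z)` with `x = a s + b u` and `y = a s - b u`,
coordinatewise along the embeddings `eX`, `eY` of the coordinates of `x` and `y` in those of the
noise. The image of `latentMeasure` has `Cov(x) = Cov(y) = a² + b²` and `Cov(x, y) = a² - b²`. -/
def sumDiffMap (a b : K → ℝ) (eX : ι → K) (eY : ι' → K) :
    (γ → ℝ) × (K → ℝ) × (K → ℝ) →L[ℝ] (ι → ℝ) × (ι' → ℝ) × (γ → ℝ) :=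
  LinearMap.toContinuousLinearMap
    { toFun := fun p => (fun i => a (eX i) * p.2.2 (eX i) + b (eX i) * p.2.1 (eX i),
        fun j => a (eY j) * p.2.2 (eY j) - b (eY j) * p.2.1 (eY j), p.1)
      map_add' := fun p q => by
        ext <;> simp <;> ring
      map_smul' := fun c p => by
        ext <;> simp <;> ring }

lemma sumDiffMap_apply (a b : K → ℝ) (eX : ι → K) (eY : ι' → K)
    (p : (γ → ℝ) × (K → ℝ) × (K → ℝ)) :
    sumDiffMap a b eX eY p = (fun i => a (eX i) * p.2.2 (eX i) + b (eX i) * p.2.1 (eX i),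
      fun j => a (eY j) * p.2.2 (eY j) - b (eY j) * p.2.1 (eY j), p.1) :=
  rfl

lemma eq_map_sumDiffMap_latentMeasure [Finite ι] [Finite ι'] [DecidableEq γ] [DecidableEq K]
    [DecidableEq ι] [DecidableEq ι'] {a b : K → ℝ} {eX : ι → K} {eY : ι' → K}
    (heX : eX.Injective) (heY : eY.Injective) (hab : ∀ k, a k ^ 2 + b k ^ 2 = 1)
    {q : Measure ((ι → ℝ) × (ι' → ℝ) × (γ → ℝ))} [IsGaussian q]
    (hX : ∀ i, ∫ ω, ω.1 i ∂q = 0) (hY : ∀ j, ∫ ω, ω.2.1 j ∂q = 0)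
    (hZ : ∀ l, ∫ ω, ω.2.2 l ∂q = 0)
    (hXX : ∀ i i', ∫ ω, ω.1 i * ω.1 i' ∂q = if i = i' then 1 else 0)
    (hYY : ∀ j j', ∫ ω, ω.2.1 j * ω.2.1 j' ∂q = if j = j' then 1 else 0)
    (hZZ : ∀ l l', ∫ ω, ω.2.2 l * ω.2.2 l' ∂q = if l = l' then 1 else 0)
    (hXZ : ∀ i l, ∫ ω, ω.1 i * ω.2.2 l ∂q = 0) (hYZ : ∀ j l, ∫ ω, ω.2.1 j * ω.2.2 l ∂q = 0)
    (hXY : ∀ i j, ∫ ω, ω.1 i * ω.2.1 j ∂q =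
      if eX i = eY j then a (eX i) ^ 2 - b (eX i) ^ 2 else 0) :
    q = (latentMeasure γ K).map (sumDiffMap a b eX eY) := by
  have := Fintype.ofFinite ι
  have := Fintype.ofFinite ι'
  have : IsGaussian ((latentMeasure γ K).map (sumDiffMap a b eX eY)) := isGaussian_map _
  refine isGaussian_ext_of_span_eq_top (span_range_elim_comp_fst_snd_eq_top span_range_proj_eq_top
    (span_range_elim_comp_fst_snd_eq_top span_range_proj_eq_top span_range_proj_eq_top))
    (fun i => ?_) fun i j => ?_
  · rw [integral_dual_map_latentMeasure]
    obtain i | i | i := i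
    exacts [hX i, hY i, hZ i]
  · rw [integral_dual_mul_dual_map_latentMeasure]
    obtain i | i | i := i <;> obtain j | j | j := j
    · refine (hXX i j).trans ?_
      obtain rfl | hij := eq_or_ne i j
      · simpa [sumDiffMap_apply, Pi.single_apply, sq, add_comm] using (hab (eX i)).symm
      · simp [sumDiffMap_apply, Pi.single_apply, hij, heX.ne hij]
    · refine (hXY i j).trans ?_
      by_cases hij : eX i = eY j <;>
        simp [sumDiffMap_apply, Pi.single_apply, hij, sq, sub_eq_neg_add]
    · exact (hXZ i j).trans (by simp [sumDiffMap_apply, Pi.single_apply])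
    · refine (integral_congr_ae (ae_of_all _ fun ω => mul_comm _ _)).trans ((hXY j i).trans ?_)
      by_cases hij : eX j = eY i <;>
        simp [sumDiffMap_apply, Pi.single_apply, hij, eq_comm (a := eY i), sq, sub_eq_neg_add]
    · refine (hYY i j).trans ?_
      obtain rfl | hij := eq_or_ne i j
      · simpa [sumDiffMap_apply, Pi.single_apply, sq, add_comm] using (hab (eY i)).symm
      · simp [sumDiffMap_apply, Pi.single_apply, hij, heY.ne hij]
    · exact (hYZ i j).trans (by simp [sumDiffMap_apply, Pi.single_apply])
    · exact (integral_congr_ae (ae_of_all _ fun ω => mul_comm _ _)).trans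
        ((hXZ j i).trans (by simp [sumDiffMap_apply, Pi.single_apply]))
    · exact (integral_congr_ae (ae_of_all _ fun ω => mul_comm _ _)).trans
        ((hYZ j i).trans (by simp [sumDiffMap_apply, Pi.single_apply]))
    · exact (hZZ i j).trans (by simp [sumDiffMap_apply, Pi.single_apply])

end Model

section NullModel

variable {γ K ι ι' : Type*} [Fintype γ] [Fintype K]

/-- The linear map `(z, (u, s)) ↦ (z, (u, c s + B z))`, which replaces the noise `s` by a variable
depending on `z`. -/
def shiftMap (c : K → ℝ) (B : Matrix K γ ℝ) :
    (γ → ℝ) × (K → ℝ) × (K → ℝ) →L[ℝ] (γ → ℝ) × (K → ℝ) × (K → ℝ) :=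
  LinearMap.toContinuousLinearMap
    { toFun := fun p => (p.1, p.2.1, c * p.2.2 + B.mulVec p.1)
      map_add' := fun p q => by
        simp only [Prod.fst_add, Prod.snd_add, Matrix.mulVec_add, mul_add, Prod.mk_add_mk,
          add_add_add_comm]
      map_smul' := fun t p => by
        simp only [Prod.smul_fst, Prod.smul_snd, Matrix.mulVec_smul, mul_smul_comm, Prod.smul_mk,
          smul_add, RingHom.id_apply] }

lemma shiftMap_apply (c : K → ℝ) (B : Matrix K γ ℝ) (p : (γ → ℝ) × (K → ℝ) × (K → ℝ)) :
    shiftMap c B p = (p.1, p.2.1, c * p.2.2 + B.mulVec p.1) :=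
  rfl

/-- The law of `(x, y, z)` with `x = a (B z + c (s + u))` and `y = a (B z + c (s - u))`, where
`(z, (u, s))` is standard Gaussian. -/
def nullMeasure (a c : K → ℝ) (eX : ι → K) (eY : ι' → K) (B : Matrix K γ ℝ) :
    Measure ((ι → ℝ) × (ι' → ℝ) × (γ → ℝ)) :=
  ((latentMeasure γ K).map (shiftMap c B)).map (sumDiffMap a (a * c) eX eY)

variable {a c : K → ℝ} {eX : ι → K} {eY : ι' → K} {B : Matrix K γ ℝ}

lemma surjective_shiftMap (hc : ∀ k, c k ≠ 0) : Function.Surjective (shiftMap c B) := by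
  rintro ⟨z, u, s⟩
  refine ⟨(z, u, (s - B.mulVec z) / c), ?_⟩
  have hs : c * ((s - B.mulVec z) / c) = s - B.mulVec z :=
    funext fun k => mul_div_cancel₀ _ (hc k)
  rw [shiftMap_apply, hs, sub_add_cancel]

lemma surjective_sumDiffMap {b : K → ℝ} (ha : ∀ k, a k ≠ 0) (hb : ∀ k, b k ≠ 0)
    (heX : eX.Injective) (heY : eY.Injective) :
    Function.Surjective (sumDiffMap (γ := γ) a b eX eY) := by
  rintro ⟨x, y, z⟩
  let x' := Function.extend eX x 0
  let y' := Function.extend eY y 0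
  refine ⟨(z, (x' - y') / (2 * b), (x' + y') / (2 * a)), ?_⟩
  have hsum (k : K) : a k * ((x' k + y' k) / (2 * a k)) + b k * ((x' k - y' k) / (2 * b k)) =
      x' k := by
    field_simp [ha k, hb k]; ring
  have hdiff (k : K) : a k * ((x' k + y' k) / (2 * a k)) - b k * ((x' k - y' k) / (2 * b k)) =
      y' k := by
    field_simp [ha k, hb k]; ring
  rw [sumDiffMap_apply]
  refine Prod.ext (funext fun i => ?_) (Prod.ext (funext fun j => ?_) rfl)
  · exact (hsum (eX i)).trans (heX.extend_apply x 0 i)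
  · exact (hdiff (eY j)).trans (heY.extend_apply y 0 j)

instance isGaussian_nullMeasure [Finite ι] [Finite ι'] :
    IsGaussian (nullMeasure a c eX eY B) :=
  have := Fintype.ofFinite ι
  have := Fintype.ofFinite ι'
  have : IsGaussian ((latentMeasure γ K).map (shiftMap c B)) := isGaussian_map _
  isGaussian_map _

lemma hasInjectiveCovariance_nullMeasure [Fintype ι] [Fintype ι'] (ha : ∀ k, a k ≠ 0)
    (hc : ∀ k, c k ≠ 0) (heX : eX.Injective) (heY : eY.Injective) :
    HasInjectiveCovariance (nullMeasure a c eX eY B) := by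
  have hac (k : K) : (a * c) k ≠ 0 := mul_ne_zero (ha k) (hc k)
  have : ((latentMeasure γ K).map (shiftMap c B)).IsOpenPosMeasure :=
    (shiftMap c B).continuous.isOpenPosMeasure_map (surjective_shiftMap hc)
  have : (nullMeasure a c eX eY B).IsOpenPosMeasure :=
    (sumDiffMap a (a * c) eX eY).continuous.isOpenPosMeasure_map
      (surjective_sumDiffMap ha hac heX heY)
  exact hasInjectiveCovariance_of_isOpenPosMeasure IsGaussian.memLp_two_id

lemma map_snd_snd_nullMeasure [Finite ι] [Finite ι'] :
    (nullMeasure a c eX eY B).map (fun ω => ω.2.2) = stdGaussianPi γ := by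
  rw [nullMeasure, Measure.map_map (by fun_prop) (by fun_prop),
    Measure.map_map (by fun_prop) (by fun_prop)]
  exact measurePreserving_fst.map_eq

lemma map_rotation_latentMeasure (θ : ℝ) :
    (latentMeasure γ K).map (Prod.map id (ContinuousLinearMap.rotation θ)) = latentMeasure γ K := by
  rw [← Measure.map_prod_map _ _ measurable_id (by fun_prop), Measure.map_id,
    IsGaussian.map_rotation_eq_self integral_id_stdGaussianPi]

/-- Rotating `(u, s)` by `-π / 4` turns `s + u` and `s - u` into multiples of separate
coordinates. -/
lemma condIndepGiven_nullMeasure [Finite ι] [Finite ι'] :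
    CondIndepGiven (nullMeasure a c eX eY B) (fun ω => ω.1) (fun ω => ω.2.1) (fun ω => ω.2.2) := by
  rw [nullMeasure, ← map_rotation_latentMeasure (-(Real.pi / 4))]
  refine .map (by fun_prop) (by fun_prop) (by fun_prop) (by fun_prop) <|
    .map (by fun_prop) (by fun_prop) (by fun_prop) (by fun_prop) <|
    .map (by fun_prop) (by fun_prop) (by fun_prop) (by fun_prop) ?_
  let F (p : (γ → ℝ) × (K → ℝ)) : K → ℝ := a * (c * (√2 • p.2) + B.mulVec p.1)
  have hF : Measurable F := by unfold F; fun_prop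
  have hX : Measurable fun p i => F p (eX i) := by fun_prop
  have hY : Measurable fun p j => F p (eY j) := by fun_prop
  have hrot (p : (K → ℝ) × (K → ℝ)) : ContinuousLinearMap.rotation (-(Real.pi / 4)) p =
      ((√2 / 2) • (p.1 - p.2), (√2 / 2) • (p.1 + p.2)) := by
    simp [ContinuousLinearMap.rotation_apply, smul_sub, ← sub_eq_add_neg]
  convert condIndepGiven_prod (μ := stdGaussianPi γ) (ν := stdGaussianPi K) (η := stdGaussianPi K)
    hX hY using 1
  · ext p i
    simp only [sumDiffMap_apply, shiftMap_apply, Prod.map_fst, Prod.map_snd, id, hrot, F,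
      Pi.mul_apply, Pi.add_apply, Pi.smul_apply, Pi.sub_apply, smul_eq_mul]
    ring
  · ext p j
    simp only [sumDiffMap_apply, shiftMap_apply, Prod.map_fst, Prod.map_snd, id, hrot, F,
      Pi.mul_apply, Pi.add_apply, Pi.smul_apply, Pi.sub_apply, smul_eq_mul]
    ring
  · rfl

end NullModel

section GaussianDensity

lemma lintegral_exp_quadratic_gaussianReal {A : ℝ} (hA : A < 1 / 2) (B C : ℝ) :
    ∫⁻ s, ENNReal.ofReal (Real.exp (A * s ^ 2 + B * s + C)) ∂gaussianReal 0 1 =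
      ENNReal.ofReal ((√(1 - 2 * A))⁻¹ * Real.exp (B ^ 2 / (2 * (1 - 2 * A)) + C)) := by
  have hc : 0 < 1 - 2 * A := by linarith
  lift 1 - 2 * A to ℝ≥0 using hc.le with c hcA
  have hc' : c⁻¹ ≠ 0 := inv_ne_zero (by rintro rfl; simp at hc)
  have hcompleteSquare (s : ℝ) :
      gaussianPDF 0 1 s * ENNReal.ofReal (Real.exp (A * s ^ 2 + B * s + C)) =
        ENNReal.ofReal ((√c)⁻¹ * Real.exp (B ^ 2 / (2 * c) + C)) * gaussianPDF (B / c) c⁻¹ s := by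
    rw [gaussianPDF, gaussianPDF, ← ENNReal.ofReal_mul (gaussianPDFReal_nonneg _ _ _),
      ← ENNReal.ofReal_mul (by positivity)]
    congr 1
    have hexp : -s ^ 2 / 2 + (A * s ^ 2 + B * s + C) =
        (B ^ 2 / (2 * c) + C) + -(s - B / c) ^ 2 / (2 * (c : ℝ)⁻¹) := by
      rw [show A = (1 - c) / 2 by linarith]; field_simp; ring
    have hsqrt : √c ≠ 0 := (Real.sqrt_pos.2 hc).ne'
    simp only [gaussianPDFReal, NNReal.coe_one, NNReal.coe_inv, mul_one, sub_zero]
    rw [Real.sqrt_mul (x := 2 * Real.pi) (by positivity) (c : ℝ)⁻¹, Real.sqrt_inv, mul_assoc,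
      ← Real.exp_add, hexp, Real.exp_add]
    field_simp
  rw [gaussianReal_of_var_ne_zero _ one_ne_zero,
    lintegral_withDensity_eq_lintegral_mul _ (measurable_gaussianPDF _ _) (by fun_prop)]
  simp only [Pi.mul_apply, hcompleteSquare]
  rw [lintegral_const_mul _ (measurable_gaussianPDF _ _), lintegral_gaussianPDF_eq_one _ hc',
    mul_one]

/-- The density of `N(w, v)` with respect to `N(0, 1)`. -/
def gaussianRatio (v w s : ℝ) : ℝ := (√v)⁻¹ * Real.exp (-(s - w) ^ 2 / (2 * v) + s ^ 2 / 2)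

lemma gaussianRatio_nonneg (v w s : ℝ) : 0 ≤ gaussianRatio v w s := by
  unfold gaussianRatio; positivity

@[fun_prop]
lemma measurable_gaussianRatio (v : ℝ) : Measurable fun p : ℝ × ℝ => gaussianRatio v p.1 p.2 := by
  unfold gaussianRatio; fun_prop

lemma gaussianReal_withDensity_gaussianRatio {v : ℝ≥0} (hv : v ≠ 0) (w : ℝ) :
    (gaussianReal 0 1).withDensity (fun s => ENNReal.ofReal (gaussianRatio v w s)) =
      gaussianReal w v := by
  have hmul (s : ℝ) : gaussianPDFReal 0 1 s * gaussianRatio v w s = gaussianPDFReal w v s := by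
    have : √(v : ℝ) ≠ 0 := (Real.sqrt_pos.2 (by positivity)).ne'
    simp only [gaussianPDFReal, gaussianRatio, NNReal.coe_one, mul_one, sub_zero]
    rw [Real.sqrt_mul (x := 2 * Real.pi) (by positivity) v, mul_mul_mul_comm, ← mul_inv,
      ← Real.exp_add]
    congr 2
    ring
  rw [gaussianReal_of_var_ne_zero _ one_ne_zero, gaussianReal_of_var_ne_zero _ hv,
    ← withDensity_mul _ (measurable_gaussianPDF _ _) (by unfold gaussianRatio; fun_prop)]
  congr 1
  ext s
  rw [Pi.mul_apply, gaussianPDF, gaussianPDF, ← hmul,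
    ENNReal.ofReal_mul (gaussianPDFReal_nonneg _ _ _)]

lemma lintegral_gaussianRatio_mul_gaussianRatio {v : ℝ} (hv : 0 < v) (hv₁ : v ≤ 1) (w w' : ℝ) :
    ∫⁻ s, ENNReal.ofReal (gaussianRatio v w s) * ENNReal.ofReal (gaussianRatio v w' s)
        ∂gaussianReal 0 1 =
      ENNReal.ofReal ((√(v * (2 - v)))⁻¹ *
        Real.exp ((2 - v)⁻¹ * ((w + w') / 2) ^ 2 + -v⁻¹ * ((w - w') / 2) ^ 2)) := by
  have hv₂ : 2 - v ≠ 0 := by linarith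
  have hexp (s : ℝ) : ENNReal.ofReal (gaussianRatio v w s) * ENNReal.ofReal (gaussianRatio v w' s) =
      ENNReal.ofReal v⁻¹ * ENNReal.ofReal (Real.exp ((1 - 1 / v) * s ^ 2 + ((w + w') / v) * s +
        -(w ^ 2 + w' ^ 2) / (2 * v))) := by
    rw [← ENNReal.ofReal_mul (gaussianRatio_nonneg _ _ _), ← ENNReal.ofReal_mul (by positivity),
      gaussianRatio, gaussianRatio, mul_mul_mul_comm, ← mul_inv, Real.mul_self_sqrt hv.le,
      ← Real.exp_add]
    congr 3
    field_simp
    ring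
  have hA : 1 - 1 / v < 1 / 2 := by
    have : 1 ≤ 1 / v := (one_le_div hv).2 hv₁
    linarith
  have hcoef : 1 - 2 * (1 - 1 / v) = (2 - v) / v := by field_simp; ring
  have hsqrt : v⁻¹ * (√((2 - v) / v))⁻¹ = (√(v * (2 - v)))⁻¹ := by
    rw [show v * (2 - v) = v ^ 2 * ((2 - v) / v) by field_simp, Real.sqrt_mul (sq_nonneg v),
      Real.sqrt_sq hv.le, mul_inv]
  simp only [hexp]
  rw [lintegral_const_mul _ (by fun_prop), lintegral_exp_quadratic_gaussianReal hA,
    ← ENNReal.ofReal_mul (by positivity), ← mul_assoc, hcoef, hsqrt]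
  congr 3
  field_simp
  ring

end GaussianDensity

section ShiftLaw

variable {γ K : Type*} [Fintype γ] [Fintype K]

lemma map_mul_add_stdGaussianPi {c : K → ℝ} (hc : ∀ k, c k ≠ 0) (w : K → ℝ) :
    (stdGaussianPi K).map (fun s => c * s + w) =
      (stdGaussianPi K).withDensity fun s =>
        ∏ k, ENNReal.ofReal (gaussianRatio (c k ^ 2) (w k) (s k)) := by
  let v (k : K) : ℝ≥0 := .mk (c k ^ 2) (sq_nonneg _)
  have hv (k : K) : v k ≠ 0 := fun h => pow_ne_zero 2 (hc k) (congrArg NNReal.toReal h)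
  have hmap (k : K) : (gaussianReal 0 1).map (fun t => c k * t + w k) =
      gaussianReal (w k) (v k) := by
    have hcomp := Measure.map_map (μ := gaussianReal 0 1) (g := (· + w k)) (f := (c k * ·))
      (by fun_prop) (by fun_prop)
    rw [gaussianReal_map_const_mul, gaussianReal_map_add_const, mul_zero, zero_add, mul_one]
      at hcomp
    exact hcomp.symm
  have hdens (k : K) : (gaussianReal 0 1).withDensity
      (fun t => ENNReal.ofReal (gaussianRatio (c k ^ 2) (w k) t)) = gaussianReal (w k) (v k) :=
    gaussianReal_withDensity_gaussianRatio (hv k) (w k)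
  have hmapσ (k : K) : SigmaFinite ((gaussianReal 0 1).map fun t => c k * t + w k) := by
    rw [hmap]; infer_instance
  have hdensσ (k : K) : SigmaFinite ((gaussianReal 0 1).withDensity
      fun t => ENNReal.ofReal (gaussianRatio (c k ^ 2) (w k) t)) := by
    rw [hdens]; infer_instance
  have hpi := pi_withDensity (fun _ : K => gaussianReal 0 1)
    (f := fun k t => ENNReal.ofReal (gaussianRatio (c k ^ 2) (w k) t)) fun k => by fun_prop
  rw [← hpi]
  simp_rw [hdens, ← hmap]
  exact Measure.pi_map_pi (μ := fun _ : K => gaussianReal 0 1) (f := fun k t => c k * t + w k)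
    fun k => by fun_prop

/-- The density of the law of `shiftMap c B` with respect to `latentMeasure γ K`. -/
def shiftDensity (c : K → ℝ) (B : Matrix K γ ℝ) (p : (γ → ℝ) × (K → ℝ) × (K → ℝ)) : ℝ≥0∞ :=
  ∏ k, ENNReal.ofReal (gaussianRatio (c k ^ 2) (B.mulVec p.1 k) (p.2.2 k))

@[fun_prop]
lemma measurable_shiftDensity (c : K → ℝ) (B : Matrix K γ ℝ) : Measurable (shiftDensity c B) := by
  unfold shiftDensity; fun_prop

lemma map_shiftMap_latentMeasure {c : K → ℝ} (hc : ∀ k, c k ≠ 0) (B : Matrix K γ ℝ) :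
    (latentMeasure γ K).map (shiftMap c B) = (latentMeasure γ K).withDensity (shiftDensity c B) :=
  map_prodMk_prod_eq_withDensity (S := fun p => (p.2.1, c * p.2.2 + B.mulVec p.1)) (by fun_prop)
    (by fun_prop) fun z => by
      have hprod := Measure.map_prod_map (stdGaussianPi K) (stdGaussianPi K) measurable_id
        (g := fun s => c * s + B.mulVec z) (by fun_prop)
      rw [Measure.map_id, map_mul_add_stdGaussianPi hc, prod_withDensity_right (by fun_prop)]
        at hprod
      exact hprod.symm

lemma lintegral_shiftDensity {c : K → ℝ} (hc : ∀ k, c k ≠ 0) (B : Matrix K γ ℝ) :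
    ∫⁻ p, shiftDensity c B p ∂latentMeasure γ K = 1 := by
  have : IsProbabilityMeasure ((latentMeasure γ K).map (shiftMap c B)) :=
    Measure.isProbabilityMeasure_map (by fun_prop)
  rw [← setLIntegral_univ, ← withDensity_apply _ .univ, ← map_shiftMap_latentMeasure hc,
    measure_univ]

lemma lintegral_shiftDensity_mul_shiftDensity_eq_lintegral {c : K → ℝ} (hc : ∀ k, c k ≠ 0)
    (hc₁ : ∀ k, c k ^ 2 ≤ 1) (A B : Matrix K γ ℝ) :
    ∫⁻ p, shiftDensity c A p * shiftDensity c B p ∂latentMeasure γ K =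
      ∫⁻ z, ∏ k, ENNReal.ofReal ((√(c k ^ 2 * (2 - c k ^ 2)))⁻¹ *
        Real.exp ((2 - c k ^ 2)⁻¹ * ((2⁻¹ : ℝ) • (A + B)).mulVec z k ^ 2 +
          -(c k ^ 2)⁻¹ * ((2⁻¹ : ℝ) • (A - B)).mulVec z k ^ 2)) ∂stdGaussianPi γ := by
  rw [lintegral_prod _ (by fun_prop)]
  refine lintegral_congr fun z => ?_
  rw [lintegral_prod _ (by fun_prop)]
  simp_rw [shiftDensity, ← Finset.prod_mul_distrib]
  rw [lintegral_const, measure_univ, mul_one,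
    lintegral_pi_prod_eq_prod_lintegral _ (f := fun k s =>
      ENNReal.ofReal (gaussianRatio (c k ^ 2) (A.mulVec z k) s) *
        ENNReal.ofReal (gaussianRatio (c k ^ 2) (B.mulVec z k) s)) fun k => by fun_prop]
  refine Finset.prod_congr rfl fun k _ => ?_
  rw [lintegral_gaussianRatio_mul_gaussianRatio (by have := hc k; positivity) (hc₁ k)]
  congr 5 <;>
    simp only [Matrix.smul_mulVec, Matrix.add_mulVec, Matrix.sub_mulVec, Pi.smul_apply,
      Pi.add_apply, Pi.sub_apply, smul_eq_mul, div_eq_inv_mul]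

end ShiftLaw

section SecondMoment

open Matrix

section Rows

variable {γ ι : Type*} [Fintype γ]

lemma integral_mulVec_stdGaussianPi (M : Matrix ι γ ℝ) (i : ι) :
    ∫ z, (M *ᵥ z) i ∂stdGaussianPi γ = 0 := by
  have h := IsGaussian.integral_dual (μ := stdGaussianPi γ) (LinearMap.toContinuousLinearMap
    ((LinearMap.proj i).comp M.mulVecLin))
  rwa [integral_id_stdGaussianPi, map_zero] at h

lemma integral_mulVec_mul_mulVec_stdGaussianPi (M : Matrix ι γ ℝ) (i j : ι) :
    ∫ z, (M *ᵥ z) i * (M *ᵥ z) j ∂stdGaussianPi γ = (M * Mᵀ) i j := by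
  classical
  have h := integral_dual_mul_dual_stdGaussianPi
    (LinearMap.toContinuousLinearMap ((LinearMap.proj i).comp M.mulVecLin))
    (LinearMap.toContinuousLinearMap ((LinearMap.proj j).comp M.mulVecLin))
  simpa [Matrix.mul_apply] using h

lemma nonneg_of_mul_transpose_eq_diagonal [DecidableEq ι] {M : Matrix ι γ ℝ} {g : ι → ℝ}
    (hM : M * Mᵀ = diagonal g) (i : ι) : 0 ≤ g i := by
  rw [← diagonal_apply_eq g i, ← hM, mul_apply]
  exact Finset.sum_nonneg fun l _ => mul_self_nonneg _

lemma mul_transpose_half_smul_add_sub [DecidableEq ι] {A B : Matrix ι γ ℝ} {κ τ : ι → ℝ}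
    (hA : A * Aᵀ = diagonal κ) (hB : B * Bᵀ = diagonal κ) (hAB : A * Bᵀ = diagonal τ) :
    ((2⁻¹ : ℝ) • (A + B)) * ((2⁻¹ : ℝ) • (A + B))ᵀ = diagonal (fun i => (κ i + τ i) / 2) ∧
      ((2⁻¹ : ℝ) • (A - B)) * ((2⁻¹ : ℝ) • (A - B))ᵀ = diagonal (fun i => (κ i - τ i) / 2) ∧
      ((2⁻¹ : ℝ) • (A + B)) * ((2⁻¹ : ℝ) • (A - B))ᵀ = 0 := by
  have hBA : B * Aᵀ = diagonal τ := by simpa using congrArg transpose hAB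
  simp only [transpose_smul, transpose_add, transpose_sub, Matrix.smul_mul, Matrix.mul_smul,
    Matrix.add_mul, Matrix.mul_add, Matrix.sub_mul, Matrix.mul_sub, hA, hB, hAB, hBA]
  refine ⟨?_, ?_, ?_⟩ <;> ext i j <;> rcases eq_or_ne i j with rfl | hij <;>
    simp [*] <;> ring

lemma le_of_mul_transpose_eq_diagonal [DecidableEq ι] {A B : Matrix ι γ ℝ} {κ τ : ι → ℝ}
    (hA : A * Aᵀ = diagonal κ) (hB : B * Bᵀ = diagonal κ) (hAB : A * Bᵀ = diagonal τ) (i : ι) :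
    τ i ≤ κ i := by
  linarith [nonneg_of_mul_transpose_eq_diagonal (mul_transpose_half_smul_add_sub hA hB hAB).2.1 i]

end Rows

variable {γ ι : Type*} [Fintype γ]

lemma map_mulVec_stdGaussianPi_congr [Finite ι] {γ' : Type*} [Fintype γ'] {M : Matrix ι γ ℝ}
    {N : Matrix ι γ' ℝ} (h : M * Mᵀ = N * Nᵀ) :
    (stdGaussianPi γ).map (M *ᵥ ·) = (stdGaussianPi γ').map (N *ᵥ ·) := by
  have := Fintype.ofFinite ι
  have hM : IsGaussian ((stdGaussianPi γ).map (M *ᵥ ·)) :=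
    isGaussian_map (LinearMap.toContinuousLinearMap M.mulVecLin)
  have hN : IsGaussian ((stdGaussianPi γ').map (N *ᵥ ·)) :=
    isGaussian_map (LinearMap.toContinuousLinearMap N.mulVecLin)
  refine isGaussian_ext_of_span_eq_top span_range_proj_eq_top (fun i => ?_) fun i j => ?_ <;>
    rw [integral_map (by fun_prop) (by fun_prop), integral_map (by fun_prop) (by fun_prop)] <;>
    simp only [ContinuousLinearMap.proj_apply, integral_mulVec_stdGaussianPi,
      integral_mulVec_mul_mulVec_stdGaussianPi, h]

variable [Fintype ι]

lemma lintegral_prod_mulVec_stdGaussianPi [DecidableEq ι] {M : Matrix ι γ ℝ} {g : ι → ℝ}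
    (hM : M * Mᵀ = diagonal g) {f : ι → ℝ → ℝ≥0∞} (hf : ∀ i, Measurable (f i)) :
    ∫⁻ z, ∏ i, f i ((M *ᵥ z) i) ∂stdGaussianPi γ =
      ∏ i, ∫⁻ x, f i (√(g i) * x) ∂gaussianReal 0 1 := by
  have hg := nonneg_of_mul_transpose_eq_diagonal hM
  have hroot : M * Mᵀ = diagonal (fun i => √(g i)) * (diagonal fun i => √(g i))ᵀ := by
    simp only [hM, diagonal_transpose, diagonal_mul_diagonal, Real.mul_self_sqrt (hg _)]
  have hF : Measurable fun y : ι → ℝ => ∏ i, f i (y i) := by fun_prop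
  rw [← lintegral_map hF (by fun_prop), map_mulVec_stdGaussianPi_congr hroot,
    lintegral_map hF (by fun_prop)]
  simp_rw [mulVec_diagonal]
  exact lintegral_pi_prod_eq_prod_lintegral _ fun i => (hf i).comp (by fun_prop)

lemma lintegral_exp_mul_sqrt_mul_sq_gaussianReal {a g : ℝ} (hg : 0 ≤ g) (h : a * g < 1 / 2) :
    ∫⁻ x, ENNReal.ofReal (Real.exp (a * (√g * x) ^ 2)) ∂gaussianReal 0 1 =
      ENNReal.ofReal (√(1 - 2 * (a * g)))⁻¹ := by
  have := lintegral_exp_quadratic_gaussianReal h 0 0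
  simpa [mul_pow, Real.sq_sqrt hg, mul_assoc] using this

/-- Stacking `P` and `N` gives a Gaussian vector with independent coordinates. -/
lemma lintegral_prod_exp_mulVec_sq_stdGaussianPi [DecidableEq ι] {P N : Matrix ι γ ℝ}
    {g h a b : ι → ℝ} (hP : P * Pᵀ = diagonal g) (hN : N * Nᵀ = diagonal h) (hPN : P * Nᵀ = 0)
    (ha : ∀ i, a i * g i < 1 / 2) (hb : ∀ i, b i * h i < 1 / 2) :
    ∫⁻ z, ∏ i, ENNReal.ofReal (Real.exp (a i * (P *ᵥ z) i ^ 2 + b i * (N *ᵥ z) i ^ 2))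
        ∂stdGaussianPi γ =
      ∏ i, ENNReal.ofReal ((√(1 - 2 * (a i * g i)))⁻¹ * (√(1 - 2 * (b i * h i)))⁻¹) := by
  have hNP : N * Pᵀ = 0 := by simpa using congrArg transpose hPN
  have hstack : fromRows P N * (fromRows P N)ᵀ = diagonal (Sum.elim g h) := by
    rw [transpose_fromRows, fromRows_mul_fromCols, hP, hN, hPN, hNP, fromBlocks_diagonal]
  have hprod := lintegral_prod_mulVec_stdGaussianPi hstack
    (f := fun j x => ENNReal.ofReal (Real.exp (Sum.elim a b j * x ^ 2))) fun j => by fun_prop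
  simp only [fromRows_mulVec, Fintype.prod_sum_type, Sum.elim_inl, Sum.elim_inr,
    ← Finset.prod_mul_distrib] at hprod
  simp_rw [Real.exp_add, ENNReal.ofReal_mul (Real.exp_nonneg _)]
  rw [hprod]
  refine Finset.prod_congr rfl fun i _ => ?_
  rw [lintegral_exp_mul_sqrt_mul_sq_gaussianReal (nonneg_of_mul_transpose_eq_diagonal hP i) (ha i),
    lintegral_exp_mul_sqrt_mul_sq_gaussianReal (nonneg_of_mul_transpose_eq_diagonal hN i) (hb i),
    ← ENNReal.ofReal_mul (by positivity)]

lemma inv_sqrt_mul_inv_sqrt_mul_inv_sqrt {x τ : ℝ} (hx : 0 < x) (hx₂ : x < 2) (hτ : τ ≤ 1) :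
    (√(x * (2 - x)))⁻¹ * ((√((1 - τ) / (2 - x)))⁻¹ * (√((1 - τ) / x))⁻¹) = (1 - τ)⁻¹ := by
  have hx₂' : 0 < 2 - x := by linarith
  have hτ' : 0 ≤ 1 - τ := by linarith
  rw [← mul_inv, ← mul_inv, ← Real.sqrt_mul (by positivity), ← Real.sqrt_mul (by positivity),
    show x * (2 - x) * ((1 - τ) / (2 - x) * ((1 - τ) / x)) = (1 - τ) ^ 2 by field_simp,
    Real.sqrt_sq hτ']

lemma lintegral_shiftDensity_mul_shiftDensity [DecidableEq ι] {c τ : ι → ℝ} (hc : ∀ k, c k ≠ 0)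
    {A B : Matrix ι γ ℝ} (hA : A * Aᵀ = diagonal (fun k => 1 - c k ^ 2))
    (hB : B * Bᵀ = diagonal (fun k => 1 - c k ^ 2)) (hAB : A * Bᵀ = diagonal τ) :
    ∫⁻ p, shiftDensity c A p * shiftDensity c B p ∂latentMeasure γ ι =
      ENNReal.ofReal (∏ k, (1 - τ k)⁻¹) := by
  obtain ⟨hP, hN, hPN⟩ := mul_transpose_half_smul_add_sub hA hB hAB
  have hx (k : ι) : 0 < c k ^ 2 := by have := hc k; positivity
  have hx₁ (k : ι) : c k ^ 2 ≤ 1 := sub_nonneg.1 (nonneg_of_mul_transpose_eq_diagonal hA k)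
  have hτ (k : ι) : 0 < 1 - τ k := by
    linarith [le_of_mul_transpose_eq_diagonal hA hB hAB k, hx k]
  have hx₂ (k : ι) : 0 < 2 - c k ^ 2 := by linarith [hx₁ k]
  have ha (k : ι) : 1 - 2 * ((2 - c k ^ 2)⁻¹ * ((1 - c k ^ 2 + τ k) / 2)) =
      (1 - τ k) / (2 - c k ^ 2) := by
    field_simp [(hx₂ k).ne']; ring
  have hb (k : ι) : 1 - 2 * (-(c k ^ 2)⁻¹ * ((1 - c k ^ 2 - τ k) / 2)) = (1 - τ k) / c k ^ 2 := by
    field_simp [hc k]; ring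
  have hlt {t : ℝ} (h : 0 < 1 - 2 * t) : t < 1 / 2 := by linarith
  have hexp := lintegral_prod_exp_mulVec_sq_stdGaussianPi hP hN hPN
    (fun k => hlt (ha k ▸ div_pos (hτ k) (hx₂ k))) fun k => hlt (hb k ▸ div_pos (hτ k) (hx k))
  simp only [ha, hb] at hexp
  rw [lintegral_shiftDensity_mul_shiftDensity_eq_lintegral hc hx₁]
  simp_rw [ENNReal.ofReal_mul (inv_nonneg.2 (Real.sqrt_nonneg _)), Finset.prod_mul_distrib]
  rw [lintegral_const_mul _ (by fun_prop), hexp, ← Finset.prod_mul_distrib,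
    ENNReal.ofReal_prod_of_nonneg fun k _ => inv_nonneg.2 (hτ k).le]
  refine Finset.prod_congr rfl fun k _ => ?_
  rw [← ENNReal.ofReal_mul (by positivity),
    inv_sqrt_mul_inv_sqrt_mul_inv_sqrt (hx k) (sub_pos.1 (hx₂ k)) (sub_pos.1 (hτ k)).le]

end SecondMoment

section MixtureBound

open Matrix

variable {γ K ι ι' : Type*} [Fintype γ] [Fintype K] [Finite ι] [Finite ι']

lemma pi_map_sumDiffMap_real_le_add_sqrt [DecidableEq K] {N J : Type*} [Fintype N] [Fintype J]
    [Nonempty J] {a c : K → ℝ} {eX : ι → K} {eY : ι' → K} {B : J → Matrix K γ ℝ}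
    {τ : J → J → K → ℝ} (hc : ∀ k, c k ≠ 0)
    (hB : ∀ j, B j * (B j)ᵀ = diagonal (fun k => 1 - c k ^ 2))
    (hτ : ∀ i j, B i * (B j)ᵀ = diagonal (τ i j))
    {S : Set (N → (ι → ℝ) × (ι' → ℝ) × (γ → ℝ))} (hS : MeasurableSet S) {α : ℝ}
    (hα : ∀ j, (Measure.pi fun _ => nullMeasure a c eX eY (B j)).real S ≤ α) :
    (Measure.pi fun _ => (latentMeasure γ K).map (sumDiffMap a (a * c) eX eY)).real S ≤
      α + 1 / 2 * √(-1 + (∑ i, ∑ j, (∏ k, (1 - τ i j k)⁻¹) ^ Fintype.card N) /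
        (Fintype.card J : ℝ) ^ 2) := by
  have hτ₁ (i j : J) (k : K) : 0 ≤ 1 - τ i j k := by
    linarith [le_of_mul_transpose_eq_diagonal (hB i) (hB j) (hτ i j) k, sq_nonneg (c k)]
  refine pi_map_real_le_add_sqrt (fun j => measurable_shiftDensity c (B j))
    (fun j => lintegral_shiftDensity hc (B j))
    (fun i j => Finset.prod_nonneg fun k _ => inv_nonneg.2 (hτ₁ i j k))
    (fun i j => lintegral_shiftDensity_mul_shiftDensity hc (hB i) (hB j) (hτ i j))
    (by fun_prop) hS fun j => ?_
  rw [← map_shiftMap_latentMeasure hc]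
  exact hα j

end MixtureBound

section SignMatrix

open Matrix

variable {D I K γ : Type*}

/-- The `±1`-vector encoded by the set `s` of its positive coordinates. -/
def setSign [DecidableEq D] (s : Finset D) (d : D) : ℝ :=
  if d ∈ s then 1 else -1

lemma setSign_mul_setSign [Fintype D] [DecidableEq D] (s t : Finset D) (d : D) :
    setSign s d * setSign t d = 2 * (if d ∈ symmDiff sᶜ t then 1 else 0) - 1 := by
  by_cases hs : d ∈ s <;> by_cases ht : d ∈ t <;>
    simp [setSign, Finset.mem_symmDiff, hs, ht] <;> norm_num

/-- The correlation of two sign vectors; `sᶜ ∆ t` is the set of coordinates where they agree. -/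
def signCorr [Fintype D] [DecidableEq D] (s t : Finset D) : ℝ :=
  2 * ((symmDiff sᶜ t).card / Fintype.card D) - 1

lemma sum_setSign_mul_setSign_div_card [Fintype D] [DecidableEq D] [Nonempty D] (s t : Finset D) :
    (∑ d, setSign s d * setSign t d) / Fintype.card D = signCorr s t := by
  simp [setSign_mul_setSign, Finset.sum_sub_distrib, signCorr, sub_div, mul_comm (2 : ℝ),
    div_mul_eq_mul_div]

lemma signCorr_self [Fintype D] [DecidableEq D] [Nonempty D] (s : Finset D) :
    signCorr s s = 1 := by
  rw [signCorr, compl_symmDiff_self, Finset.top_eq_univ, Finset.card_univ,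
    div_self (Nat.cast_ne_zero.2 Fintype.card_ne_zero)]
  norm_num

/-- The matrix whose row `i` is supported on the `i`-th block of columns `{i} × D`, where it is the
sign vector of `s i` scaled to have squared norm `κ i`. -/
def blockSignMatrix [Fintype D] [DecidableEq D] [DecidableEq I] (κ : I → ℝ) (s : I → Finset D) :
    Matrix I (I × D) ℝ :=
  of fun i p => if i = p.1 then √(κ i / Fintype.card D) * setSign (s i) p.2 else 0

lemma blockSignMatrix_mul_transpose [Fintype D] [DecidableEq D] [Fintype I] [DecidableEq I]
    (hD : I → Nonempty D) {κ : I → ℝ} (hκ : ∀ i, 0 ≤ κ i) (s t : I → Finset D) :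
    blockSignMatrix κ s * (blockSignMatrix κ t)ᵀ =
      diagonal fun i => κ i * signCorr (s i) (t i) := by
  ext i j
  simp only [mul_apply, transpose_apply, blockSignMatrix, of_apply, Fintype.sum_prod_type,
    ite_mul, zero_mul, Finset.sum_ite_irrel, Finset.sum_const_zero, Finset.sum_ite_eq,
    Finset.mem_univ, if_true]
  obtain rfl | hij := eq_or_ne i j
  · have := hD i
    have hterm (x y : ℝ) : √(κ i / Fintype.card D) * x * (√(κ i / Fintype.card D) * y) =
        κ i / Fintype.card D * (x * y) := by
      rw [mul_mul_mul_comm, Real.mul_self_sqrt (div_nonneg (hκ i) (Nat.cast_nonneg _))]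
    simp only [if_true, diagonal_apply_eq, hterm, ← Finset.mul_sum,
      ← sum_setSign_mul_setSign_div_card]
    ring
  · simp [hij.symm, diagonal_apply_ne _ hij]

lemma submatrix_one_mul_diagonal_mul_transpose [Fintype I] [DecidableEq I] [DecidableEq K]
    {f : I → K} (hf : f.Injective) (g : I → ℝ) :
    (1 : Matrix K K ℝ).submatrix id f * diagonal g * ((1 : Matrix K K ℝ).submatrix id f)ᵀ =
      diagonal (Function.extend f g 0) := by
  ext k l
  have hsum : ((1 : Matrix K K ℝ).submatrix id f * diagonal g *
      ((1 : Matrix K K ℝ).submatrix id f)ᵀ) k l =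
        ∑ i, if k = f i ∧ l = f i then g i else 0 := by
    rw [mul_apply]
    refine Finset.sum_congr rfl fun i _ => ?_
    simp only [mul_diagonal, transpose_apply, submatrix_apply, id_eq, one_apply, ite_mul, mul_ite,
      one_mul, zero_mul, mul_one, mul_zero, ite_and]
    split_ifs <;> rfl
  rw [hsum]
  by_cases hk : ∃ i, f i = k
  · obtain ⟨i, rfl⟩ := hk
    simp [hf.eq_iff, ite_and, diagonal_apply, hf.extend_apply, eq_comm (a := l)]
  · have hne (i : I) : k ≠ f i := fun h => hk ⟨i, h.symm⟩
    rw [diagonal_apply, Function.extend_apply' _ _ _ hk]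
    simp [hne]

/-- The matrix `blockSignMatrix κ s` with its rows placed along `f` and its columns along `e`,
padded with zeros. -/
def signMatrix [Fintype D] [DecidableEq D] [Fintype I] [DecidableEq I] [DecidableEq K]
    [DecidableEq γ] (f : I → K) (e : I × D → γ) (κ : I → ℝ) (s : I → Finset D) : Matrix K γ ℝ :=
  (1 : Matrix K K ℝ).submatrix id f * blockSignMatrix κ s * (1 : Matrix γ γ ℝ).submatrix e id

lemma signMatrix_mul_transpose [Fintype D] [DecidableEq D] [Fintype I] [DecidableEq I]
    [DecidableEq K] [Fintype γ] [DecidableEq γ] {f : I → K} {e : I × D → γ} (hD : I → Nonempty D)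
    (hf : f.Injective) (he : e.Injective) {κ : I → ℝ} (hκ : ∀ i, 0 ≤ κ i) (s t : I → Finset D) :
    signMatrix f e κ s * (signMatrix f e κ t)ᵀ =
      diagonal (Function.extend f (fun i => κ i * signCorr (s i) (t i)) 0) := by
  have hee : (1 : Matrix γ γ ℝ).submatrix e id * ((1 : Matrix γ γ ℝ).submatrix e id)ᵀ = 1 := by
    rw [transpose_submatrix, transpose_one, ← submatrix_mul _ _ _ _ _ Function.bijective_id,
      Matrix.one_mul, submatrix_one _ he]
  rw [← submatrix_one_mul_diagonal_mul_transpose hf, ← blockSignMatrix_mul_transpose hD hκ]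
  simp only [signMatrix, transpose_mul, Matrix.mul_assoc]
  rw [← Matrix.mul_assoc _ (submatrix _ e id)ᵀ, hee, Matrix.one_mul]

end SignMatrix

section SignSums

variable {D I K : Type*} [Fintype D] [DecidableEq D]

lemma sum_card_symmDiff_compl (F : ℕ → ℝ) (s : Finset D) :
    ∑ t, F (symmDiff sᶜ t).card =
      ∑ k ∈ Finset.range (Fintype.card D + 1), ((Fintype.card D).choose k : ℝ) * F k := by
  have hinv : Function.Involutive fun t : Finset D => symmDiff sᶜ t := fun t =>
    symmDiff_symmDiff_cancel_left _ _
  refine (Equiv.sum_comp hinv.toPerm fun t => F t.card).trans ?_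
  simpa only [Finset.powerset_univ, Finset.card_univ, nsmul_eq_mul] using
    Finset.sum_powerset_apply_card F (x := (Finset.univ : Finset D))

lemma sum_sum_prod_eq_prod_sum_sum [Fintype I] [DecidableEq I] {A R : Type*} [Fintype A]
    [CommSemiring R] (g : I → A → A → R) :
    ∑ a : I → A, ∑ b : I → A, ∏ i, g i (a i) (b i) = ∏ i, ∑ x, ∑ y, g i x y := by
  simp only [Finset.prod_univ_sum, Fintype.piFinset_univ]

lemma prod_inv_one_sub_extend [Fintype I] [Fintype K] {f : I → K} (hf : f.Injective) (g : I → ℝ) :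
    ∏ k, (1 - Function.extend f g 0 k)⁻¹ = ∏ i, (1 - g i)⁻¹ :=
  (Fintype.prod_of_injective f hf _ _
    (fun k hk => by rw [Function.extend_apply' _ _ _ hk, Pi.zero_apply, sub_zero, inv_one])
    fun i => by rw [hf.extend_apply]).symm

lemma inv_one_sub_mul_eq_div {ρ t : ℝ} (hρ : 1 + ρ ≠ 0) :
    (1 - 2 * ρ / (1 + ρ) * (2 * t - 1))⁻¹ = (1 + ρ) / (1 + (3 - 4 * t) * ρ) := by
  rw [← inv_div]
  field_simp
  ring

lemma sum_sum_prod_signCorr_div_card_sq [Fintype I] [DecidableEq I] {ρ : I → ℝ}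
    (hρ : ∀ i, 1 + ρ i ≠ 0) (n : ℕ) :
    (∑ s : I → Finset D, ∑ t : I → Finset D,
        (∏ i, (1 - 2 * ρ i / (1 + ρ i) * signCorr (s i) (t i))⁻¹) ^ n) /
          (Fintype.card (I → Finset D) : ℝ) ^ 2 =
      ∏ i, ((1 + ρ i) ^ n * ∑ k ∈ Finset.range (Fintype.card D + 1),
        ((Fintype.card D).choose k : ℝ) / (2 ^ Fintype.card D *
          (1 + (3 - 4 * (k : ℝ) / Fintype.card D) * ρ i) ^ n)) := by
  have hblock (i : I) : ∑ s : Finset D, ∑ t : Finset D,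
      (1 - 2 * ρ i / (1 + ρ i) * signCorr s t)⁻¹ ^ n =
        (2 ^ Fintype.card D) ^ 2 * ((1 + ρ i) ^ n * ∑ k ∈ Finset.range (Fintype.card D + 1),
          ((Fintype.card D).choose k : ℝ) / (2 ^ Fintype.card D *
            (1 + (3 - 4 * (k : ℝ) / Fintype.card D) * ρ i) ^ n)) := by
    have hcorr (s t : Finset D) : (1 - 2 * ρ i / (1 + ρ i) * signCorr s t)⁻¹ ^ n =
        (1 + ρ i) ^ n / (1 + (3 - 4 * ((symmDiff sᶜ t).card : ℝ) / Fintype.card D) * ρ i) ^ n := by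
      rw [signCorr, inv_one_sub_mul_eq_div (hρ i), div_pow, mul_div_assoc (4 : ℝ)]
    simp_rw [hcorr, sum_card_symmDiff_compl fun k =>
      (1 + ρ i) ^ n / (1 + (3 - 4 * (k : ℝ) / Fintype.card D) * ρ i) ^ n]
    simp only [Finset.sum_const, Finset.card_univ, Fintype.card_finset, nsmul_eq_mul,
      Nat.cast_pow, Nat.cast_ofNat, Finset.mul_sum]
    refine Finset.sum_congr rfl fun k _ => ?_
    field_simp
  have hcard : (Fintype.card (I → Finset D) : ℝ) ^ 2 = ∏ _i : I, (2 ^ Fintype.card D) ^ 2 := by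
    rw [Fintype.card_fun, Fintype.card_finset, Finset.prod_pow, Finset.prod_const,
      Finset.card_univ]
    push_cast
    rfl
  simp_rw [← Finset.prod_pow]
  rw [sum_sum_prod_eq_prod_sum_sum fun i s t => (1 - 2 * ρ i / (1 + ρ i) * signCorr s t)⁻¹ ^ n,
    hcard, ← Finset.prod_div_distrib]
  refine Finset.prod_congr rfl fun i _ => ?_
  rw [hblock, mul_div_cancel_left₀ _ (by positivity)]

end SignSums

section PowerBound

variable {γ I D K ι ι' : Type*} [Fintype γ] [Fintype I] [Fintype D]

lemma pi_map_sumDiffMap_real_le_add_sqrt_prod [Fintype K] [Finite ι] [Finite ι']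
    {N : Type*} [Fintype N] (hD : I → Nonempty D)
    {f : I → K} {e : I × D → γ} (hf : f.Injective) (he : e.Injective) {ρ : I → ℝ}
    (hρ : ∀ i, 0 ≤ ρ i) {a c : K → ℝ} {eX : ι → K} {eY : ι' → K} (hc : ∀ k, c k ≠ 0)
    (hcρ : ∀ k, 1 - c k ^ 2 = Function.extend f (fun i => 2 * ρ i / (1 + ρ i)) 0 k)
    {S : Set (N → (ι → ℝ) × (ι' → ℝ) × (γ → ℝ))} (hS : MeasurableSet S) {α : ℝ}
    (hα : ∀ B : Matrix K γ ℝ, (Measure.pi fun _ => nullMeasure a c eX eY B).real S ≤ α) :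
    (Measure.pi fun _ => (latentMeasure γ K).map (sumDiffMap a (a * c) eX eY)).real S ≤
      α + 1 / 2 * √(-1 + ∏ i, ((1 + ρ i) ^ Fintype.card N *
        ∑ k ∈ Finset.range (Fintype.card D + 1), ((Fintype.card D).choose k : ℝ) /
          (2 ^ Fintype.card D *
            (1 + (3 - 4 * (k : ℝ) / Fintype.card D) * ρ i) ^ Fintype.card N))) := by
  classical
  have hκ (i : I) : 0 ≤ 2 * ρ i / (1 + ρ i) := by have := hρ i; positivity
  have hgram := signMatrix_mul_transpose hD hf he hκ
  have hself (s : I → Finset D) : (fun i => 2 * ρ i / (1 + ρ i) * signCorr (s i) (s i)) =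
      fun i => 2 * ρ i / (1 + ρ i) := by
    funext i
    have := hD i
    rw [signCorr_self, mul_one]
  have hbound := pi_map_sumDiffMap_real_le_add_sqrt (a := a) (eX := eX) (eY := eY) hc
    (fun s => by simp only [hgram, hself, hcρ]) hgram hS fun s => hα _
  simp only [prod_inv_one_sub_extend hf] at hbound
  rwa [sum_sum_prod_signCorr_div_card_sq fun i => by linarith [hρ i]] at hbound

lemma exists_scales_of_correlation {ρ : ℝ} (hρ : ρ ∈ Set.Ico 0 1) :
    ∃ a c : ℝ, a ≠ 0 ∧ c ≠ 0 ∧ a ^ 2 + (a * c) ^ 2 = 1 ∧ a ^ 2 - (a * c) ^ 2 = ρ ∧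
      1 - c ^ 2 = 2 * ρ / (1 + ρ) := by
  have hadd : 0 < 1 + ρ := by linarith [hρ.1]
  have hsub : 0 < 1 - ρ := by linarith [hρ.2]
  refine ⟨√((1 + ρ) / 2), √((1 - ρ) / (1 + ρ)), by positivity, by positivity, ?_, ?_, ?_⟩ <;>
  · simp only [mul_pow, Real.sq_sqrt (div_pos hadd two_pos).le, Real.sq_sqrt (div_pos hsub hadd).le]
    field_simp
    ring

lemma extend_mem_of_forall_mem {α β R : Type*} [Zero R] {s : Set R} (f : α → β) {g : α → R}
    (h₀ : 0 ∈ s) (hg : ∀ a, g a ∈ s) (b : β) : Function.extend f g 0 b ∈ s := by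
  classical
  rw [Function.extend_def]
  split_ifs
  exacts [hg _, h₀]

theorem pi_real_le_add_sqrt_prod_of_correlation [Finite K] [DecidableEq K] [Fintype ι]
    [DecidableEq ι] [Fintype ι'] [DecidableEq ι'] [DecidableEq γ] {N : Type*} [Fintype N]
    (hD : I → Nonempty D) {f : I → K} {e : I × D → γ} {eX : ι → K} {eY : ι' → K}
    (hf : f.Injective) (he : e.Injective) (heX : eX.Injective) (heY : eY.Injective)
    {ρ : I → ℝ} (hρ : ∀ i, ρ i ∈ Set.Ico 0 1) {α : ℝ}
    {q : Measure ((ι → ℝ) × (ι' → ℝ) × (γ → ℝ))} [IsGaussian q]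
    (hX : ∀ i, ∫ ω, ω.1 i ∂q = 0) (hY : ∀ j, ∫ ω, ω.2.1 j ∂q = 0)
    (hZ : ∀ l, ∫ ω, ω.2.2 l ∂q = 0)
    (hXX : ∀ i i', ∫ ω, ω.1 i * ω.1 i' ∂q = if i = i' then 1 else 0)
    (hYY : ∀ j j', ∫ ω, ω.2.1 j * ω.2.1 j' ∂q = if j = j' then 1 else 0)
    (hZZ : ∀ l l', ∫ ω, ω.2.2 l * ω.2.2 l' ∂q = if l = l' then 1 else 0)
    (hXZ : ∀ i l, ∫ ω, ω.1 i * ω.2.2 l ∂q = 0) (hYZ : ∀ j l, ∫ ω, ω.2.1 j * ω.2.2 l ∂q = 0)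
    (hXY : ∀ i j, ∫ ω, ω.1 i * ω.2.1 j ∂q =
      if eX i = eY j then Function.extend f ρ 0 (eX i) else 0)
    {S : Set (N → (ι → ℝ) × (ι' → ℝ) × (γ → ℝ))} (hS : MeasurableSet S)
    (hsize : ∀ p : Measure ((ι → ℝ) × (ι' → ℝ) × (γ → ℝ)), IsGaussian p →
      HasInjectiveCovariance p → CondIndepGiven p (fun ω => ω.1) (fun ω => ω.2.1) (fun ω => ω.2.2) →
      p.map (fun ω => ω.2.2) = stdGaussianPi γ → (Measure.pi fun _ => p).real S ≤ α) :
    (Measure.pi fun _ => q).real S ≤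
      α + 1 / 2 * √(-1 + ∏ i, ((1 + ρ i) ^ Fintype.card N *
        ∑ k ∈ Finset.range (Fintype.card D + 1), ((Fintype.card D).choose k : ℝ) /
          (2 ^ Fintype.card D *
            (1 + (3 - 4 * (k : ℝ) / Fintype.card D) * ρ i) ^ Fintype.card N))) := by
  have := Fintype.ofFinite K
  choose a c ha hc hadd hsub hcρ using fun k => exists_scales_of_correlation
    (extend_mem_of_forall_mem f (by simp) hρ k)
  have hq : q = (latentMeasure γ K).map (sumDiffMap a (a * c) eX eY) :=
    eq_map_sumDiffMap_latentMeasure heX heY hadd hX hY hZ hXX hYY hZZ hXZ hYZ fun i j =>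
      (hXY i j).trans (by simp only [hsub])
  rw [hq]
  refine pi_map_sumDiffMap_real_le_add_sqrt_prod hD hf he (fun i => (hρ i).1) hc (fun k => ?_) hS
    fun B => hsize _ inferInstance (hasInjectiveCovariance_nullMeasure ha hc heX heY)
      condIndepGiven_nullMeasure map_snd_snd_nullMeasure
  rw [hcρ, Function.apply_extend fun x : ℝ => 2 * x / (1 + x)]
  congr 1
  ext
  simp

end PowerBound

/-- Multivariate power bound for Gaussian conditional independence testing against a simple
alternative `q` on `ℝ^{d_X} × ℝ^{d_Y} × ℝ^{d_Z}` whose cross-covariance of `X` and `Y` is the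
rectangular diagonal matrix with entries `ρ_1, …, ρ_r`, `r = min(d_X, d_Y)`. -/
theorem gaussian_ci_multivariate_power_bound
    (n dX dY dZ r d : ℕ) (hr : r = min dX dY) (hdZ : r ≤ dZ) (hd : d = dZ / r)
    (ρ : Fin r → ℝ) (hρ : ∀ i, ρ i ∈ Set.Ioo (0 : ℝ) 1) (α : ℝ)
    (q : Measure ((Fin dX → ℝ) × (Fin dY → ℝ) × (Fin dZ → ℝ)))
    (hqprob : IsProbabilityMeasure q) (hqgauss : IsGaussianMeasure q)
    (hmX : ∀ i, ∫ ω, ω.1 i ∂q = 0) (hmY : ∀ j, ∫ ω, ω.2.1 j ∂q = 0)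
    (hmZ : ∀ l, ∫ ω, ω.2.2 l ∂q = 0)
    (hXX : ∀ i i', ∫ ω, ω.1 i * ω.1 i' ∂q = if i = i' then 1 else 0)
    (hYY : ∀ j j', ∫ ω, ω.2.1 j * ω.2.1 j' ∂q = if j = j' then 1 else 0)
    (hZZ : ∀ l l', ∫ ω, ω.2.2 l * ω.2.2 l' ∂q = if l = l' then 1 else 0)
    (hXZ : ∀ i l, ∫ ω, ω.1 i * ω.2.2 l ∂q = 0)
    (hYZ : ∀ j l, ∫ ω, ω.2.1 j * ω.2.2 l ∂q = 0)
    (hXY : ∀ (i : Fin dX) (j : Fin dY), ∫ ω, ω.1 i * ω.2.1 j ∂q =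
      if h : (i : ℕ) = (j : ℕ) then ρ ⟨(i : ℕ), hr ▸ lt_min i.isLt (h.trans_lt j.isLt)⟩ else 0)
    (ψ : (Fin n → (Fin dX → ℝ) × (Fin dY → ℝ) × (Fin dZ → ℝ)) → Bool) (hψ : Measurable ψ)
    (hsize : ∀ p : Measure ((Fin dX → ℝ) × (Fin dY → ℝ) × (Fin dZ → ℝ)),
      IsProbabilityMeasure p → IsGaussianMeasure p → HasInjectiveCovariance p →
      CondIndepGiven p (fun ω => ω.1) (fun ω => ω.2.1) (fun ω => ω.2.2) →
      p.map (fun ω => ω.2.2) = Measure.pi (fun _ : Fin dZ => gaussianReal 0 1) →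
      ((Measure.pi fun _ : Fin n => p) {x | ψ x = true}).toReal ≤ α) :
    ((Measure.pi fun _ : Fin n => q) {x | ψ x = true}).toReal ≤
      α + (1 / 2) * Real.sqrt (-1 + ∏ i : Fin r, ((1 + ρ i) ^ n *
        ∑ k ∈ Finset.range (d + 1),
          (d.choose k : ℝ) / ((2 : ℝ) ^ d * (1 + (3 - 4 * (k : ℝ) / (d : ℝ)) * ρ i) ^ n))) := by
  have hX : dX ≤ max dX dY := le_max_left _ _
  have hY : dY ≤ max dX dY := le_max_right _ _
  have hrX : r ≤ dX := hr ▸ min_le_left _ _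
  have hcols : r * d ≤ dZ := hd ▸ Nat.mul_div_le _ _
  have hD (i : Fin r) : Nonempty (Fin d) :=
    Fin.pos_iff_nonempty.1 (hd ▸ Nat.div_pos hdZ i.pos)
  have := isGaussianMeasure_iff_isGaussian.1 hqgauss
  have hcorr (i : Fin dX) (j : Fin dY) : ∫ ω, ω.1 i * ω.2.1 j ∂q =
      if Fin.castLE hX i = Fin.castLE hY j then
        Function.extend (Fin.castLE (hrX.trans hX)) ρ 0 (Fin.castLE hX i) else 0 := by
    rw [hXY, ← dite_eq_ite]
    refine dite_congr (by simp [Fin.ext_iff]) (fun h => ?_) fun _ => rfl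
    exact ((Fin.castLE_injective (hrX.trans hX)).extend_apply ρ 0 ⟨i, _⟩).symm
  have hbound := pi_real_le_add_sqrt_prod_of_correlation (N := Fin n) hD
    (Fin.castLE_injective (hrX.trans hX))
    ((Fin.castLE_injective hcols).comp finProdFinEquiv.injective) (Fin.castLE_injective hX)
    (Fin.castLE_injective hY) (fun i => Set.Ioo_subset_Ico_self (hρ i)) hmX hmY hmZ hXX hYY hZZ
    hXZ hYZ hcorr (hψ (measurableSet_singleton true)) fun p hp =>
      hsize p hp.toIsProbabilityMeasure (isGaussianMeasure_iff_isGaussian.2 hp)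
  simp only [Fintype.card_fin] at hbound
  exact hbound
end
end

section
/- Let d_X, d_Y ∈ ℕ and let H_Z be an infinite-dimensional separable Hilbert space. Let 𝒫 be the family of distributions of triples (X, Y, Z) with values in ℝ^{d_X} × ℝ^{d_Y} × H_Z that are jointly Gaussian with injective covariance operator, let 𝒫₀ ⊆ 𝒫 be the subset under which X ⊥⊥ Y | Z, let 𝒬 = 𝒫 \ 𝒫₀, fix Q ∈ 𝒬, and let 𝒫₀^Q = {P ∈ 𝒫₀ : the marginal distribution of Z under P equals that under Q}. Then for every n ∈ ℕ, every α ∈ [0, 1] and every measurable test ψ : (ℝ^{d_X} × ℝ^{d_Y} × H_Z)^n → {0, 1} with sup_{P ∈ 𝒫₀^Q} P^{⊗n}(ψ = 1) ≤ α, one has Q^{⊗n}(ψ = 1) ≤ α. -/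
open MeasureTheory ProbabilityTheory Filter
open scoped ENNReal NNReal RealInnerProductSpace

noncomputable section

/-!
By Gaussian regression, `Q` is the law of `(A(Z) + σ G, Z)` with `G` standard normal in some `ℝ^r`,
independent of `Z`, and `A(Z)` an affine function of `Z` up to an `L²` limit. Let `ξ_0, ξ_1, …` be
orthonormal in the Gaussian space of `Z`, and replace `G` by the pseudo-noise
`∑_{k < N} ξ_k(Z) u_k / √N + v(Z) / (N + 1)`. For every fixed `u` this is a law in the null family
with the same marginal of `Z`: it is Gaussian, `X` and `Y` are functions of `Z`, and the covariance
stays injective because the components of `v` are chosen in the Gaussian space linearly independent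
modulo the continuous functionals of `Z` and the predictors. Such `v` exists since in infinite
dimensions the continuous functionals have infinite codimension in the Gaussian space.

Now average over standard normal `u`. Given the sample `z`, the pseudo-noise vectors are jointly
Gaussian; their covariance is the Gram matrix of the features, tensored with the identity of `ℝ^r`,
which tends to the identity by the strong law of large numbers, and their mean tends to `0`. Fatou's
lemma applied to the Gaussian densities bounds the power at `Q` by the limit inferior of averages of
null rejection probabilities.
-/

section AffineFatou

variable {V : Type*} [NormedAddCommGroup V] [NormedSpace ℝ V] [FiniteDimensional ℝ V]
  [MeasurableSpace V] [BorelSpace V] (μ : Measure V) [μ.IsAddHaarMeasure]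
  {ρ f : V → ℝ≥0∞}

lemma lintegral_comp_unit_addHaar (T : (V →L[ℝ] V)ˣ) (hf : Measurable f) :
    ∫⁻ x, f ((T : V →L[ℝ] V) x) ∂μ
      = ENNReal.ofReal |((↑T⁻¹ : V →L[ℝ] V)).det| * ∫⁻ y, f y ∂μ := by
  have hdet : (T : V →L[ℝ] V).det * ((↑T⁻¹ : V →L[ℝ] V)).det = 1 := by
    have hid : ((T : V →L[ℝ] V) * (↑T⁻¹ : V →L[ℝ] V)).det = 1 := by
      rw [Units.mul_inv]
      exact LinearMap.det_id
    exact (LinearMap.det_comp _ _).symm.trans hid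
  have hmap := Measure.map_linearMap_addHaar_eq_smul_addHaar μ
    (f := ((T : V →L[ℝ] V) : V →ₗ[ℝ] V)) (left_ne_zero_of_mul_eq_one hdet)
  rw [← lintegral_map hf (T : V →L[ℝ] V).measurable]
  change ∫⁻ y, f y ∂(μ.map ((T : V →L[ℝ] V) : V →ₗ[ℝ] V)) = _
  rw [hmap, lintegral_smul_measure, smul_eq_mul, eq_inv_of_mul_eq_one_right hdet]

lemma lintegral_affine_withDensity_addHaar (hρ : Measurable ρ) (hf : Measurable f)
    (T : (V →L[ℝ] V)ˣ) (m : V) :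
    ∫⁻ x, f (m + (T : V →L[ℝ] V) x) ∂(μ.withDensity ρ)
      = ∫⁻ y, ENNReal.ofReal |((↑T⁻¹ : V →L[ℝ] V)).det| * ρ ((↑T⁻¹ : V →L[ℝ] V) (y - m)) * f y
          ∂μ := by
  have hcancel (x : V) : (↑T⁻¹ : V →L[ℝ] V) ((T : V →L[ℝ] V) x) = x := by
    rw [← mul_apply_eq_comp, Units.inv_mul, one_apply_eq_self]
  calc ∫⁻ x, f (m + (T : V →L[ℝ] V) x) ∂(μ.withDensity ρ)
      = ∫⁻ x, ρ ((↑T⁻¹ : V →L[ℝ] V) ((T : V →L[ℝ] V) x)) * f (m + (T : V →L[ℝ] V) x) ∂μ := by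
        rw [lintegral_withDensity_eq_lintegral_mul _ hρ (by fun_prop)]
        simp only [hcancel, Pi.mul_apply]
    _ = ENNReal.ofReal |((↑T⁻¹ : V →L[ℝ] V)).det|
          * ∫⁻ y, ρ ((↑T⁻¹ : V →L[ℝ] V) y) * f (m + y) ∂μ :=
        lintegral_comp_unit_addHaar μ T
          (f := fun y => ρ ((↑T⁻¹ : V →L[ℝ] V) y) * f (m + y)) (by fun_prop)
    _ = _ := by
        rw [← lintegral_sub_right_eq_self _ m, ← lintegral_const_mul _ (by fun_prop)]
        simp only [add_sub_cancel, mul_assoc]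

lemma lintegral_withDensity_le_liminf_lintegral_affine (hρ : Continuous ρ) (hf : Measurable f)
    {T : ℕ → V →L[ℝ] V} (hT : Tendsto T atTop (nhds 1))
    {m : ℕ → V} (hm : Tendsto m atTop (nhds 0)) :
    ∫⁻ x, f x ∂(μ.withDensity ρ)
      ≤ liminf (fun N => ∫⁻ x, f (m N + T N x) ∂(μ.withDensity ρ)) atTop := by
  have hinv : Tendsto (fun N => Ring.inverse (T N)) atTop (nhds 1) := by
    simpa only [Units.val_one, Ring.inverse_one, Function.comp_def] using
      (NormedRing.inverse_continuousAt (1 : (V →L[ℝ] V)ˣ)).tendsto.comp hT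
  let g (N : ℕ) (y : V) : ℝ≥0∞ :=
    ENNReal.ofReal |(Ring.inverse (T N)).det| * ρ (Ring.inverse (T N) (y - m N))
  have hg (N : ℕ) : Measurable (g N) := by fun_prop
  have hgρ (y : V) : Tendsto (fun N => g N y) atTop (nhds (ρ y)) := by
    have hdet : Tendsto (fun N => ENNReal.ofReal |(Ring.inverse (T N)).det|) atTop (nhds 1) := by
      have := (ContinuousLinearMap.continuous_det (𝕜 := ℝ) (E := V)).tendsto 1 |>.comp hinv
      simpa [ContinuousLinearMap.det, ContinuousLinearMap.one_def] using
        ENNReal.tendsto_ofReal this.abs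
    have happly : Tendsto (fun N => Ring.inverse (T N) (y - m N)) atTop (nhds y) := by
      have := ((continuous_fst.clm_apply continuous_snd).tendsto ((1 : V →L[ℝ] V), y - 0)).comp
        (hinv.prodMk_nhds (tendsto_const_nhds.sub hm))
      simpa only [sub_zero, one_apply_eq_self, Function.comp_def] using this
    simpa only [one_mul, Function.comp_apply] using ENNReal.Tendsto.mul hdet (Or.inl one_ne_zero)
      ((hρ.tendsto y).comp happly) (Or.inr ENNReal.one_ne_top)
  calc ∫⁻ x, f x ∂(μ.withDensity ρ)
      = ∫⁻ y, ρ y * f y ∂μ := lintegral_withDensity_eq_lintegral_mul _ hρ.measurable hf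
    _ ≤ ∫⁻ y, liminf (fun N => g N y * f y) atTop ∂μ := by
        refine lintegral_mono fun y => ?_
        rcases eq_or_ne (ρ y) 0 with hy | hy
        · simp [hy]
        · exact (ENNReal.Tendsto.mul_const (hgρ y) (Or.inl hy)).liminf_eq.ge
    _ ≤ liminf (fun N => ∫⁻ y, g N y * f y ∂μ) atTop :=
        lintegral_liminf_le fun N => (hg N).mul hf
    _ = liminf (fun N => ∫⁻ x, f (m N + T N x) ∂(μ.withDensity ρ)) atTop := by
        refine liminf_congr ?_
        filter_upwards [hT.eventually (Units.nhds 1)] with N ⟨U, hU⟩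
        simp only [g, ← hU, Ring.inverse_unit]
        exact (lintegral_affine_withDensity_addHaar μ hρ.measurable hf U (m N)).symm

end AffineFatou

section StdGaussian

variable {V : Type*} [NormedAddCommGroup V] [InnerProductSpace ℝ V] [FiniteDimensional ℝ V]
  [MeasurableSpace V] [BorelSpace V]

lemma integrable_exp_neg_half_mul_sq_norm :
    Integrable fun x : V => Real.exp (-(1 / 2) * ‖x‖ ^ 2) := by
  have h := GaussianFourier.integrable_cexp_neg_mul_sq_norm_add (V := V) (b := 1 / 2)
    (by norm_num) 0 0
  simpa [Complex.norm_exp, ← Complex.ofReal_pow] using h.norm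

theorem stdGaussian_eq_withDensity :
    stdGaussian V = volume.withDensity fun x => ENNReal.ofReal
      ((2 * Real.pi) ^ (-(Module.finrank ℝ V / 2 : ℝ)) * Real.exp (-(1 / 2) * ‖x‖ ^ 2)) := by
  set c : ℝ := (2 * Real.pi) ^ (-(Module.finrank ℝ V / 2 : ℝ))
  have hint := integrable_exp_neg_half_mul_sq_norm (V := V).const_mul c
  have := isFiniteMeasure_withDensity_ofReal hint.2
  refine (Measure.ext_of_charFun ?_).symm
  ext t
  rw [charFun_stdGaussian, charFun_apply, integral_withDensity_eq_integral_toReal_smul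
    (by fun_prop) (.of_forall fun _ => ENNReal.ofReal_lt_top)]
  have hfourier := GaussianFourier.integral_cexp_neg_mul_sq_norm_add (V := V) (b := 1 / 2)
    (by norm_num) Complex.I t
  have hcpos : (c : ℂ) * (Real.pi / (1 / 2)) ^ (Module.finrank ℝ V / 2 : ℂ) = 1 := by
    have hcast : ((Real.pi / (1 / 2) : ℂ)) ^ (Module.finrank ℝ V / 2 : ℂ)
        = (((2 * Real.pi) ^ (Module.finrank ℝ V / 2 : ℝ) : ℝ) : ℂ) := by
      rw [Complex.ofReal_cpow (by positivity)]
      push_cast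
      congr 1
      ring
    rw [hcast, ← Complex.ofReal_mul, ← Real.rpow_add (by positivity), neg_add_cancel,
      Real.rpow_zero, Complex.ofReal_one]
  calc ∫ x : V, (ENNReal.ofReal (c * Real.exp (-(1 / 2) * ‖x‖ ^ 2))).toReal
          • Complex.exp (⟪x, t⟫ * Complex.I)
      = ∫ x : V, c * Complex.exp (-(1 / 2) * ‖x‖ ^ 2 + Complex.I * ⟪t, x⟫) := by
        refine integral_congr_ae (.of_forall fun x => ?_)
        dsimp only
        rw [ENNReal.toReal_ofReal (by positivity), Complex.real_smul, Complex.exp_add,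
          real_inner_comm, mul_comm Complex.I]
        push_cast
        ring
    _ = Complex.exp (-‖t‖ ^ 2 / 2) := by
        rw [integral_const_mul, hfourier, ← mul_assoc, hcpos, one_mul, Complex.I_sq]
        congr 1
        ring

variable {ι : Type*} [Fintype ι] [DecidableEq ι]

open scoped Matrix.Norms.L2Operator MatrixOrder in
lemma tendsto_cfcSqrt_one {S : ℕ → Matrix ι ι ℝ} (hS : ∀ N, (S N).PosSemidef)
    (hlim : Tendsto S atTop (nhds 1)) :
    Tendsto (fun N => CFC.sqrt (S N)) atTop (nhds 1) := by
  have hwithin : Tendsto S atTop (nhdsWithin 1 {A | 0 ≤ A}) :=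
    tendsto_nhdsWithin_iff.2 ⟨hlim, .of_forall fun N => (hS N).nonneg⟩
  have hsqrt := (CFC.continuousOn_sqrt (A := Matrix ι ι ℝ) 1 Matrix.PosSemidef.one.nonneg).tendsto
  rw [CFC.sqrt_one] at hsqrt
  exact hsqrt.comp hwithin

lemma stdGaussian_map_add_mulVec {κ : Type*} [Fintype κ] (m : EuclideanSpace ℝ ι)
    (A : Matrix ι κ ℝ) :
    (stdGaussian (EuclideanSpace ℝ κ)).map (fun u => m + WithLp.toLp 2 (A.mulVec u.ofLp))
      = multivariateGaussian m (A * A.transpose) := by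
  have := Measure.isProbabilityMeasure_map (μ := stdGaussian (EuclideanSpace ℝ κ))
    (f := fun u => m + WithLp.toLp 2 (A.mulVec u.ofLp)) (by fun_prop)
  have hA : (A * A.transpose).PosSemidef := by
    simpa using Matrix.posSemidef_self_mul_conjTranspose A
  refine Measure.ext_of_charFun ?_
  ext t
  let s : EuclideanSpace ℝ κ := WithLp.toLp 2 (A.transpose.mulVec t.ofLp)
  have hinner (u : EuclideanSpace ℝ κ) :
      ⟪m + WithLp.toLp 2 (A.mulVec u.ofLp), t⟫ = ⟪t, m⟫ + ⟪u, s⟫ := by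
    rw [inner_add_left, real_inner_comm]
    congr 1
    rw [EuclideanSpace.inner_eq_star_dotProduct, EuclideanSpace.inner_eq_star_dotProduct,
      star_trivial, star_trivial, Matrix.dotProduct_mulVec, ← Matrix.mulVec_transpose]
  have hnorm : t.ofLp ⬝ᵥ (A * A.transpose).mulVec t.ofLp = ‖s‖ ^ 2 := by
    rw [← real_inner_self_eq_norm_sq, EuclideanSpace.inner_eq_star_dotProduct, star_trivial,
      ← Matrix.mulVec_mulVec, Matrix.dotProduct_mulVec, ← Matrix.mulVec_transpose]
  rw [charFun_multivariateGaussian hA, hnorm, charFun_apply,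
    integral_map (by fun_prop) (by fun_prop)]
  simp only [hinner, Complex.ofReal_add, add_mul, Complex.exp_add, integral_const_mul,
    ← charFun_apply, charFun_stdGaussian]
  rw [← Complex.exp_add, sub_eq_add_neg, Complex.ofReal_pow, neg_div]

open scoped MatrixOrder in
lemma lintegral_stdGaussian_le_liminf_multivariateGaussian {S : ℕ → Matrix ι ι ℝ}
    (hS : ∀ N, (S N).PosSemidef) (hlim : Tendsto S atTop (nhds 1))
    {m : ℕ → EuclideanSpace ℝ ι} (hm : Tendsto m atTop (nhds 0))
    {f : EuclideanSpace ℝ ι → ℝ≥0∞} (hf : Measurable f) :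
    ∫⁻ x, f x ∂(stdGaussian (EuclideanSpace ℝ ι))
      ≤ liminf (fun N => ∫⁻ x, f x ∂(multivariateGaussian (m N) (S N))) atTop := by
  have hcont : Continuous (Matrix.toEuclideanCLM (n := ι) (𝕜 := ℝ)) :=
    (Matrix.toEuclideanCLM (n := ι) (𝕜 := ℝ)).toAlgEquiv.toLinearMap.continuous_of_finiteDimensional
  have hsqrt : Tendsto (fun N => Matrix.toEuclideanCLM (𝕜 := ℝ) (CFC.sqrt (S N))) atTop
      (nhds 1) := by
    simpa only [map_one, Function.comp_def] using
      (hcont.tendsto 1).comp (tendsto_cfcSqrt_one hS hlim)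
  simp_rw [multivariateGaussian, stdGaussian_eq_withDensity]
  refine (lintegral_withDensity_le_liminf_lintegral_affine volume
    (ENNReal.continuous_ofReal.comp (by fun_prop)) hf hsqrt hm).trans_eq
    (liminf_congr (.of_forall fun N => ?_))
  rw [lintegral_map hf (by fun_prop)]
  rfl

theorem lintegral_stdGaussian_le_liminf_lintegral_affine {κ : ℕ → Type*} [∀ N, Fintype (κ N)]
    {A : ∀ N, Matrix ι (κ N) ℝ} (hA : Tendsto (fun N => A N * (A N).transpose) atTop (nhds 1))
    {m : ℕ → EuclideanSpace ℝ ι} (hm : Tendsto m atTop (nhds 0))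
    {f : EuclideanSpace ℝ ι → ℝ≥0∞} (hf : Measurable f) :
    ∫⁻ x, f x ∂(stdGaussian (EuclideanSpace ℝ ι))
      ≤ liminf (fun N => ∫⁻ u, f (m N + WithLp.toLp 2 ((A N).mulVec u.ofLp))
          ∂(stdGaussian (EuclideanSpace ℝ (κ N)))) atTop := by
  have hpos (N : ℕ) : (A N * (A N).transpose).PosSemidef := by
    simpa using Matrix.posSemidef_self_mul_conjTranspose (A N)
  refine (lintegral_stdGaussian_le_liminf_multivariateGaussian hpos hA hm hf).trans_eq
    (liminf_congr (.of_forall fun N => ?_))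
  rw [← stdGaussian_map_add_mulVec, lintegral_map hf (by fun_prop)]

end StdGaussian

section SampleMatrix

lemma iIndepFun_comp_measurePreserving {ι Ω Ω' : Type*} {β : ι → Type*} [MeasurableSpace Ω]
    [MeasurableSpace Ω'] [∀ i, MeasurableSpace (β i)] {μ : Measure Ω} {μ' : Measure Ω'}
    {X : ∀ i, Ω → β i} (hindep : iIndepFun X μ) (hX : ∀ i, Measurable (X i)) {φ : Ω' → Ω}
    (hφ : MeasurePreserving φ μ' μ) : iIndepFun (fun i => X i ∘ φ) μ' := by
  rw [iIndepFun_iff_measure_inter_preimage_eq_mul] at hindep ⊢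
  intro S s hs
  have hmeas (i : ι) (hi : i ∈ S) : MeasurableSet (X i ⁻¹' s i) := hX i (hs i hi)
  simp only [Set.preimage_comp]
  rw [← Set.preimage_iInter₂, hφ.measure_preimage (S.measurableSet_biInter hmeas).nullMeasurableSet,
    hindep S hs]
  exact Finset.prod_congr rfl fun i hi =>
    (hφ.measure_preimage (hmeas i hi).nullMeasurableSet).symm

/-- The matrix `(ξ_k(z_i) / √N)` of the first `N` features `ξ` of a sample `z`. It is normalised so
that its Gram matrix is an empirical mean over the features. -/
def sampleMatrix {Ω ι : Type*} (ξ : ℕ → Ω → ℝ) (N : ℕ) (z : ι → Ω) : Matrix ι (Fin N) ℝ :=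
  Matrix.of fun i k => ξ k (z i) / √N

lemma sampleMatrix_mul_transpose_apply {Ω ι : Type*} (ξ : ℕ → Ω → ℝ) (N : ℕ) (z : ι → Ω) (i j : ι) :
    (sampleMatrix ξ N z * (sampleMatrix ξ N z).transpose) i j
      = (∑ k ∈ Finset.range N, ξ k (z i) * ξ k (z j)) / N := by
  simp only [sampleMatrix, Matrix.mul_apply, Matrix.transpose_apply, Matrix.of_apply,
    div_mul_div_comm, Real.mul_self_sqrt N.cast_nonneg, ← Finset.sum_div]
  rw [Fin.sum_univ_eq_sum_range fun k => ξ k (z i) * ξ k (z j)]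

variable {Ω ι : Type*} [MeasurableSpace Ω] {μ : Measure Ω} [IsProbabilityMeasure μ] [Fintype ι]
  {ξ : ℕ → Ω → ℝ}

lemma iIndepFun_eval_sample (hξ : ∀ k, Measurable (ξ k)) (hindep : iIndepFun ξ μ) :
    iIndepFun (fun (p : ι × ℕ) (z : ι → Ω) => ξ p.2 (z p.1)) (Measure.pi fun _ => μ) :=
  iIndepFun_uncurry' (X := fun i k (z : ι → Ω) => ξ k (z i))
    (fun i k => (hξ k).comp (measurable_pi_apply i))
    (iIndepFun_pi (X := fun _ w k => ξ k w) fun _ => (measurable_pi_iff.2 hξ).aemeasurable)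
    fun i => iIndepFun_comp_measurePreserving hindep hξ (measurePreserving_eval (fun _ => μ) i)

lemma identDistrib_sample (hξ : ∀ k, Measurable (ξ k))
    (hident : ∀ k, IdentDistrib (ξ k) (ξ 0) μ μ) (k : ℕ) :
    IdentDistrib (fun (z : ι → Ω) i => ξ k (z i)) (fun z i => ξ 0 (z i))
      (Measure.pi fun _ => μ) (Measure.pi fun _ => μ) := by
  refine IdentDistrib.pi (fun i => ?_)
    (iIndepFun_pi (X := fun _ => ξ k) fun _ => (hξ k).aemeasurable)
    (iIndepFun_pi (X := fun _ => ξ 0) fun _ => (hξ 0).aemeasurable)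
  have hmeas (k : ℕ) : Measurable fun z : ι → Ω => ξ k (z i) := (hξ k).comp (measurable_pi_apply i)
  have hlaw (k : ℕ) : (Measure.pi fun _ : ι => μ).map (fun z => ξ k (z i)) = μ.map (ξ k) := by
    have heval := measurePreserving_eval (fun _ : ι => μ) i
    conv_rhs => rw [← heval.map_eq]
    exact (Measure.map_map (hξ k) heval.measurable).symm
  exact ⟨(hmeas k).aemeasurable, (hmeas 0).aemeasurable, by rw [hlaw, hlaw, (hident k).map_eq]⟩

lemma integral_mul_sample [DecidableEq ι] {X : Ω → ℝ} (hX : Measurable X) (hmean : ∫ ω, X ω ∂μ = 0)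
    (hvar : ∫ ω, X ω * X ω ∂μ = 1) (i j : ι) :
    ∫ z : ι → Ω, X (z i) * X (z j) ∂(Measure.pi fun _ => μ) = (1 : Matrix ι ι ℝ) i j := by
  have heval (f : Ω → ℝ) (hf : Measurable f) (i : ι) :
      ∫ z : ι → Ω, f (z i) ∂(Measure.pi fun _ => μ) = ∫ ω, f ω ∂μ :=
    integral_comp_eval hf.aestronglyMeasurable
  rcases eq_or_ne i j with rfl | hij
  · rw [heval (fun ω => X ω * X ω) (by fun_prop), hvar, Matrix.one_apply_eq]
  · have hindep := (iIndepFun_pi (μ := fun _ : ι => μ) (X := fun _ => X)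
      fun _ => hX.aemeasurable).indepFun hij
    have hmeas (i : ι) : Measurable fun z : ι → Ω => X (z i) := hX.comp (measurable_pi_apply i)
    rw [hindep.integral_fun_mul_eq_mul_integral (hmeas i).aestronglyMeasurable
      (hmeas j).aestronglyMeasurable, heval X hX, hmean,
      zero_mul, Matrix.one_apply_ne hij]

theorem ae_tendsto_sampleMatrix_mul_transpose [DecidableEq ι] (hξ : ∀ k, Measurable (ξ k))
    (hindep : iIndepFun ξ μ) (hident : ∀ k, IdentDistrib (ξ k) (ξ 0) μ μ)
    (hL2 : MemLp (ξ 0) 2 μ) (hmean : ∫ ω, ξ 0 ω ∂μ = 0) (hvar : ∫ ω, ξ 0 ω * ξ 0 ω ∂μ = 1) :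
    ∀ᵐ z ∂(Measure.pi fun _ : ι => μ),
      Tendsto (fun N => sampleMatrix ξ N z * (sampleMatrix ξ N z).transpose) atTop (nhds 1) := by
  have hentry (i j : ι) : ∀ᵐ z ∂(Measure.pi fun _ : ι => μ),
      Tendsto (fun N : ℕ => (∑ k ∈ Finset.range N, ξ k (z i) * ξ k (z j)) / N) atTop
        (nhds ((1 : Matrix ι ι ℝ) i j)) := by
    have hL2eval (i : ι) : MemLp (fun z : ι → Ω => ξ 0 (z i)) 2 (Measure.pi fun _ => μ) :=
      hL2.comp_measurePreserving (measurePreserving_eval (fun _ => μ) i)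
    have hint : Integrable (fun z : ι → Ω => ξ 0 (z i) * ξ 0 (z j)) (Measure.pi fun _ => μ) :=
      (hL2eval i).integrable_mul (hL2eval j)
    have hpair : Pairwise fun k l => IndepFun (fun z : ι → Ω => ξ k (z i) * ξ k (z j))
        (fun z => ξ l (z i) * ξ l (z j)) (Measure.pi fun _ => μ) := fun k l hkl =>
      (iIndepFun_eval_sample hξ hindep).indepFun_mul_mul
        (fun p => (hξ p.2).comp (measurable_pi_apply p.1)) (i, k) (j, k) (i, l) (j, l)
        (by simp [hkl]) (by simp [hkl]) (by simp [hkl]) (by simp [hkl])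
    have hidentMul (k : ℕ) : IdentDistrib (fun z : ι → Ω => ξ k (z i) * ξ k (z j))
        (fun z => ξ 0 (z i) * ξ 0 (z j)) (Measure.pi fun _ => μ) (Measure.pi fun _ => μ) :=
      (identDistrib_sample hξ hident k).comp (u := fun v => v i * v j) (by fun_prop)
    rw [← integral_mul_sample (hξ 0) hmean hvar i j]
    exact strong_law_ae_real (μ := Measure.pi fun _ : ι => μ) (fun k z => ξ k (z i) * ξ k (z j))
      hint hpair hidentMul
  filter_upwards [ae_all_iff.2 fun i => ae_all_iff.2 (hentry i)] with z hz
  refine tendsto_pi_nhds.2 fun i => tendsto_pi_nhds.2 fun j => ?_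
  simpa only [sampleMatrix_mul_transpose_apply] using hz i j

end SampleMatrix

section Mixture

variable {Ω E ι κ : Type*}

/-- The `i`-th block, in `ℝ^κ`, of a vector of `ℝ^(ι × κ)`. -/
def block (w : EuclideanSpace ℝ (ι × κ)) (i : ι) : EuclideanSpace ℝ κ :=
  WithLp.toLp 2 fun j => w (i, j)

lemma measurable_block : Measurable (block : EuclideanSpace ℝ (ι × κ) → ι → _) := by
  unfold block
  fun_prop

/-- The noise substitute in `ℝ^κ`: a function of `z` alone, obtained by weighting the features
`ξ_0, …, ξ_{N-1}` with the rows of `u`. The perturbation `v`, whose effect vanishes as `N → ∞`, is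
there to keep covariances injective. -/
def pseudoNoise (ξ : ℕ → Ω → ℝ) (v : κ → Ω → ℝ) (N : ℕ) (u : EuclideanSpace ℝ (Fin N × κ)) (z : Ω) :
    EuclideanSpace ℝ κ :=
  WithLp.toLp 2 fun j => 1 / ((N : ℝ) + 1) * v j z + ∑ k : Fin N, ξ k z / √N * u (k, j)

lemma measurable_pseudoNoise [MeasurableSpace Ω] {ξ : ℕ → Ω → ℝ} (hξ : ∀ k, Measurable (ξ k))
    {v : κ → Ω → ℝ} (hv : ∀ j, Measurable (v j)) (N : ℕ) :
    Measurable fun p : Ω × EuclideanSpace ℝ (Fin N × κ) => pseudoNoise ξ v N p.2 p.1 := by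
  unfold pseudoNoise
  fun_prop

lemma block_affine_sampleMatrix [Fintype κ] [DecidableEq κ] (ξ : ℕ → Ω → ℝ) (v : κ → Ω → ℝ) (N : ℕ)
    (u : EuclideanSpace ℝ (Fin N × κ)) (z : ι → Ω) :
    block ((1 / ((N : ℝ) + 1)) • WithLp.toLp 2 (fun p : ι × κ => v p.2 (z p.1))
        + WithLp.toLp 2 ((Matrix.kronecker (sampleMatrix ξ N z) (1 : Matrix κ κ ℝ)).mulVec u.ofLp))
      = fun i => pseudoNoise ξ v N u (z i) := by
  ext i j
  simp [block, pseudoNoise, sampleMatrix, Matrix.mulVec, dotProduct, Fintype.sum_prod_type,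
    Matrix.one_apply]

variable [Fintype κ]

lemma lintegral_block_stdGaussian_le_liminf [Fintype ι] [DecidableEq ι] {ξ : ℕ → Ω → ℝ}
    (v : κ → Ω → ℝ) {z : ι → Ω}
    (hgram : Tendsto (fun N => sampleMatrix ξ N z * (sampleMatrix ξ N z).transpose) atTop (nhds 1))
    {F : (ι → EuclideanSpace ℝ κ) → ℝ≥0∞} (hF : Measurable F) :
    ∫⁻ w, F (block w) ∂(stdGaussian (EuclideanSpace ℝ (ι × κ)))
      ≤ liminf (fun N => ∫⁻ u, F (fun i => pseudoNoise ξ v N u (z i))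
          ∂(stdGaussian (EuclideanSpace ℝ (Fin N × κ)))) atTop := by
  classical
  let A (N : ℕ) : Matrix (ι × κ) (Fin N × κ) ℝ := Matrix.kronecker (sampleMatrix ξ N z) 1
  have hA : Tendsto (fun N => A N * (A N).transpose) atTop (nhds 1) := by
    have hcont : Continuous fun S : Matrix ι ι ℝ => Matrix.kronecker S (1 : Matrix κ κ ℝ) :=
      continuous_matrix fun p q => by
        simp only [Matrix.kronecker, Matrix.kroneckerMap_apply]
        fun_prop
    have hmul (N : ℕ) : A N * (A N).transpose
        = Matrix.kronecker (sampleMatrix ξ N z * (sampleMatrix ξ N z).transpose) 1 := by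
      simp only [A, Matrix.kronecker]
      rw [← Matrix.kroneckerMap_transpose, ← Matrix.mul_kronecker_mul, Matrix.transpose_one,
        mul_one]
    simp_rw [hmul]
    simpa [Function.comp_def] using (hcont.tendsto 1).comp hgram
  have hm : Tendsto (fun N : ℕ => (1 / ((N : ℝ) + 1)) •
      (WithLp.toLp 2 (fun p : ι × κ => v p.2 (z p.1)) : EuclideanSpace ℝ (ι × κ))) atTop
      (nhds 0) := by
    have h := (tendsto_one_div_add_atTop_nhds_zero_nat (𝕜 := ℝ)).smul_const
      (WithLp.toLp 2 (fun p : ι × κ => v p.2 (z p.1)) : EuclideanSpace ℝ (ι × κ))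
    rwa [zero_smul] at h
  simpa only [A, Function.comp_apply, block_affine_sampleMatrix] using
    lintegral_stdGaussian_le_liminf_lintegral_affine hA hm (hF.comp measurable_block)

lemma stdGaussian_map_block [Fintype ι] :
    (stdGaussian (EuclideanSpace ℝ (ι × κ))).map block
      = Measure.pi fun _ : ι => stdGaussian (EuclideanSpace ℝ κ) := by
  have hcurry := Measure.infinitePi_map_curry (fun (_ : ι) (_ : κ) => gaussianReal 0 1)
  simp only [Measure.infinitePi_eq_pi] at hcurry
  simp only [← map_pi_eq_stdGaussian]
  rw [← Measure.pi_map_pi (fun _ => by fun_prop), ← hcurry,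
    Measure.map_map measurable_block (by fun_prop),
    Measure.map_map (by fun_prop) (MeasurableEquiv.measurable _)]
  rfl

variable [MeasurableSpace Ω] [MeasurableSpace E]

lemma pi_map_apply [Fintype ι] {μ : Measure Ω} [IsProbabilityMeasure μ] {G : Ω → E}
    (hG : Measurable G) {B : Set (ι → E)} (hB : MeasurableSet B) :
    (Measure.pi fun _ : ι => μ.map G) B
      = (Measure.pi fun _ : ι => μ) ((fun z i => G (z i)) ⁻¹' B) := by
  have := Measure.isProbabilityMeasure_map (μ := μ) hG.aemeasurable
  rw [← Measure.pi_map_pi fun _ => hG.aemeasurable, Measure.map_apply (by fun_prop) hB]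

lemma pi_map_apply_eq_lintegral [Fintype ι] (μ : Measure Ω) [IsProbabilityMeasure μ] {G : Ω → E}
    (hG : Measurable G) {B : Set (ι → E)} (hB : MeasurableSet B) :
    (Measure.pi fun _ : ι => μ.map G) B
      = ∫⁻ z, B.indicator 1 (fun i => G (z i)) ∂(Measure.pi fun _ : ι => μ) := by
  have hpre : Measurable fun (z : ι → Ω) i => G (z i) := by fun_prop
  rw [pi_map_apply hG hB, ← lintegral_indicator_one (hpre hB)]
  rfl

lemma pi_map_prod_stdGaussian_apply [Fintype ι] (μ : Measure Ω) [IsProbabilityMeasure μ]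
    {G : Ω × EuclideanSpace ℝ κ → E} (hG : Measurable G) {B : Set (ι → E)} (hB : MeasurableSet B) :
    (Measure.pi fun _ : ι => (μ.prod (stdGaussian (EuclideanSpace ℝ κ))).map G) B
      = ∫⁻ z, ∫⁻ w, B.indicator 1 (fun i => G (z i, block w i))
          ∂(stdGaussian (EuclideanSpace ℝ (ι × κ))) ∂(Measure.pi fun _ : ι => μ) := by
  have hind : Measurable fun p : (ι → Ω) × (ι → EuclideanSpace ℝ κ) =>
      B.indicator (1 : (ι → E) → ℝ≥0∞) fun i => G (p.1 i, p.2 i) :=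
    (measurable_one.indicator hB).comp (by fun_prop)
  have harrow := measurePreserving_arrowProdEquivProdArrow Ω (EuclideanSpace ℝ κ) ι (fun _ => μ)
    (fun _ => stdGaussian (EuclideanSpace ℝ κ))
  rw [pi_map_apply_eq_lintegral _ hG hB]
  calc ∫⁻ y, B.indicator 1 (fun i => G (y i))
        ∂(Measure.pi fun _ : ι => μ.prod (stdGaussian (EuclideanSpace ℝ κ)))
      = ∫⁻ p, B.indicator 1 (fun i => G (p.1 i, p.2 i)) ∂((Measure.pi fun _ : ι => μ).prod
          (Measure.pi fun _ => stdGaussian (EuclideanSpace ℝ κ))) := harrow.lintegral_comp hind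
    _ = _ := by
        rw [lintegral_prod _ hind.aemeasurable]
        refine lintegral_congr fun z => ?_
        rw [← stdGaussian_map_block]
        exact lintegral_map (hind.comp measurable_prodMk_left) measurable_block

theorem pi_map_prod_stdGaussian_le [Fintype ι] [DecidableEq ι] {μ : Measure Ω}
    [IsProbabilityMeasure μ] {ξ : ℕ → Ω → ℝ} (hξ : ∀ k, Measurable (ξ k)) {v : κ → Ω → ℝ}
    (hv : ∀ j, Measurable (v j))
    (hgram : ∀ᵐ z ∂(Measure.pi fun _ : ι => μ),
      Tendsto (fun N => sampleMatrix ξ N z * (sampleMatrix ξ N z).transpose) atTop (nhds 1))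
    {G : Ω × EuclideanSpace ℝ κ → E} (hG : Measurable G) {B : Set (ι → E)} (hB : MeasurableSet B)
    {α : ℝ≥0∞}
    (hα : ∀ N u, (Measure.pi fun _ : ι => μ.map fun z => G (z, pseudoNoise ξ v N u z)) B ≤ α) :
    (Measure.pi fun _ : ι => (μ.prod (stdGaussian (EuclideanSpace ℝ κ))).map G) B ≤ α := by
  let F (N : ℕ) (z : ι → Ω) (u : EuclideanSpace ℝ (Fin N × κ)) : ℝ≥0∞ :=
    B.indicator 1 fun i => G (z i, pseudoNoise ξ v N u (z i))
  have hnoise := measurable_pseudoNoise hξ hv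
  have hF (N : ℕ) : Measurable (Function.uncurry (F N)) := by
    refine (measurable_one.indicator hB).comp (measurable_pi_iff.2 fun i => hG.comp ?_)
    have heval : Measurable fun p : (ι → Ω) × EuclideanSpace ℝ (Fin N × κ) => (p.1 i, p.2) := by
      fun_prop
    exact heval.fst.prodMk ((hnoise N).comp heval)
  have hlintegral (N : ℕ) (u : EuclideanSpace ℝ (Fin N × κ)) :
      ∫⁻ z, F N z u ∂(Measure.pi fun _ => μ) ≤ α := by
    have h := pi_map_apply_eq_lintegral μ (ι := ι) (G := fun z => G (z, pseudoNoise ξ v N u z))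
      (hG.comp (measurable_id.prodMk ((hnoise N).comp measurable_prodMk_right))) hB
    exact h.symm.trans_le (hα N u)
  have hmixture (N : ℕ) : ∫⁻ z, ∫⁻ u, F N z u ∂(stdGaussian (EuclideanSpace ℝ (Fin N × κ)))
      ∂(Measure.pi fun _ => μ) ≤ α := by
    rw [lintegral_lintegral_swap (hF N).aemeasurable]
    exact (lintegral_mono (hlintegral N)).trans_eq (by simp)
  rw [pi_map_prod_stdGaussian_apply μ hG hB]
  calc _ ≤ ∫⁻ z, liminf (fun N => ∫⁻ u, F N z u ∂(stdGaussian (EuclideanSpace ℝ (Fin N × κ)))) atTop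
          ∂(Measure.pi fun _ => μ) := by
        refine lintegral_mono_ae ?_
        filter_upwards [hgram] with z hz
        exact lintegral_block_stdGaussian_le_liminf v hz
          (F := fun x => B.indicator 1 fun i => G (z i, x i))
          ((measurable_one.indicator hB).comp (by fun_prop))
    _ ≤ liminf (fun N => ∫⁻ z, ∫⁻ u, F N z u ∂(stdGaussian (EuclideanSpace ℝ (Fin N × κ)))
          ∂(Measure.pi fun _ => μ)) atTop :=
        lintegral_liminf_le fun N => (hF N).lintegral_prod_right'
    _ ≤ α := liminf_le_of_frequently_le' (.of_forall hmixture)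

end Mixture

section CenteredDual

lemma coeFn_sum_smul {Ω ι : Type*} [MeasurableSpace Ω] {μ : Measure Ω} [Fintype ι] (c : ι → ℝ)
    (f : ι → Lp ℝ 2 μ) : ⇑(∑ i, c i • f i) =ᵐ[μ] fun x => ∑ i, c i * f i x := by
  filter_upwards [Lp.coeFn_fun_finsetSum Finset.univ fun i => c i • f i,
    ae_all_iff.2 fun i => Lp.coeFn_smul (c i) (f i)] with x hsum hsmul
  simp only [hsum, hsmul, Pi.smul_apply, smul_eq_mul]

lemma integral_dual_of_memLp_two {E : Type*} [NormedAddCommGroup E] [NormedSpace ℝ E]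
    [CompleteSpace E] [MeasurableSpace E] {μ : Measure E} [IsFiniteMeasure μ] (hμ : MemLp id 2 μ)
    (L : StrongDual ℝ E) : ∫ x, L x ∂μ = L (∫ x, x ∂μ) :=
  L.integral_comp_comm (hμ.integrable one_le_two)

variable {E : Type*} [NormedAddCommGroup E] [NormedSpace ℝ E] [MeasurableSpace E] [BorelSpace E]

/-- The map `L ↦ L - 𝔼 L` from the dual of `E` to `L²(μ)`. It turns the covariance form into the
inner product; this reading requires `μ` to have a second moment. -/
def centeredDual (μ : Measure E) [IsFiniteMeasure μ] : StrongDual ℝ E →L[ℝ] Lp ℝ 2 μ :=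
  StrongDual.toLp μ 2 - (Lp.constL 2 μ ℝ) ∘L (ContinuousLinearMap.apply ℝ ℝ (∫ x, x ∂μ))

variable {μ : Measure E}

lemma coeFn_centeredDual [IsFiniteMeasure μ] (hμ : MemLp id 2 μ) (L : StrongDual ℝ E) :
    centeredDual μ L =ᵐ[μ] fun x => L x - L (∫ x, x ∂μ) := by
  have htoLp : StrongDual.toLp μ 2 L =ᵐ[μ] L := by
    rw [StrongDual.toLp_apply hμ]
    exact MemLp.coeFn_toLp _
  filter_upwards [htoLp, Lp.coeFn_const 2 μ (L (∫ x, x ∂μ)),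
    Lp.coeFn_sub (StrongDual.toLp μ 2 L) (Lp.const 2 μ (L (∫ x, x ∂μ)))] with x hL hconst hsub
  exact hsub.trans (congrArg₂ (· - ·) hL hconst)

lemma inner_centeredDual [CompleteSpace E] [IsFiniteMeasure μ] (hμ : MemLp id 2 μ)
    (L₁ L₂ : StrongDual ℝ E) :
    ⟪centeredDual μ L₁, centeredDual μ L₂⟫ = covForm μ L₁ L₂ := by
  rw [L2.inner_def, covForm]
  refine integral_congr_ae ?_
  filter_upwards [coeFn_centeredDual hμ L₁, coeFn_centeredDual hμ L₂] with x h₁ h₂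
  rw [h₁, h₂, integral_dual_of_memLp_two hμ, integral_dual_of_memLp_two hμ]
  exact mul_comm _ _

lemma HasInjectiveCovariance.centeredDual_injective [CompleteSpace E] [IsFiniteMeasure μ]
    (h : HasInjectiveCovariance μ) (hμ : MemLp id 2 μ) :
    Function.Injective (centeredDual μ) :=
  (injective_iff_map_eq_zero _).2 fun L hL => h L fun L₂ => by
    rw [← inner_centeredDual hμ, hL, inner_zero_left]

/-- The closure in `L²(μ)` of the centred continuous linear functionals. For Gaussian `μ` this is
the Gaussian Hilbert space of `μ`. -/
def gaussianSpace (μ : Measure E) [IsFiniteMeasure μ] : Submodule ℝ (Lp ℝ 2 μ) :=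
  (centeredDual μ).range.topologicalClosure

lemma centeredDual_mem_gaussianSpace [IsFiniteMeasure μ] (L : StrongDual ℝ E) :
    centeredDual μ L ∈ gaussianSpace μ :=
  Submodule.le_topologicalClosure _ ⟨L, rfl⟩

lemma isClosed_setOf_map_eq_gaussianReal {Ω : Type*} [MeasurableSpace Ω] (P : Measure Ω)
    [IsProbabilityMeasure P] :
    IsClosed {f : Lp ℝ 2 P | P.map f = gaussianReal 0 (‖f‖₊ ^ 2)} := by
  have hmeas (f : Lp ℝ 2 P) : AEMeasurable f P := (Lp.aestronglyMeasurable f).aemeasurable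
  refine IsSeqClosed.isClosed fun f g hf hfg => ?_
  have := Measure.isProbabilityMeasure_map (hmeas g)
  refine Measure.ext_of_charFun (funext fun t => ?_)
  have hlaw := (tendstoInMeasure_of_tendsto_Lp hfg).tendstoInDistribution_of_aemeasurable
    (fun n => hmeas (f n)) (hmeas g)
  have hchar := ProbabilityMeasure.tendsto_iff_tendsto_charFun.1 hlaw.tendsto t
  refine tendsto_nhds_unique hchar ?_
  have hcont : Continuous fun f : Lp ℝ 2 P => charFun (gaussianReal 0 (‖f‖₊ ^ 2)) t := by
    simp only [charFun_gaussianReal]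
    fun_prop
  refine ((hcont.tendsto g).comp hfg).congr fun n => ?_
  rw [Function.comp_apply, ← hf n]
  rfl

variable [CompleteSpace E] [SecondCountableTopology E] [IsGaussian μ]

lemma map_centeredDual (L : StrongDual ℝ E) :
    μ.map (centeredDual μ L) = gaussianReal 0 (‖centeredDual μ L‖₊ ^ 2) := by
  have hμ := IsGaussian.memLp_two_id (μ := μ)
  have hvar : Var[L; μ] = ‖centeredDual μ L‖ ^ 2 := by
    rw [← real_inner_self_eq_norm_sq, inner_centeredDual hμ, covForm,
      variance_eq_integral (by fun_prop)]
    simp only [sq]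
  rw [Measure.map_congr (coeFn_centeredDual hμ L), ← integral_dual_of_memLp_two hμ]
  have hsub := gaussianReal_map_sub_const (μ := μ[L]) (v := Var[L; μ].toNNReal) μ[L]
  rw [← IsGaussian.map_eq_gaussianReal, Measure.map_map (by fun_prop) (by fun_prop)] at hsub
  simpa only [sub_self, hvar, Function.comp_def, Real.toNNReal_pow (norm_nonneg _),
    norm_toNNReal] using hsub

theorem map_eq_gaussianReal_of_mem_gaussianSpace {f : Lp ℝ 2 μ} (hf : f ∈ gaussianSpace μ) :
    μ.map f = gaussianReal 0 (‖f‖₊ ^ 2) :=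
  closure_minimal (Set.range_subset_iff.2 map_centeredDual)
    (isClosed_setOf_map_eq_gaussianReal μ) hf

lemma integral_eq_zero_of_mem_gaussianSpace {f : Lp ℝ 2 μ} (hf : f ∈ gaussianSpace μ) :
    ∫ x, f x ∂μ = 0 := by
  have hmap := integral_map (μ := μ) (Lp.aestronglyMeasurable f).aemeasurable
    (f := id) aestronglyMeasurable_id
  simpa [map_eq_gaussianReal_of_mem_gaussianSpace hf] using hmap.symm

lemma map_const_add_of_mem_gaussianSpace {f : Lp ℝ 2 μ} (hf : f ∈ gaussianSpace μ) (c : ℝ) :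
    μ.map (fun x => c + f x) = gaussianReal c (‖f‖₊ ^ 2) := by
  have hadd := gaussianReal_map_const_add (μ := 0) (v := ‖f‖₊ ^ 2) c
  rw [← map_eq_gaussianReal_of_mem_gaussianSpace hf, AEMeasurable.map_map_of_aemeasurable
    (by fun_prop) (Lp.aestronglyMeasurable f).aemeasurable] at hadd
  simpa only [zero_add, Function.comp_def] using hadd

end CenteredDual

section Pushforward

variable {E F : Type*} [NormedAddCommGroup E] [NormedSpace ℝ E] [MeasurableSpace E] [BorelSpace E]
  [CompleteSpace E] [SecondCountableTopology E] {μ : Measure E} [IsGaussian μ]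
  [NormedAddCommGroup F] [NormedSpace ℝ F] [MeasurableSpace F] [OpensMeasurableSpace F]

theorem isGaussianMeasure_map_of_mem_gaussianSpace {φ : E → F} (hφ : AEMeasurable φ μ)
    (h : ∀ L : F →L[ℝ] ℝ, ∃ (c : ℝ), ∃ q ∈ gaussianSpace μ, ∀ᵐ x ∂μ, L (φ x) = c + q x) :
    IsGaussianMeasure (μ.map φ) := fun L => by
  obtain ⟨c, q, hq, hLφ⟩ := h L
  refine ⟨c, ‖q‖₊ ^ 2, ?_⟩
  rw [AEMeasurable.map_map_of_aemeasurable (by fun_prop) hφ,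
    ← map_const_add_of_mem_gaussianSpace hq c]
  exact Measure.map_congr hLφ

lemma covForm_map_self {φ : E → F} (hφ : AEMeasurable φ μ) {L : F →L[ℝ] ℝ} {c : ℝ} {q : Lp ℝ 2 μ}
    (hq : q ∈ gaussianSpace μ) (hLφ : ∀ᵐ x ∂μ, L (φ x) = c + q x) :
    covForm (μ.map φ) L L = ‖q‖ ^ 2 := by
  have hmean : ∫ y, L y ∂(μ.map φ) = c := by
    rw [integral_map hφ (by fun_prop), integral_congr_ae hLφ,
      integral_add (integrable_const c) ((Lp.memLp q).integrable one_le_two),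
      integral_eq_zero_of_mem_gaussianSpace hq]
    simp
  rw [covForm, hmean, integral_map hφ (by fun_prop), ← real_inner_self_eq_norm_sq, L2.inner_def]
  refine integral_congr_ae ?_
  filter_upwards [hLφ] with x hx
  rw [hx, add_sub_cancel_left]
  rfl

theorem hasInjectiveCovariance_map_of_mem_gaussianSpace {φ : E → F} (hφ : AEMeasurable φ μ)
    (h : ∀ L : F →L[ℝ] ℝ, ∃ (c : ℝ), ∃ q ∈ gaussianSpace μ,
      (∀ᵐ x ∂μ, L (φ x) = c + q x) ∧ (q = 0 → L = 0)) :
    HasInjectiveCovariance (μ.map φ) := fun L hL => by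
  obtain ⟨c, q, hq, hLφ, hzero⟩ := h L
  have hnorm := (covForm_map_self hφ hq hLφ).symm.trans (hL L)
  exact hzero (norm_eq_zero.1 (pow_eq_zero_iff two_ne_zero |>.1 hnorm))

lemma isGaussian_map_pi_of_mem_gaussianSpace {ι : Type*} [Finite ι] {e : ι → Lp ℝ 2 μ}
    (he : ∀ i, e i ∈ gaussianSpace μ) : IsGaussian (μ.map fun x i => e i x) := by
  classical
  have := Fintype.ofFinite ι
  refine isGaussian_of_map_eq_gaussianReal (isGaussianMeasure_map_of_mem_gaussianSpace
    (aemeasurable_pi_lambda _ fun i => (Lp.aestronglyMeasurable (e i)).aemeasurable) fun L =>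
    ⟨0, ∑ i, L (Pi.single i 1) • e i, sum_mem fun i _ => Submodule.smul_mem _ _ (he i), ?_⟩)
  filter_upwards [coeFn_sum_smul (fun i => L (Pi.single i 1)) e] with x hsum
  rw [pi_eq_sum_univ' fun i => e i x, map_sum, hsum, zero_add]
  simp only [map_smul, smul_eq_mul, mul_comm]

theorem iIndepFun_of_orthonormal {ι : Type*} {e : ι → Lp ℝ 2 μ} (he : Orthonormal ℝ e)
    (hmem : ∀ i, e i ∈ gaussianSpace μ) : iIndepFun (fun i => e i) μ := by
  refine iIndepFun_iff_finset.2 fun S => ?_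
  have hlaw : HasGaussianLaw (fun x (i : S) => e i x) μ :=
    ⟨isGaussian_map_pi_of_mem_gaussianSpace fun i : S => hmem i⟩
  refine hlaw.iIndepFun_of_covariance_eq_zero fun i j hij => ?_
  rw [covariance, integral_eq_zero_of_mem_gaussianSpace (hmem i),
    integral_eq_zero_of_mem_gaussianSpace (hmem j)]
  have hinner := he.inner_eq_zero (Subtype.coe_injective.ne hij)
  rw [L2.inner_def] at hinner
  simpa [mul_comm] using hinner

end Pushforward

section Regression

variable {F K G : Type*} [NormedAddCommGroup F] [NormedSpace ℝ F] [FiniteDimensional ℝ F]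
  [NormedAddCommGroup K] [InnerProductSpace ℝ K]

lemma map_strongDual_eq_sum {ι W : Type*} [Fintype ι] [AddCommGroup W] [Module ℝ W]
    (b : Module.Basis ι ℝ F) (T : StrongDual ℝ F →ₗ[ℝ] W) (c : StrongDual ℝ F) :
    T c = ∑ i, c (b i) • T (b.coord i).toContinuousLinearMap := by
  have hc : c = ∑ i, c (b i) • (b.coord i).toContinuousLinearMap := by
    ext x
    conv_lhs => rw [← b.sum_repr x, map_sum]
    simp [mul_comm]
  conv_lhs => rw [hc]
  simp only [map_sum, map_smul]

lemma exists_norm_comp_eq (d : StrongDual ℝ F →ₗ[ℝ] K) :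
    ∃ (r : ℕ) (σ : EuclideanSpace ℝ (Fin r) →L[ℝ] F), ∀ c, ‖c ∘L σ‖ = ‖d c‖ := by
  let b := Module.finBasis ℝ F
  let s := (stdOrthonormalBasis ℝ d.range).repr.toLinearEquiv.toLinearMap ∘ₗ d.rangeRestrict
  refine ⟨_, ∑ i, (innerSL ℝ (s (b.coord i).toContinuousLinearMap)).smulRight (b i), fun c => ?_⟩
  have hcomp : c ∘L (∑ i, (innerSL ℝ (s (b.coord i).toContinuousLinearMap)).smulRight (b i))
      = innerSL ℝ (s c) := by
    ext g
    simp [map_strongDual_eq_sum b s c, mul_comm]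
  rw [hcomp, innerSL_apply_norm]
  exact (stdOrthonormalBasis ℝ d.range).repr.norm_map _

variable [CompleteSpace K] [NormedAddCommGroup G] [InnerProductSpace ℝ G] [CompleteSpace G]

lemma norm_add_isometry_sq (R : G →ₗᵢ[ℝ] K) (t : K) (k : G) :
    ‖t + R k‖ ^ 2 = ‖R.toContinuousLinearMap.adjoint t + k‖ ^ 2
      + ‖t - R (R.toContinuousLinearMap.adjoint t)‖ ^ 2 := by
  set p := R.toContinuousLinearMap.adjoint t
  have hadj : ⟪p, p + k⟫ = ⟪t, R (p + k)⟫ :=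
    ContinuousLinearMap.adjoint_inner_left R.toContinuousLinearMap (p + k) t
  have horth : ⟪R (p + k), t - R p⟫ = 0 := by
    rw [inner_sub_right, R.inner_map_map, real_inner_comm, ← hadj, real_inner_comm p, sub_self]
  have hsplit : t + R k = R (p + k) + (t - R p) := by
    rw [map_add]
    abel
  rw [hsplit, sq, norm_add_sq_eq_norm_sq_add_norm_sq_real horth, R.norm_map, sq, sq]

end Regression

section GaussianRegression

lemma compMeasurePreserving_centeredDual {E E' : Type*} [NormedAddCommGroup E] [NormedSpace ℝ E]
    [CompleteSpace E] [MeasurableSpace E] [BorelSpace E] [NormedAddCommGroup E'] [NormedSpace ℝ E']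
    [CompleteSpace E'] [MeasurableSpace E'] [BorelSpace E'] {μ : Measure E} [IsFiniteMeasure μ]
    {ν : Measure E'} [IsFiniteMeasure ν] {π : E →L[ℝ] E'} (hπ : MeasurePreserving π μ ν)
    (hμ : MemLp id 2 μ) (hν : MemLp id 2 ν) (L : StrongDual ℝ E') :
    Lp.compMeasurePreserving π hπ (centeredDual ν L) = centeredDual μ (L ∘L π) := by
  have hmean : L (∫ y, y ∂ν) = (L ∘L π) (∫ x, x ∂μ) := by
    rw [← integral_dual_of_memLp_two hν, ← integral_dual_of_memLp_two hμ, ← hπ.map_eq,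
      integral_map hπ.aemeasurable (by fun_prop)]
    rfl
  refine Lp.ext ?_
  filter_upwards [Lp.coeFn_compMeasurePreserving (centeredDual ν L) hπ,
    hπ.quasiMeasurePreserving.ae (coeFn_centeredDual hν L), coeFn_centeredDual hμ (L ∘L π)]
    with x hcomp hL hLπ
  rw [hcomp, Function.comp_apply, hL, hLπ, hmean]
  rfl

lemma exists_measurable_dual_comp_eq {Ω F : Type*} [MeasurableSpace Ω]
    [NormedAddCommGroup F] [NormedSpace ℝ F] [FiniteDimensional ℝ F] [MeasurableSpace F]
    [BorelSpace F] {μ : Measure Ω} (T : StrongDual ℝ F →ₗ[ℝ] Lp ℝ 2 μ) (m : F) :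
    ∃ A : Ω → F, Measurable A ∧ ∀ c : StrongDual ℝ F, ∀ᵐ z ∂μ, c (A z) = c m + T c z := by
  let b := Module.finBasis ℝ F
  let coord (i) : StrongDual ℝ F := (b.coord i).toContinuousLinearMap
  have hmeas (i) : Measurable (T (coord i)) := (Lp.stronglyMeasurable _).measurable
  refine ⟨fun z => m + ∑ i, T (coord i) z • b i, by fun_prop, fun c => ?_⟩
  rw [map_strongDual_eq_sum b T c]
  filter_upwards [coeFn_sum_smul (fun i => c (b i)) fun i => T (coord i)] with z hsum
  simp only [map_add, map_sum, map_smul, coord, hsum, smul_eq_mul, mul_comm]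

variable {E F : Type*} [NormedAddCommGroup E] [NormedSpace ℝ E] [MeasurableSpace E]
  [BorelSpace E] [SecondCountableTopology E] [NormedAddCommGroup F] [NormedSpace ℝ F]
  [MeasurableSpace F] [BorelSpace F]

/-- Gaussian regression of the first component of `Q` on the second: in distribution, that component
is `condMean Z + noise G` with `G` standard normal in `ℝ^dim`, independent of the second component
`Z`. Functionals of `condMean` lie in the Gaussian space of `Z` up to a constant, and `predictor`
names the corresponding vectors. -/
structure GaussianRegression (Q : Measure (F × E)) [IsFiniteMeasure Q] where
  predictor : StrongDual ℝ F →ₗ[ℝ] gaussianSpace Q.snd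
  dim : ℕ
  noise : EuclideanSpace ℝ (Fin dim) →L[ℝ] F
  norm_sq_centeredDual (L : StrongDual ℝ (F × E)) :
    ‖centeredDual Q L‖ ^ 2 = ‖(predictor (L ∘L .inl ℝ F E) : Lp ℝ 2 Q.snd)
      + centeredDual Q.snd (L ∘L .inr ℝ F E)‖ ^ 2 + ‖L ∘L .inl ℝ F E ∘L noise‖ ^ 2
  condMean : E → F
  measurable_condMean : Measurable condMean
  ae_condMean (c : StrongDual ℝ F) :
    ∀ᵐ z ∂Q.snd, c (condMean z) = c (∫ p, p ∂Q).1 + (predictor c : Lp ℝ 2 Q.snd) z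

variable {Q : Measure (F × E)}

instance isGaussian_snd [IsGaussian Q] : IsGaussian Q.snd :=
  inferInstanceAs (IsGaussian (Q.map (ContinuousLinearMap.snd ℝ F E)))

variable [FiniteDimensional ℝ F] [CompleteSpace E]

theorem nonempty_gaussianRegression [IsGaussian Q] : Nonempty (GaussianRegression Q) := by
  have hQ : MemLp id 2 Q := IsGaussian.memLp_two_id
  have hsnd : MemLp id 2 Q.snd := IsGaussian.memLp_two_id
  have hpres : MeasurePreserving (ContinuousLinearMap.snd ℝ F E) Q Q.snd := ⟨measurable_snd, rfl⟩
  let T : StrongDual ℝ F →ₗ[ℝ] Lp ℝ 2 Q :=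
    (centeredDual Q).toLinearMap ∘ₗ ((ContinuousLinearMap.compL ℝ (F × E) F ℝ).flip (.fst ℝ F E))
  let R : gaussianSpace Q.snd →ₗᵢ[ℝ] Lp ℝ 2 Q :=
    (Lp.compMeasurePreservingₗᵢ ℝ _ hpres).comp (gaussianSpace Q.snd).subtypeₗᵢ
  have : CompleteSpace (gaussianSpace Q.snd) :=
    (Submodule.isClosed_topologicalClosure _).completeSpace_coe
  let a : StrongDual ℝ F →ₗ[ℝ] gaussianSpace Q.snd :=
    R.toContinuousLinearMap.adjoint.toLinearMap ∘ₗ T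
  obtain ⟨r, σ, hσ⟩ := exists_norm_comp_eq (T - R.toLinearMap ∘ₗ a)
  obtain ⟨A, hA, hcA⟩ :=
    exists_measurable_dual_comp_eq ((gaussianSpace Q.snd).subtype ∘ₗ a) (∫ p, p ∂Q).1
  refine ⟨⟨a, r, σ, fun L => ?_, A, hA, hcA⟩⟩
  have hdecomp : centeredDual Q L = T (L ∘L .inl ℝ F E)
      + R ⟨centeredDual Q.snd (L ∘L .inr ℝ F E), centeredDual_mem_gaussianSpace _⟩ := by
    have hL : L = (L ∘L .inl ℝ F E) ∘L .fst ℝ F E + (L ∘L .inr ℝ F E) ∘L .snd ℝ F E := by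
      ext <;> simp [Prod.mk_zero_zero]
    conv_lhs => rw [hL, map_add, ← compMeasurePreserving_centeredDual hpres hQ hsnd]
    rfl
  rw [hdecomp, norm_add_isometry_sq, ← ContinuousLinearMap.comp_assoc, hσ]
  rfl

lemma map_prod_stdGaussian_add {μ : Measure E} [IsGaussian μ] {κ : Type*} [Fintype κ] {q : Lp ℝ 2 μ}
    (hq : q ∈ gaussianSpace μ) (m : ℝ) (L : StrongDual ℝ (EuclideanSpace ℝ κ)) :
    (μ.prod (stdGaussian (EuclideanSpace ℝ κ))).map (fun p => m + q p.1 + L p.2)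
      = gaussianReal m (‖q‖₊ ^ 2 + ‖L‖₊ ^ 2) := by
  have hmeas : Measurable fun z => m + q z := (Lp.stronglyMeasurable q).measurable.const_add m
  have hL : (stdGaussian (EuclideanSpace ℝ κ)).map L = gaussianReal 0 (‖L‖₊ ^ 2) := by
    rw [IsGaussian.map_eq_gaussianReal, integral_strongDual_stdGaussian, variance_dual_stdGaussian,
      Real.toNNReal_pow (norm_nonneg _), norm_toNNReal]
  have h := gaussianReal_add_gaussianReal_of_indepFun
    (indepFun_prod (μ := μ) (ν := stdGaussian (EuclideanSpace ℝ κ)) hmeas L.measurable)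
    (m₁ := m) (v₁ := ‖q‖₊ ^ 2) (m₂ := 0) (v₂ := ‖L‖₊ ^ 2) ?_ ?_
  · rwa [add_zero] at h
  · refine (Measure.map_map hmeas measurable_fst).symm.trans ?_
    rw [measurePreserving_fst.map_eq, map_const_add_of_mem_gaussianSpace hq]
  · refine (Measure.map_map L.measurable measurable_snd).symm.trans ?_
    rw [measurePreserving_snd.map_eq, hL]

lemma map_dual_eq_gaussianReal {μ : Measure E} [IsGaussian μ] (L : StrongDual ℝ E) :
    μ.map L = gaussianReal (L (∫ x, x ∂μ)) (‖centeredDual μ L‖₊ ^ 2) := by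
  rw [← map_const_add_of_mem_gaussianSpace (centeredDual_mem_gaussianSpace L)]
  refine Measure.map_congr ?_
  filter_upwards [coeFn_centeredDual IsGaussian.memLp_two_id L] with x hx
  rw [hx, add_sub_cancel]

lemma integral_id_snd [IsGaussian Q] : ∫ z, z ∂Q.snd = (∫ p, p ∂Q).2 := by
  rw [Measure.snd, integral_map measurable_snd.aemeasurable (by fun_prop)]
  exact (ContinuousLinearMap.snd ℝ F E).integral_comp_comm IsGaussian.integrable_id

namespace GaussianRegression

lemma ae_dual_apply [IsGaussian Q] (reg : GaussianRegression Q) (L : StrongDual ℝ (F × E)) :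
    ∀ᵐ z ∂Q.snd, ∀ x, L (reg.condMean z + x, z) = L (∫ p, p ∂Q)
      + ((reg.predictor (L ∘L .inl ℝ F E) : Lp ℝ 2 Q.snd)
        + centeredDual Q.snd (L ∘L .inr ℝ F E)) z + L (x, 0) := by
  have hsplit (p : F × E) : L p = (L ∘L .inl ℝ F E) p.1 + (L ∘L .inr ℝ F E) p.2 :=
    (DFunLike.congr_fun (ContinuousLinearMap.coprod_comp_inl_inr L) p).symm
  filter_upwards [reg.ae_condMean (L ∘L .inl ℝ F E),
    coeFn_centeredDual IsGaussian.memLp_two_id (L ∘L .inr ℝ F E),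
    Lp.coeFn_add (reg.predictor (L ∘L .inl ℝ F E) : Lp ℝ 2 Q.snd)
      (centeredDual Q.snd (L ∘L .inr ℝ F E))] with z hmean hz hadd x
  rw [hsplit, hsplit (∫ p, p ∂Q), map_add, hmean, hadd, Pi.add_apply, hz, integral_id_snd]
  simp only [ContinuousLinearMap.comp_apply, ContinuousLinearMap.inl_apply]
  ring

theorem map_prod_stdGaussian [IsGaussian Q] (reg : GaussianRegression Q) :
    (Q.snd.prod (stdGaussian (EuclideanSpace ℝ (Fin reg.dim)))).map
      (fun p => (reg.condMean p.1 + reg.noise p.2, p.1)) = Q := by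
  have hmeas := reg.measurable_condMean
  refine Measure.ext_of_charFunDual (funext fun L => ?_)
  have hnorm : ‖centeredDual Q L‖₊ ^ 2 = ‖(reg.predictor (L ∘L .inl ℝ F E) : Lp ℝ 2 Q.snd)
      + centeredDual Q.snd (L ∘L .inr ℝ F E)‖₊ ^ 2 + ‖L ∘L .inl ℝ F E ∘L reg.noise‖₊ ^ 2 :=
    NNReal.eq (reg.norm_sq_centeredDual L)
  have hmem := add_mem (reg.predictor (L ∘L .inl ℝ F E)).2
    (centeredDual_mem_gaussianSpace (μ := Q.snd) (L ∘L .inr ℝ F E))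
  rw [charFunDual_eq_charFun_map_one, charFunDual_eq_charFun_map_one, map_dual_eq_gaussianReal
    (μ := Q), hnorm, ← map_prod_stdGaussian_add hmem, Measure.map_map (by fun_prop) (by fun_prop)]
  congr 1
  refine Measure.map_congr ?_
  filter_upwards [Measure.quasiMeasurePreserving_fst.ae (reg.ae_dual_apply L)] with p hp
  exact hp _

end GaussianRegression

end GaussianRegression

section InfiniteDimensional

lemma exists_linearIndependent_nat {𝕜 V : Type*} [DivisionRing 𝕜] [AddCommGroup V] [Module 𝕜 V]
    (h : ¬ FiniteDimensional 𝕜 V) : ∃ v : ℕ → V, LinearIndependent 𝕜 v := by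
  have : Infinite (Module.Basis.ofVectorSpaceIndex 𝕜 V) := not_finite_iff_infinite.1 fun _ =>
    h (Module.Finite.of_basis (Module.Basis.ofVectorSpace 𝕜 V))
  exact ⟨_, (Module.Basis.ofVectorSpace 𝕜 V).linearIndependent.comp _
    (Infinite.natEmbedding _).injective⟩

lemma exists_orthonormal_nat {𝕜 H : Type*} [RCLike 𝕜] [NormedAddCommGroup H]
    [InnerProductSpace 𝕜 H] (h : ¬ FiniteDimensional 𝕜 H) : ∃ e : ℕ → H, Orthonormal 𝕜 e :=
  let ⟨_, hv⟩ := exists_linearIndependent_nat h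
  ⟨_, InnerProductSpace.gramSchmidtNormed_orthonormal hv⟩

lemma cofg_of_cofg_sup {R M : Type*} [Ring R] [AddCommGroup M] [Module R M] {S A : Submodule R M}
    (hA : A.FG) (h : (S ⊔ A).CoFG) : S.CoFG := by
  have : Module.Finite R A := Module.Finite.iff_fg.2 hA
  have : Module.Finite R ((M ⧸ S) ⧸ A.map S.mkQ) :=
    Module.Finite.equiv (Submodule.quotientQuotientEquivQuotientSup S A).symm
  exact Module.Finite.of_submodule_quotient (A.map S.mkQ)

lemma exists_antilipschitzWith_of_cofg_range {𝕜 X Y : Type*} [NontriviallyNormedField 𝕜]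
    [CompleteSpace 𝕜] [NormedAddCommGroup X] [NormedSpace 𝕜 X] [CompleteSpace X]
    [NormedAddCommGroup Y] [NormedSpace 𝕜 Y] [CompleteSpace Y] {f : X →L[𝕜] Y}
    (hf : Function.Injective f) (hrange : f.range.CoFG) : ∃ C, AntilipschitzWith C f := by
  obtain ⟨G, hG⟩ := f.range.exists_isCompl
  have : FiniteDimensional 𝕜 G := Module.Finite.iff_fg.2 (hrange.fg_of_isCompl hG)
  exact f.antilipschitz_of_injective_of_isClosed_range hf
    (f.closed_complemented_range_of_isCompl_of_ker_eq_bot G hG G.closed_of_finiteDimensional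
      (LinearMap.ker_eq_bot.2 hf))

lemma finiteDimensional_of_strongDual {E : Type*} [NormedAddCommGroup E] [NormedSpace ℝ E]
    [FiniteDimensional ℝ (StrongDual ℝ E)] : FiniteDimensional ℝ E :=
  Module.Finite.of_injective (NormedSpace.inclusionInDoubleDualLi ℝ (E := E)).toLinearMap
    (NormedSpace.inclusionInDoubleDualLi ℝ).injective

variable {E : Type*} [NormedAddCommGroup E] [NormedSpace ℝ E] [MeasurableSpace E] [BorelSpace E]
  {μ : Measure E}

lemma tendsto_centeredDual_zero [IsFiniteMeasure μ] (hμ : MemLp id 2 μ) {D : ℕ → StrongDual ℝ E}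
    {C : ℝ} (hC : ∀ n, ‖D n‖ ≤ C) (hD : ∀ x, Tendsto (fun n => D n x) atTop (nhds 0)) :
    Tendsto (fun n => centeredDual μ (D n)) atTop (nhds 0) := by
  set m := ∫ x, x ∂μ
  have hsub : MemLp (fun x => x - m) 2 μ := hμ.sub (memLp_const m)
  have hlim : Tendsto (fun n => ∫ x, ‖D n (x - m)‖ ^ 2 ∂μ) atTop (nhds (∫ _, (0 : ℝ) ∂μ)) := by
    refine tendsto_integral_of_dominated_convergence (fun x => (C * ‖x - m‖) ^ 2)
      (fun n => ((D n).continuous.comp_aestronglyMeasurable hsub.1).norm.pow 2) ?_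
      (fun n => .of_forall fun x => ?_) (.of_forall fun x => ?_)
    · exact (hsub.norm.const_mul C).integrable_sq
    · rw [norm_pow, norm_norm]
      gcongr
      exact (D n).le_of_opNorm_le (hC n) _
    · simpa using ((hD (x - m)).norm.pow 2)
  have hnorm (n : ℕ) : ‖centeredDual μ (D n)‖ ^ 2 = ∫ x, ‖D n (x - m)‖ ^ 2 ∂μ := by
    rw [← real_inner_self_eq_norm_sq, L2.inner_def]
    refine integral_congr_ae ?_
    filter_upwards [coeFn_centeredDual hμ (D n)] with x hx
    rw [hx, map_sub, real_inner_self_eq_norm_sq]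
  rw [tendsto_zero_iff_norm_tendsto_zero]
  simp only [← hnorm, integral_zero] at hlim
  simpa using hlim.sqrt

theorem finiteDimensional_of_antilipschitzWith_centeredDual [SecondCountableTopology E]
    [IsFiniteMeasure μ] (hμ : MemLp id 2 μ) {C : ℝ≥0} (hC : AntilipschitzWith C (centeredDual μ)) :
    FiniteDimensional ℝ E := by
  -- Weak-* convergent sequences of functionals converge in `L²(μ)`, hence in norm.
  have hball : IsSeqCompact (Metric.closedBall (0 : StrongDual ℝ E) 1) := fun L hL => by
    obtain ⟨L', hL', φ, hφ, hlim⟩ := WeakDual.isSeqCompact_closedBall ℝ E 0 1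
      (x := fun n => StrongDual.toWeakDual (L n)) hL
    have hdiff : Tendsto (fun n => centeredDual μ (L (φ n) - WeakDual.toStrongDual L')) atTop
        (nhds 0) := by
      refine tendsto_centeredDual_zero hμ (C := 1 + 1) (fun n => ?_) fun x => ?_
      · exact norm_sub_le_of_le (mem_closedBall_zero_iff.1 (hL _)) (mem_closedBall_zero_iff.1 hL')
      · exact tendsto_sub_nhds_zero_iff.2 (((WeakDual.eval_continuous x).tendsto L').comp hlim)
    refine ⟨WeakDual.toStrongDual L', hL', φ, hφ, tendsto_iff_norm_sub_tendsto_zero.2 ?_⟩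
    refine squeeze_zero (fun _ => norm_nonneg _) (fun n => ?_)
      (by simpa using hdiff.norm.const_mul (C : ℝ))
    simpa using hC.le_mul_dist (L (φ n) - WeakDual.toStrongDual L') 0
  have : FiniteDimensional ℝ (StrongDual ℝ E) :=
    FiniteDimensional.of_isCompact_closedBall ℝ one_pos hball.isCompact
  exact finiteDimensional_of_strongDual

/-- The map `centeredDual μ`, valued in the Gaussian space of `μ`. -/
def dualToGaussianSpace (μ : Measure E) [IsFiniteMeasure μ] :
    StrongDual ℝ E →L[ℝ] gaussianSpace μ :=
  (centeredDual μ).codRestrict _ centeredDual_mem_gaussianSpace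

theorem not_cofg_range_dualToGaussianSpace_sup [CompleteSpace E] [SecondCountableTopology E]
    [IsFiniteMeasure μ] (hμ : MemLp id 2 μ) (hE : ¬ FiniteDimensional ℝ E)
    (hinj : HasInjectiveCovariance μ) {A : Submodule ℝ (gaussianSpace μ)} (hA : A.FG) :
    ¬ ((dualToGaussianSpace μ).range ⊔ A).CoFG := fun h => by
  have : CompleteSpace (gaussianSpace μ) :=
    (Submodule.isClosed_topologicalClosure _).completeSpace_coe
  obtain ⟨C, hC⟩ := exists_antilipschitzWith_of_cofg_range (f := dualToGaussianSpace μ)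
    (fun _ _ h => hinj.centeredDual_injective hμ (congrArg Subtype.val h)) (cofg_of_cofg_sup hA h)
  exact hE (finiteDimensional_of_antilipschitzWith_centeredDual hμ (C := C) hC)

lemma exists_orthonormal_centeredDual [CompleteSpace E] [IsFiniteMeasure μ] (hμ : MemLp id 2 μ)
    (hE : ¬ FiniteDimensional ℝ E) (hinj : HasInjectiveCovariance μ) :
    ∃ η : ℕ → StrongDual ℝ E, Orthonormal ℝ fun k => centeredDual μ (η k) := by
  have hrange : ¬ FiniteDimensional ℝ (centeredDual μ).range := fun _ => by
    have := LinearEquiv.finiteDimensional (LinearEquiv.ofInjective (centeredDual μ).toLinearMap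
      (hinj.centeredDual_injective hμ)).symm
    exact hE finiteDimensional_of_strongDual
  obtain ⟨e, he⟩ := exists_orthonormal_nat hrange
  choose η hη using fun k => (e k).2
  refine ⟨η, ?_⟩
  have heq : (fun k => centeredDual μ (η k)) = (centeredDual μ).range.subtypeₗᵢ ∘ e := funext hη
  exact heq ▸ he.comp_linearIsometry _

end InfiniteDimensional

section PseudoNoise

variable {E κ : Type*} [NormedAddCommGroup E] [NormedSpace ℝ E] [MeasurableSpace E] [BorelSpace E]
  {μ : Measure E} {N : ℕ}

lemma ae_tendsto_sampleMatrix_of_orthonormal [CompleteSpace E] [SecondCountableTopology E]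
    [IsGaussian μ] {ι : Type*} [Fintype ι] [DecidableEq ι] {e : ℕ → Lp ℝ 2 μ}
    (he : Orthonormal ℝ e) (hmem : ∀ k, e k ∈ gaussianSpace μ) :
    ∀ᵐ z ∂(Measure.pi fun _ : ι => μ),
      Tendsto (fun N => sampleMatrix (fun k => e k) N z
        * (sampleMatrix (fun k => e k) N z).transpose) atTop (nhds 1) := by
  have hmeas (k : ℕ) : Measurable (e k) := (Lp.stronglyMeasurable _).measurable
  refine ae_tendsto_sampleMatrix_mul_transpose hmeas (iIndepFun_of_orthonormal he hmem)
    (fun k => ⟨(hmeas k).aemeasurable, (hmeas 0).aemeasurable, ?_⟩) (Lp.memLp _)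
    (integral_eq_zero_of_mem_gaussianSpace (hmem 0)) ?_
  · have hnorm : ‖e k‖₊ = ‖e 0‖₊ := NNReal.eq ((he.norm_eq_one k).trans (he.norm_eq_one 0).symm)
    rw [map_eq_gaussianReal_of_mem_gaussianSpace (hmem k),
      map_eq_gaussianReal_of_mem_gaussianSpace (hmem 0), hnorm]
  · have hself := real_inner_self_eq_norm_sq (e 0)
    rwa [L2.inner_def, he.norm_eq_one, one_pow] at hself

variable [Fintype κ] [DecidableEq κ] [IsFiniteMeasure μ] {η : ℕ → StrongDual ℝ E}
  {v : κ → gaussianSpace μ}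

/-- The element of the Gaussian space given by the functional `d` of the pseudo-noise with features
`η k - 𝔼 (η k)` and perturbation `v`. -/
def pseudoNoiseDual (η : ℕ → StrongDual ℝ E) (v : κ → gaussianSpace μ) (N : ℕ)
    (u : EuclideanSpace ℝ (Fin N × κ)) (d : StrongDual ℝ (EuclideanSpace ℝ κ)) : gaussianSpace μ :=
  dualToGaussianSpace μ (∑ k : Fin N, (d (block u k) / √N) • η k)
    + (1 / ((N : ℝ) + 1)) • ∑ j, d (EuclideanSpace.single j 1) • v j

lemma pseudoNoiseDual_zero (u : EuclideanSpace ℝ (Fin N × κ)) : pseudoNoiseDual η v N u 0 = 0 := by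
  simp [pseudoNoiseDual]

lemma pseudoNoise_eq {Ω : Type*} (ξ : ℕ → Ω → ℝ) (v : κ → Ω → ℝ)
    (u : EuclideanSpace ℝ (Fin N × κ)) (z : Ω) :
    pseudoNoise ξ v N u z = ∑ k : Fin N, (ξ k z / √N) • block u k
      + (1 / ((N : ℝ) + 1)) • ∑ j, v j z • EuclideanSpace.single j 1 := by
  ext i
  simp [pseudoNoise, block, Pi.single_apply, add_comm]

lemma ae_dual_pseudoNoise (u : EuclideanSpace ℝ (Fin N × κ))
    (d : StrongDual ℝ (EuclideanSpace ℝ κ)) :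
    ∀ᵐ z ∂μ, d (pseudoNoise (fun k => centeredDual μ (η k)) (fun j => (v j : Lp ℝ 2 μ)) N u z)
      = (pseudoNoiseDual η v N u d : Lp ℝ 2 μ) z := by
  have hcoe : (pseudoNoiseDual η v N u d : Lp ℝ 2 μ)
      = ∑ k : Fin N, (d (block u k) / √N) • centeredDual μ (η k)
        + (1 / ((N : ℝ) + 1)) • ∑ j, d (EuclideanSpace.single j 1) • (v j : Lp ℝ 2 μ) := by
    simp [pseudoNoiseDual, dualToGaussianSpace]
  filter_upwards [Lp.coeFn_add (∑ k : Fin N, (d (block u k) / √N) • centeredDual μ (η k))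
      ((1 / ((N : ℝ) + 1)) • ∑ j, d (EuclideanSpace.single j 1) • (v j : Lp ℝ 2 μ)),
    Lp.coeFn_smul (1 / ((N : ℝ) + 1)) (∑ j, d (EuclideanSpace.single j 1) • (v j : Lp ℝ 2 μ)),
    coeFn_sum_smul (fun k : Fin N => d (block u k) / √N) fun k => centeredDual μ (η k),
    coeFn_sum_smul (fun j => d (EuclideanSpace.single j 1)) fun j => (v j : Lp ℝ 2 μ)]
    with z hadd hsmul hη hv
  rw [pseudoNoise_eq, hcoe, hadd, Pi.add_apply, hsmul, Pi.smul_apply, hη, hv]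
  simp only [map_add, map_smul, map_sum, smul_eq_mul, div_mul_eq_mul_div, mul_comm (d _)]

lemma eq_zero_of_add_pseudoNoiseDual_eq_zero {S : Submodule ℝ (gaussianSpace μ)}
    (hS : (dualToGaussianSpace μ).range ≤ S) (hv : LinearIndependent ℝ (S.mkQ ∘ v))
    {u : EuclideanSpace ℝ (Fin N × κ)} {d : StrongDual ℝ (EuclideanSpace ℝ κ)}
    {p : gaussianSpace μ} (hp : p ∈ S) (h : p + pseudoNoiseDual η v N u d = 0) : d = 0 := by
  have hmem : ∑ j, d (EuclideanSpace.single j 1) • v j ∈ S := by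
    have hN : 1 / ((N : ℝ) + 1) ≠ 0 := by positivity
    rw [pseudoNoiseDual, ← add_assoc] at h
    rw [← S.smul_mem_iff hN, eq_neg_of_add_eq_zero_right h]
    exact S.neg_mem (S.add_mem hp (hS ⟨_, rfl⟩))
  have hsum : ∑ j, d (EuclideanSpace.single j 1) • (S.mkQ ∘ v) j = 0 := by
    simpa only [← Submodule.Quotient.mk_eq_zero, ← S.mkQ_apply, map_sum, map_smul,
      Function.comp_apply] using hmem
  have hzero := Fintype.linearIndependent_iff.1 hv _ hsum
  ext x
  rw [← (EuclideanSpace.basisFun κ ℝ).sum_repr x, map_sum]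
  simp [hzero]

end PseudoNoise

section GraphLaws

lemma exists_linearIndependent_mkQ {𝕜 V : Type*} [DivisionRing 𝕜] [AddCommGroup V] [Module 𝕜 V]
    {S : Submodule 𝕜 V} (hS : ¬ S.CoFG) (r : ℕ) :
    ∃ v : Fin r → V, LinearIndependent 𝕜 (S.mkQ ∘ v) := by
  obtain ⟨w, hw⟩ := exists_linearIndependent_nat hS
  choose v hv using S.mkQ_surjective
  have hcomp : S.mkQ ∘ (fun i : Fin r => v (w i)) = w ∘ Fin.val := funext fun i => hv (w i)
  exact ⟨_, hcomp ▸ hw.comp _ Fin.val_injective⟩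

variable {E F : Type*} [NormedAddCommGroup E] [NormedSpace ℝ E] [MeasurableSpace E]
  [BorelSpace E] [SecondCountableTopology E] [NormedAddCommGroup F]
  [NormedSpace ℝ F] [MeasurableSpace F] [BorelSpace F]

lemma HasInjectiveCovariance.map_of_surjective [CompleteSpace E] {μ : Measure E}
    [IsGaussian μ] (h : HasInjectiveCovariance μ) {T : E →L[ℝ] F} (hT : Function.Surjective T) :
    HasInjectiveCovariance (μ.map T) := by
  have hμ := IsGaussian.memLp_two_id (μ := μ)
  refine hasInjectiveCovariance_map_of_mem_gaussianSpace T.continuous.measurable.aemeasurable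
    fun L => ⟨L (T (∫ x, x ∂μ)), centeredDual μ (L ∘L T), centeredDual_mem_gaussianSpace _, ?_,
      fun hzero => ?_⟩
  · filter_upwards [coeFn_centeredDual hμ (L ∘L T)] with x hx
    rw [hx, ContinuousLinearMap.comp_apply, ContinuousLinearMap.comp_apply, add_sub_cancel]
  · have hLT : L ∘L T = 0 := h.centeredDual_injective hμ (hzero.trans (map_zero _).symm)
    ext y
    obtain ⟨x, rfl⟩ := hT y
    exact DFunLike.congr_fun hLT x

namespace GaussianRegression

variable {Q : Measure (F × E)} [IsGaussian Q] (reg : GaussianRegression Q)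
  {η : ℕ → StrongDual ℝ E} {v : Fin reg.dim → gaussianSpace Q.snd} {N : ℕ}

/-- The response `condMean Z + noise G` with `G` replaced by the pseudo-noise with features
`η k - 𝔼 (η k)` and perturbation `v`. -/
def pseudoResponse (η : ℕ → StrongDual ℝ E) (v : Fin reg.dim → gaussianSpace Q.snd) (N : ℕ)
    (u : EuclideanSpace ℝ (Fin N × Fin reg.dim)) (z : E) : F :=
  reg.condMean z + reg.noise
    (pseudoNoise (fun k => centeredDual Q.snd (η k)) (fun j => (v j : Lp ℝ 2 Q.snd)) N u z)

variable [FiniteDimensional ℝ F]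

lemma measurable_pseudoResponse (u : EuclideanSpace ℝ (Fin N × Fin reg.dim)) :
    Measurable (reg.pseudoResponse η v N u) := by
  have hnoise := measurable_pseudoNoise
    (fun k => (Lp.stronglyMeasurable (centeredDual Q.snd (η k))).measurable)
    (fun j => (Lp.stronglyMeasurable (v j : Lp ℝ 2 Q.snd)).measurable) N
  have := FiniteDimensional.proper_real F
  exact reg.measurable_condMean.add
    (reg.noise.continuous.measurable.comp (hnoise.comp (measurable_id.prodMk measurable_const)))

variable [CompleteSpace E]

lemma ae_dual_pseudoResponse (u : EuclideanSpace ℝ (Fin N × Fin reg.dim))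
    (L : StrongDual ℝ (F × E)) :
    ∀ᵐ z ∂Q.snd, L (reg.pseudoResponse η v N u z, z) = L (∫ p, p ∂Q)
      + ((reg.predictor (L ∘L .inl ℝ F E) + dualToGaussianSpace Q.snd (L ∘L .inr ℝ F E)
        + pseudoNoiseDual η v N u (L ∘L .inl ℝ F E ∘L reg.noise) : gaussianSpace Q.snd) :
          Lp ℝ 2 Q.snd) z := by
  filter_upwards [reg.ae_dual_apply L,
    ae_dual_pseudoNoise (η := η) (v := v) u (L ∘L .inl ℝ F E ∘L reg.noise),
    Lp.coeFn_add ((reg.predictor (L ∘L .inl ℝ F E) : Lp ℝ 2 Q.snd)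
      + centeredDual Q.snd (L ∘L .inr ℝ F E))
      (pseudoNoiseDual η v N u (L ∘L .inl ℝ F E ∘L reg.noise) : Lp ℝ 2 Q.snd)]
    with z hL hnoise hadd
  rw [pseudoResponse, hL, add_assoc]
  exact congrArg _ ((congrArg _ hnoise).trans hadd.symm)

theorem isGaussianMeasure_pseudoResponse (u : EuclideanSpace ℝ (Fin N × Fin reg.dim)) :
    IsGaussianMeasure (Q.snd.map fun z => (reg.pseudoResponse η v N u z, z)) :=
  isGaussianMeasure_map_of_mem_gaussianSpace
    ((reg.measurable_pseudoResponse u).prodMk measurable_id).aemeasurable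
    fun L => ⟨_, _, Subtype.prop _, reg.ae_dual_pseudoResponse u L⟩

theorem hasInjectiveCovariance_pseudoResponse (hinj : HasInjectiveCovariance Q)
    (hv : LinearIndependent ℝ
      (((dualToGaussianSpace Q.snd).range ⊔ reg.predictor.range).mkQ ∘ v))
    (u : EuclideanSpace ℝ (Fin N × Fin reg.dim)) :
    HasInjectiveCovariance (Q.snd.map fun z => (reg.pseudoResponse η v N u z, z)) := by
  refine hasInjectiveCovariance_map_of_mem_gaussianSpace
    ((reg.measurable_pseudoResponse u).prodMk measurable_id).aemeasurable
    fun L => ⟨_, _, Subtype.prop _, reg.ae_dual_pseudoResponse u L, fun h => ?_⟩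
  rw [ZeroMemClass.coe_eq_zero] at h
  have hnoise : L ∘L .inl ℝ F E ∘L reg.noise = 0 :=
    eq_zero_of_add_pseudoNoiseDual_eq_zero le_sup_left hv
      (Submodule.add_mem _ (Submodule.mem_sup_right ⟨_, rfl⟩)
        (Submodule.mem_sup_left ⟨_, rfl⟩)) h
  rw [hnoise, pseudoNoiseDual_zero, add_zero] at h
  have hnorm := reg.norm_sq_centeredDual L
  have hpred : (reg.predictor (L ∘L .inl ℝ F E) : Lp ℝ 2 Q.snd)
      + centeredDual Q.snd (L ∘L .inr ℝ F E) = 0 := congrArg Subtype.val h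
  rw [hpred, hnoise, norm_zero, norm_zero, zero_pow two_ne_zero, add_zero, sq_eq_zero_iff,
    norm_eq_zero] at hnorm
  exact hinj.centeredDual_injective IsGaussian.memLp_two_id (hnorm.trans (map_zero _).symm)

end GaussianRegression

theorem pi_apply_le_of_forall_graph [FiniteDimensional ℝ F] [CompleteSpace E] {Q : Measure (F × E)}
    [IsGaussian Q] (hE : ¬ FiniteDimensional ℝ E) (hinj : HasInjectiveCovariance Q) {ι : Type*}
    [Fintype ι] {B : Set (ι → F × E)} (hB : MeasurableSet B) {α : ℝ≥0∞}
    (hα : ∀ h : E → F, Measurable h → IsGaussianMeasure (Q.snd.map fun z => (h z, z)) →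
      HasInjectiveCovariance (Q.snd.map fun z => (h z, z)) →
      (Measure.pi fun _ : ι => Q.snd.map fun z => (h z, z)) B ≤ α) :
    (Measure.pi fun _ : ι => Q) B ≤ α := by
  classical
  obtain ⟨reg⟩ := nonempty_gaussianRegression (Q := Q)
  have hsnd : MemLp id 2 Q.snd := IsGaussian.memLp_two_id
  have hinj_snd : HasInjectiveCovariance Q.snd :=
    hinj.map_of_surjective (T := .snd ℝ F E) Prod.snd_surjective
  obtain ⟨η, hη⟩ := exists_orthonormal_centeredDual hsnd hE hinj_snd
  obtain ⟨v, hv⟩ := exists_linearIndependent_mkQ (not_cofg_range_dualToGaussianSpace_sup hsnd hE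
    hinj_snd (A := reg.predictor.range) (Module.Finite.iff_fg.1 inferInstance)) reg.dim
  have hmeas : Measurable fun p : E × EuclideanSpace ℝ (Fin reg.dim) =>
      (reg.condMean p.1 + reg.noise p.2, p.1) := by
    have := FiniteDimensional.proper_real F
    have := reg.measurable_condMean
    fun_prop
  rw [← reg.map_prod_stdGaussian]
  exact pi_map_prod_stdGaussian_le (μ := Q.snd)
    (fun k => (Lp.stronglyMeasurable (centeredDual Q.snd (η k))).measurable)
    (fun j => (Lp.stronglyMeasurable (v j : Lp ℝ 2 Q.snd)).measurable)
    (ae_tendsto_sampleMatrix_of_orthonormal hη fun k => centeredDual_mem_gaussianSpace (η k))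
    hmeas hB fun N u => hα _ (reg.measurable_pseudoResponse u)
      (reg.isGaussianMeasure_pseudoResponse u)
      (reg.hasInjectiveCovariance_pseudoResponse hinj hv u)

end GraphLaws

section Transfer

lemma condIndepGiven_of_ae_eq_comp {Ω α β γ : Type*} [MeasurableSpace Ω] [MeasurableSpace α]
    [MeasurableSpace β] [MeasurableSpace γ] {μ : Measure Ω} [IsFiniteMeasure μ] {X : Ω → α}
    {Y : Ω → β} {Z : Ω → γ} (hY : Measurable Y) (hZ : Measurable Z) {h : γ → α}
    (hh : Measurable h) (hX : X =ᵐ[μ] h ∘ Z) : CondIndepGiven μ X Y Z := by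
  rintro f g hf hg ⟨Cf, hCf⟩ ⟨Cg, hCg⟩
  have hm : MeasurableSpace.comap Z inferInstance ≤ ‹MeasurableSpace Ω› := hZ.comap_le
  have hfZ : StronglyMeasurable[MeasurableSpace.comap Z inferInstance] (f ∘ h ∘ Z) :=
    ((hf.comp hh).comp (comap_measurable Z)).stronglyMeasurable
  have hfX : (fun ω => f (X ω)) =ᵐ[μ] f ∘ h ∘ Z := hX.fun_comp f
  have hgY : Integrable (fun ω => g (Y ω)) μ :=
    .of_bound (hg.comp hY).aestronglyMeasurable Cg (.of_forall fun ω => hCg (Y ω))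
  have hfXm : AEStronglyMeasurable[MeasurableSpace.comap Z inferInstance] (fun ω => f (X ω)) μ :=
    ⟨_, hfZ, hfX⟩
  have hfXi : Integrable (fun ω => f (X ω)) μ :=
    .of_bound (hfXm.mono hm) Cf (.of_forall fun ω => hCf (X ω))
  filter_upwards [condExp_mul_of_aestronglyMeasurable_left hfXm
      (hgY.bdd_mul (hfXm.mono hm) (.of_forall fun ω => hCf (X ω))) hgY,
    condExp_of_aestronglyMeasurable' hm hfXm hfXi] with ω hmul hself
  rw [hself]
  exact hmul

lemma condIndepGiven_map_graph {α β γ : Type*} [MeasurableSpace α] [MeasurableEq α]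
    [MeasurableSpace β] [MeasurableSpace γ] {μ : Measure γ} [IsFiniteMeasure μ] {f : γ → α}
    {g : γ → β} (hf : Measurable f) (hg : Measurable g) :
    CondIndepGiven (μ.map fun z => (f z, g z, z)) (fun ω => ω.1) (fun ω => ω.2.1)
      (fun ω => ω.2.2) := by
  refine condIndepGiven_of_ae_eq_comp (by fun_prop) (by fun_prop) hf ?_
  have hset : MeasurableSet {ω : α × β × γ | ω.1 = f ω.2.2} :=
    measurableSet_eq_fun (by fun_prop) (by fun_prop)
  exact (ae_map_iff (by fun_prop) hset).2 (.of_forall fun _ => rfl)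

lemma IsGaussianMeasure.isGaussian {E : Type*} [NormedAddCommGroup E] [NormedSpace ℝ E]
    [MeasurableSpace E] [BorelSpace E] {μ : Measure E} (h : IsGaussianMeasure μ) : IsGaussian μ :=
  isGaussian_of_map_eq_gaussianReal h

lemma IsGaussianMeasure.map {E F : Type*} [NormedAddCommGroup E] [NormedSpace ℝ E]
    [MeasurableSpace E] [OpensMeasurableSpace E] [NormedAddCommGroup F] [NormedSpace ℝ F]
    [MeasurableSpace F] [BorelSpace F] {μ : Measure E} (h : IsGaussianMeasure μ) (T : E →L[ℝ] F) :
    IsGaussianMeasure (μ.map T) := fun L => by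
  obtain ⟨m, v, hLT⟩ := h (L ∘L T)
  exact ⟨m, v, by rwa [Measure.map_map (by fun_prop) (by fun_prop)]⟩

variable {V W E : Type*} [NormedAddCommGroup V] [NormedSpace ℝ V] [FiniteDimensional ℝ V]
  [MeasurableSpace V] [BorelSpace V] [NormedAddCommGroup W] [NormedSpace ℝ W]
  [FiniteDimensional ℝ W] [MeasurableSpace W] [BorelSpace W]
  [NormedAddCommGroup E] [NormedSpace ℝ E] [CompleteSpace E] [SecondCountableTopology E]
  [MeasurableSpace E] [BorelSpace E]

theorem gaussian_ci_testing_hard_finite_XY_general (hinf : ¬ FiniteDimensional ℝ E)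
    {Q : Measure (V × W × E)} (hQgauss : IsGaussianMeasure Q) (hQinj : HasInjectiveCovariance Q)
    {ι : Type*} [Fintype ι] {B : Set (ι → V × W × E)} (hB : MeasurableSet B) {α : ℝ≥0∞}
    (hsize : ∀ P : Measure (V × W × E), IsProbabilityMeasure P → IsGaussianMeasure P →
      HasInjectiveCovariance P →
      CondIndepGiven P (fun ω => ω.1) (fun ω => ω.2.1) (fun ω => ω.2.2) →
      P.map (fun ω => ω.2.2) = Q.map (fun ω => ω.2.2) → (Measure.pi fun _ : ι => P) B ≤ α) :
    (Measure.pi fun _ : ι => Q) B ≤ α := by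
  have := hQgauss.isGaussian
  have := FiniteDimensional.proper_real V
  have := FiniteDimensional.proper_real W
  let assoc := ContinuousLinearEquiv.prodAssoc ℝ V W E
  set Q' := Q.map assoc.symm with hQ'
  have : IsGaussian Q' := (hQgauss.map assoc.symm.toContinuousLinearMap).isGaussian
  have hinj : HasInjectiveCovariance Q' :=
    hQinj.map_of_surjective (T := assoc.symm.toContinuousLinearMap) assoc.symm.surjective
  have hassoc : Measurable fun (x : ι → (V × W) × E) i => assoc (x i) := by fun_prop
  have hQ : Q'.map assoc = Q := by
    rw [hQ', Measure.map_map (by fun_prop) (by fun_prop), assoc.self_comp_symm, Measure.map_id]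
  rw [← hQ, pi_map_apply (by fun_prop) hB]
  refine pi_apply_le_of_forall_graph hinf hinj (hassoc hB) fun h hh hgauss hcov => ?_
  have := hgauss.isGaussian
  have hgraph : Measurable fun z => (h z, z) := hh.prodMk measurable_id
  have hmap : (Q'.snd.map fun z => (h z, z)).map assoc
      = Q'.snd.map fun z => ((h z).1, (h z).2, z) :=
    Measure.map_map assoc.continuous.measurable hgraph
  rw [← pi_map_apply (G := assoc) (by fun_prop) hB]
  refine hsize _ (Measure.isProbabilityMeasure_map (by fun_prop))
    (hgauss.map assoc.toContinuousLinearMap)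
    (hcov.map_of_surjective (T := assoc.toContinuousLinearMap) assoc.surjective) ?_ ?_
  · rw [hmap]
    exact condIndepGiven_map_graph hh.fst hh.snd
  · rw [hmap, Measure.map_map (by fun_prop) (by fun_prop), Measure.snd, hQ',
      Measure.map_map (by fun_prop) (by fun_prop), Measure.map_map (by fun_prop) (by fun_prop)]
    rfl

end Transfer

/-- Hardness of conditional independence testing with multivariate `X, Y` and
infinite-dimensional Hilbertian `Z`: any test of size at most `α` over the null `𝒫₀^Q` has
power at most `α` against the alternative `Q`. -/
theorem gaussian_ci_testing_hard_finite_XY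
    {HZ : Type*}
    [NormedAddCommGroup HZ] [InnerProductSpace ℝ HZ] [CompleteSpace HZ]
    [TopologicalSpace.SeparableSpace HZ] [MeasurableSpace HZ] [BorelSpace HZ]
    (hinf : ¬ FiniteDimensional ℝ HZ)
    (dX dY : ℕ)
    (Q : Measure ((Fin dX → ℝ) × (Fin dY → ℝ) × HZ))
    (hQprob : IsProbabilityMeasure Q)
    (hQgauss : IsGaussianMeasure Q)
    (hQinj : HasInjectiveCovariance Q)
    (hQalt : ¬ CondIndepGiven Q (fun ω => ω.1) (fun ω => ω.2.1) (fun ω => ω.2.2))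
    (n : ℕ) (α : ℝ≥0∞) (hα : α ≤ 1)
    (ψ : (Fin n → (Fin dX → ℝ) × (Fin dY → ℝ) × HZ) → Bool)
    (hψ : Measurable ψ)
    (hsize : ∀ P : Measure ((Fin dX → ℝ) × (Fin dY → ℝ) × HZ),
      IsProbabilityMeasure P → IsGaussianMeasure P → HasInjectiveCovariance P →
      CondIndepGiven P (fun ω => ω.1) (fun ω => ω.2.1) (fun ω => ω.2.2) →
      P.map (fun ω => ω.2.2) = Q.map (fun ω => ω.2.2) →
      (Measure.pi fun _ : Fin n => P) {x | ψ x = true} ≤ α) :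
    (Measure.pi fun _ : Fin n => Q) {x | ψ x = true} ≤ α := by
  have := UniformSpace.secondCountable_of_separable HZ
  exact gaussian_ci_testing_hard_finite_XY_general hinf hQgauss hQinj
    (hψ (measurableSet_singleton true)) hsize
end
end

section
/- Let (X_{n,θ})_{n∈ℕ, θ∈Θ} and (X_θ)_{θ∈Θ} be random variables on (Ω, F) with values in a separable Banach space B. Assume that (X_{n,θ}) converges uniformly in probability over Θ to (X_θ) and that (X_θ)_{θ∈Θ} is uniformly tight. Then for any continuous function ψ : B → B̃, where B̃ is another separable Banach space, the family (ψ(X_{n,θ})) converges uniformly in probability over Θ to (ψ(X_θ)). -/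
open MeasureTheory ProbabilityTheory Filter
open scoped ENNReal NNReal RealInnerProductSpace

noncomputable section

/-- `(X_{n,θ})` converges uniformly in probability over `Θ` to `(Xlim_θ)`. -/
def TendstoUnifInProb {Ω Θ B : Type*} [MeasurableSpace Ω] [NormedAddCommGroup B]
    (P : Θ → Measure Ω) (X : ℕ → Θ → Ω → B) (Xlim : Θ → Ω → B) : Prop :=
  ∀ ε : ℝ, 0 < ε →
    Filter.Tendsto (fun n => ⨆ θ, P θ {ω | ε ≤ ‖X n θ ω - Xlim θ ω‖}) Filter.atTop (nhds 0)

/-- The family `(X_θ)` is uniformly tight over `Θ`. -/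
def UniformlyTight {Ω Θ B : Type*} [MeasurableSpace Ω] [TopologicalSpace B]
    (P : Θ → Measure Ω) (X : Θ → Ω → B) : Prop :=
  ∀ ε : ℝ, 0 < ε → ∃ K : Set B, IsCompact K ∧ (⨆ θ, P θ {ω | X θ ω ∉ K}) < ENNReal.ofReal ε

/-!
By Heine–Cantor, a continuous `ψ` is uniformly continuous *at* a compact set `K`: if `x ∈ K` and `y`
is close enough to `x`, inside `K` or not, then `ψ y` is close to `ψ x`. So `ψ (X n θ)` can be far
from `ψ (Xlim θ)` only if `X n θ` is far from `Xlim θ` or `Xlim θ ∉ K`. Tightness makes the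
second event improbable uniformly in `θ`, and convergence does the same for the first one.
-/

section General

open scoped Topology Uniformity

/-- Convergence in measure along `l`, uniformly over the parameter `θ`, for functions with values in
a uniform space. For norms and sequences this is `TendstoUnifInProb`; entourages take the place of
the inequality `‖X i θ ω - Xlim θ ω‖ < ε`, and the limit is the first entry of the pair,
as in `IsCompact.uniformContinuousAt_of_continuousAt`. -/
def TendstoUnifInMeasure {ι Ω Θ E : Type*} [MeasurableSpace Ω] [UniformSpace E]
    (P : Θ → Measure Ω) (X : ι → Θ → Ω → E) (l : Filter ι) (Xlim : Θ → Ω → E) : Prop :=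
  ∀ V ∈ 𝓤 E, Tendsto (fun i => ⨆ θ, P θ {ω | (Xlim θ ω, X i θ ω) ∉ V}) l (𝓝 0)

variable {ι Ω Θ : Type*} [MeasurableSpace Ω] {P : Θ → Measure Ω}

theorem iSup_measure_union_le (s t : Θ → Set Ω) :
    ⨆ θ, P θ (s θ ∪ t θ) ≤ (⨆ θ, P θ (s θ)) + ⨆ θ, P θ (t θ) :=
  iSup_le fun θ => (measure_union_le (s θ) (t θ)).trans <|
    add_le_add (le_iSup (fun θ => P θ (s θ)) θ) (le_iSup (fun θ => P θ (t θ)) θ)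

theorem UniformlyTight.exists_isCompact_iSup_measure_le {E : Type*} [TopologicalSpace E]
    {X : Θ → Ω → E} (hX : UniformlyTight P X) {ε : ℝ≥0∞} (hε : 0 < ε) :
    ∃ K : Set E, IsCompact K ∧ ⨆ θ, P θ {ω | X θ ω ∉ K} ≤ ε := by
  obtain ⟨r, hr, hrε⟩ := ENNReal.lt_iff_exists_nnreal_btwn.1 hε
  obtain ⟨K, hK, hPK⟩ := hX r (by exact_mod_cast hr)
  rw [ENNReal.ofReal_coe_nnreal] at hPK
  exact ⟨K, hK, (hPK.trans hrε).le⟩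

theorem tendstoUnifInMeasure_iff_of_hasBasis {κ E : Type*} [UniformSpace E] {p : κ → Prop}
    {V : κ → Set (E × E)} (hV : (𝓤 E).HasBasis p V) {X : ι → Θ → Ω → E} {l : Filter ι}
    {Xlim : Θ → Ω → E} :
    TendstoUnifInMeasure P X l Xlim ↔
      ∀ k, p k → Tendsto (fun i => ⨆ θ, P θ {ω | (Xlim θ ω, X i θ ω) ∉ V k}) l (𝓝 0) :=
  hV.forall_iff fun _ _ hst hs =>
    tendsto_of_tendsto_of_tendsto_of_le_of_le tendsto_const_nhds hs (fun _ => zero_le)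
      fun _ => iSup_mono fun _ => measure_mono fun _ hω hω' => hω (hst hω')

theorem tendstoUnifInMeasure_atTop_iff_tendstoUnifInProb {E : Type*} [NormedAddCommGroup E]
    {X : ℕ → Θ → Ω → E} {Xlim : Θ → Ω → E} :
    TendstoUnifInMeasure P X atTop Xlim ↔ TendstoUnifInProb P X Xlim := by
  simp only [tendstoUnifInMeasure_iff_of_hasBasis Metric.uniformity_basis_dist, TendstoUnifInProb,
    Set.mem_ofPred_eq, not_lt, dist_eq_norm']

theorem tendstoUnifInProb_comp_continuous_general {E F : Type*} [UniformSpace E] [UniformSpace F]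
    {X : ι → Θ → Ω → E} {l : Filter ι} {Xlim : Θ → Ω → E}
    (hconv : TendstoUnifInMeasure P X l Xlim) (htight : UniformlyTight P Xlim)
    {ψ : E → F} (hψ : Continuous ψ) :
    TendstoUnifInMeasure P (fun i θ ω => ψ (X i θ ω)) l (fun θ ω => ψ (Xlim θ ω)) := by
  intro W hW
  refine ENNReal.tendsto_nhds_zero.2 fun ε hε => ?_
  have hε2 : 0 < ε / 2 := ENNReal.half_pos hε.ne'
  obtain ⟨K, hK, hPK⟩ := htight.exists_isCompact_iSup_measure_le hε2
  let V : Set (E × E) := {x | x.1 ∈ K → (ψ x.1, ψ x.2) ∈ W}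
  have hV : V ∈ 𝓤 E := hK.uniformContinuousAt_of_continuousAt ψ (fun _ _ => hψ.continuousAt) hW
  filter_upwards [ENNReal.tendsto_nhds_zero.1 (hconv V hV) (ε / 2) hε2] with i hPV
  have hsub (θ : Θ) : {ω | (ψ (Xlim θ ω), ψ (X i θ ω)) ∉ W} ⊆
      {ω | (Xlim θ ω, X i θ ω) ∉ V} ∪ {ω | Xlim θ ω ∉ K} := fun ω hω =>
    or_iff_not_imp_right.2 fun hωK hωV => hω (hωV (not_not.1 hωK))
  calc ⨆ θ, P θ {ω | (ψ (Xlim θ ω), ψ (X i θ ω)) ∉ W}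
      ≤ ⨆ θ, P θ ({ω | (Xlim θ ω, X i θ ω) ∉ V} ∪ {ω | Xlim θ ω ∉ K}) :=
        iSup_mono fun θ => measure_mono (hsub θ)
    _ ≤ (⨆ θ, P θ {ω | (Xlim θ ω, X i θ ω) ∉ V}) + ⨆ θ, P θ {ω | Xlim θ ω ∉ K} :=
        iSup_measure_union_le _ _
    _ ≤ ε / 2 + ε / 2 := add_le_add hPV hPK
    _ = ε := ENNReal.add_halves ε

end General

/-- Uniform convergence in probability is preserved by continuous mappings when the family of
limit variables is uniformly tight. -/
theorem tendstoUnifInProb_comp_continuous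
    {Ω Θ B B' : Type*} [MeasurableSpace Ω]
    [NormedAddCommGroup B] [NormedSpace ℝ B] [CompleteSpace B]
    [TopologicalSpace.SeparableSpace B] [MeasurableSpace B] [BorelSpace B]
    [NormedAddCommGroup B'] [NormedSpace ℝ B'] [CompleteSpace B']
    [TopologicalSpace.SeparableSpace B']
    (P : Θ → Measure Ω) (hP : ∀ θ, IsProbabilityMeasure (P θ))
    (X : ℕ → Θ → Ω → B) (Xlim : Θ → Ω → B)
    (hXmeas : ∀ n θ, Measurable (X n θ)) (hXlimmeas : ∀ θ, Measurable (Xlim θ))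
    (hconv : TendstoUnifInProb P X Xlim)
    (htight : UniformlyTight P Xlim)
    (ψ : B → B') (hψ : Continuous ψ) :
    TendstoUnifInProb P (fun n θ ω => ψ (X n θ ω)) (fun θ ω => ψ (Xlim θ ω)) := by
  rw [← tendstoUnifInMeasure_atTop_iff_tendstoUnifInProb] at hconv ⊢
  exact tendstoUnifInProb_comp_continuous_general hconv htight hψ
end
end

section
/- Let (X_θ)_{θ∈Θ} be random variables on (Ω, F) with values in a separable Banach space B, and assume (X_θ)_{θ∈Θ} is uniformly tight and uniformly absolutely continuous with respect to a σ-finite Borel measure μ on B. Let ν be another σ-finite Borel measure on B dominating μ such that there exists a continuous Radon–Nikodym derivative g = dμ/dν. Then (X_θ)_{θ∈Θ} is uniformly absolutely continuous with respect to ν. -/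
open MeasureTheory ProbabilityTheory Filter
open scoped ENNReal NNReal RealInnerProductSpace

noncomputable section

/-- The family `(X_θ)` is uniformly absolutely continuous with respect to `μ`. -/
def UnifAbsCont {Ω Θ B : Type*} [MeasurableSpace Ω] [MeasurableSpace B]
    (P : Θ → Measure Ω) (X : Θ → Ω → B) (μ : Measure B) : Prop :=
  ∀ ε : ℝ, 0 < ε → ∃ δ : ℝ, 0 < δ ∧ ∀ s : Set B, MeasurableSet s →
    μ s < ENNReal.ofReal δ → (⨆ θ, P θ (X θ ⁻¹' s)) < ENNReal.ofReal ε

/-!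
By tightness, all but `ε` of the mass of every `X_θ` lies in one compact set, where the continuous
density `g` is bounded by some `C`, hence in the measurable set `A = {g ≤ C}`. On `A` we have
`μ ≤ C • ν`, so a `ν`-small set meets `A` in a `μ`-small set, which each `X_θ` hits with small
probability.
-/

theorem restrict_withDensity_le_smul {α : Type*} [MeasurableSpace α] (ν : Measure α)
    {f : α → ℝ≥0∞} {c : ℝ≥0∞} {A : Set α} (hA : MeasurableSet A) (hf : ∀ x ∈ A, f x ≤ c) :
    (ν.withDensity f).restrict A ≤ c • ν :=
  calc (ν.withDensity f).restrict A
      = (ν.restrict A).withDensity f := restrict_withDensity hA f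
    _ ≤ (ν.restrict A).withDensity fun _ => c :=
        withDensity_mono (ae_restrict_of_forall_mem hA hf)
    _ = c • ν.restrict A := withDensity_const c
    _ ≤ c • ν := by gcongr; exact Measure.restrict_le_self

section UniformFamilies

variable {Ω Θ B : Type*} [MeasurableSpace Ω] {P : Θ → Measure Ω} {X : Θ → Ω → B}

theorem iSup_measure_preimage_le_inter_add_compl (s A : Set B) :
    (⨆ θ, P θ (X θ ⁻¹' s)) ≤ (⨆ θ, P θ (X θ ⁻¹' (s ∩ A))) + ⨆ θ, P θ (X θ ⁻¹' Aᶜ) :=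
  iSup_le fun θ =>
    calc P θ (X θ ⁻¹' s)
        ≤ P θ (X θ ⁻¹' s ∩ X θ ⁻¹' A) + P θ (X θ ⁻¹' s \ X θ ⁻¹' A) :=
          measure_le_inter_add_sdiff _ _ _
      _ ≤ P θ (X θ ⁻¹' (s ∩ A)) + P θ (X θ ⁻¹' Aᶜ) := by
          gcongr
          · exact Set.preimage_inter.ge
          · exact fun _ hω => hω.2
      _ ≤ _ := add_le_add (le_iSup (fun θ => P θ (X θ ⁻¹' (s ∩ A))) θ)
          (le_iSup (fun θ => P θ (X θ ⁻¹' Aᶜ)) θ)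

theorem UniformlyTight.exists_iSup_measure_not_le_lt [TopologicalSpace B]
    {α : Type*} [LinearOrder α] [TopologicalSpace α] [ClosedIciTopology α] [Nonempty α]
    (htight : UniformlyTight P X) {g : B → α} (hg : Continuous g) {ε : ℝ} (hε : 0 < ε) :
    ∃ C, (⨆ θ, P θ (X θ ⁻¹' {x | g x ≤ C}ᶜ)) < ENNReal.ofReal ε := by
  obtain ⟨K, hK, hKε⟩ := htight ε hε
  obtain ⟨C, hC⟩ := hK.bddAbove_image hg.continuousOn
  have hKC : K ⊆ {x | g x ≤ C} := fun x hx => hC (Set.mem_image_of_mem g hx)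
  have hCK : {x | g x ≤ C}ᶜ ⊆ Kᶜ := Set.compl_subset_compl.mpr hKC
  exact ⟨C, (iSup_mono fun _ => measure_mono (Set.preimage_mono hCK)).trans_lt hKε⟩

theorem UnifAbsCont.of_restrict_le_smul [MeasurableSpace B] {μ ν : Measure B}
    (hac : UnifAbsCont P X μ)
    (hloc : ∀ ε : ℝ, 0 < ε → ∃ A : Set B, MeasurableSet A ∧
      (⨆ θ, P θ (X θ ⁻¹' Aᶜ)) < ENNReal.ofReal ε ∧ ∃ C : ℝ≥0, μ.restrict A ≤ (C : ℝ≥0∞) • ν) :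
    UnifAbsCont P X ν := by
  intro ε hε
  obtain ⟨A, hA, hAε, C, hC⟩ := hloc (ε / 2) (half_pos hε)
  obtain ⟨δ, hδ, hμδ⟩ := hac (ε / 2) (half_pos hε)
  obtain ⟨η, hη, hηδ⟩ := exists_pos_mul_lt hδ (C : ℝ)
  refine ⟨η, hη, fun s hs hνs => ?_⟩
  have hμs : μ (s ∩ A) < ENNReal.ofReal δ :=
    calc μ (s ∩ A)
        = μ.restrict A s := (Measure.restrict_apply hs).symm
      _ ≤ C * ν s := hC s
      _ ≤ C * ENNReal.ofReal η := by gcongr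
      _ = ENNReal.ofReal (C * η) := by
          rw [ENNReal.ofReal_mul C.coe_nonneg, ENNReal.ofReal_coe_nnreal]
      _ < ENNReal.ofReal δ := (ENNReal.ofReal_lt_ofReal_iff hδ).mpr hηδ
  calc ⨆ θ, P θ (X θ ⁻¹' s)
      ≤ (⨆ θ, P θ (X θ ⁻¹' (s ∩ A))) + ⨆ θ, P θ (X θ ⁻¹' Aᶜ) :=
        iSup_measure_preimage_le_inter_add_compl s A
    _ < ENNReal.ofReal (ε / 2) + ENNReal.ofReal (ε / 2) :=
        ENNReal.add_lt_add (hμδ _ (hs.inter hA) hμs) hAε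
    _ = ENNReal.ofReal ε := by
        rw [← ENNReal.ofReal_add (half_pos hε).le (half_pos hε).le, add_halves]

theorem unifAbsCont_of_withDensity_general [TopologicalSpace B] [MeasurableSpace B]
    [OpensMeasurableSpace B] (htight : UniformlyTight P X) {ν : Measure B} {g : B → ℝ≥0}
    (hg : Continuous g) (hac : UnifAbsCont P X (ν.withDensity fun x => (g x : ℝ≥0∞))) :
    UnifAbsCont P X ν := by
  refine hac.of_restrict_le_smul fun ε hε => ?_
  obtain ⟨C, hCε⟩ := htight.exists_iSup_measure_not_le_lt hg hε
  have hA : MeasurableSet {x | g x ≤ C} := (isClosed_le hg continuous_const).measurableSet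
  exact ⟨{x | g x ≤ C}, hA, hCε, C,
    restrict_withDensity_le_smul ν hA fun _ hx => ENNReal.coe_le_coe.mpr hx⟩

end UniformFamilies

/-- Uniform absolute continuity is preserved under changing the dominating measure, provided
the Radon–Nikodym derivative is continuous and the family is uniformly tight. -/
theorem unifAbsCont_of_withDensity
    {Ω Θ B : Type*} [MeasurableSpace Ω]
    [NormedAddCommGroup B] [NormedSpace ℝ B] [CompleteSpace B]
    [TopologicalSpace.SeparableSpace B] [MeasurableSpace B] [BorelSpace B]
    (P : Θ → Measure Ω) (hP : ∀ θ, IsProbabilityMeasure (P θ))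
    (X : Θ → Ω → B) (hXmeas : ∀ θ, Measurable (X θ))
    (htight : UniformlyTight P X)
    (μ ν : Measure B) (hμ : SigmaFinite μ) (hν : SigmaFinite ν)
    (g : B → ℝ) (hg : Continuous g) (hg0 : ∀ x, 0 ≤ g x)
    (hμν : μ = ν.withDensity (fun x => ENNReal.ofReal (g x)))
    (hac : UnifAbsCont P X μ) :
    UnifAbsCont P X ν :=
  unifAbsCont_of_withDensity_general htight (continuous_real_toNNReal.comp hg) (hμν ▸ hac)
end
end
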